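/- For every integer n ≥ 1, the averaged prime satisfies p̄_n > (n/2)·(ln n − 1/2) + 1/(4n). -/

import Mathlib

open Finset Real

/-- `nthPrime n` is the n-th prime number with 1-based indexing:
`nthPrime 1 = 2`, `nthPrime 2 = 3`, `nthPrime 3 = 5`, ... -/
noncomputable def nthPrime (n : ℕ) : ℕ := Nat.nth Nat.Prime (n - 1)

/-- The arithmetic average of the first `n` primes. -/
noncomputable def avgPrime (n : ℕ) : ℝ := (1 / (n : ℝ)) * ∑ i ∈ Finset.Icc 1 n, (nthPrime i : ℝ)

/-- The gap in the averaged primes. -/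
noncomputable def avgGap (n : ℕ) : ℝ := avgPrime (n + 1) - avgPrime n

/-- The averaged-prime counting function `π̄(x) = #{i ≥ 1 : p̄_i ≤ x}`. -/
noncomputable def avgPrimeCount (x : ℝ) : ℕ := Nat.card {i : ℕ | 1 ≤ i ∧ avgPrime i ≤ x}

/-- The ordinary prime counting function for a real argument. -/
noncomputable def primeCount (x : ℝ) : ℕ := Nat.card {q : ℕ | q.Prime ∧ (q : ℝ) ≤ x}

/-!
For every real `y ≥ 0`, the sum of the first `n` primes is at least `n y - ∫ π` with the integral
over `[0, y]`, so the theorem follows from upper bounds for this integral. Partial summation, twice,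
reduces them to upper bounds for `ψ₁(x) = ∑ m ≤ x, Λ m (x - m)`, and the explicit formula reduces
these to the zeros `ρ = β + iγ` of `ξ`, since `∑ 1 / |ρ (ρ + 1)|` converges.

Two facts on the zeros suffice, and neither needs a zero to be located. The Hadamard product at
`s = 1`, where `ξ'/ξ` is explicit, shows that `∑ 1 / (1 + γ²)` is below `0.047`, so that every
`|γ|` exceeds `4`; and the inequality `3 + 4 cos θ + cos 2θ ≥ 0` gives a zero-free region. The
explicit formula itself is obtained by comparing Laplace transforms, without contour integration.

For `n ≥ 5988` the choice `y = exp L` with `exp L = n (L - 1)` is nearly optimal. The smaller `n`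
are covered by twelve intervals, on each of which `y` is fixed, `∫ π` is evaluated by a sieve, and
`log n` is replaced by a tangent.
-/

/-! ### Entire functions of order less than two -/

section EntireFunctions

open Filter Topology Metric

variable {f : ℂ → ℂ}

lemma analyticOrderAt_ne_top_of_apply_ne_zero (hf : Differentiable ℂ f) {w : ℂ} (hw : f w ≠ 0)
    (z : ℂ) : analyticOrderAt f z ≠ ⊤ := by
  rw [Ne, AnalyticOnNhd.analyticOrderAt_eq_top_iff_eq_zero z fun z ↦ hf.analyticAt z]
  rintro rfl
  exact hw rfl

lemma differentiable_dslope (hf : Differentiable ℂ f) (ρ : ℂ) : Differentiable ℂ (dslope f ρ) :=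
  differentiableOn_univ.1 ((Complex.differentiableOn_dslope univ_mem).2 hf.differentiableOn)

lemma eq_sub_mul_dslope_of_apply_eq_zero {ρ : ℂ} (hρ : f ρ = 0) (z : ℂ) :
    f z = (z - ρ) * dslope f ρ z := by
  rw [← smul_eq_mul, sub_smul_dslope, hρ, sub_zero]

lemma exists_eq_sub_pow_mul (hf : Differentiable ℂ f) {ρ : ℂ} {m : ℕ}
    (hm : analyticOrderAt f ρ = m) :
    ∃ g : ℂ → ℂ, Differentiable ℂ g ∧ g ρ ≠ 0 ∧ ∀ z, f z = (z - ρ) ^ m * g z := by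
  induction m generalizing f with
  | zero =>
    exact ⟨f, hf, ((hf.analyticAt ρ).analyticOrderAt_eq_zero).1 (by simpa using hm), by simp⟩
  | succ m ih =>
    have hρ : f ρ = 0 := apply_eq_zero_of_analyticOrderAt_ne_zero (by simp [hm])
    have hslope : analyticOrderAt (dslope f ρ) ρ = m := by
      have hmul : f = (· - ρ) * dslope f ρ := funext (eq_sub_mul_dslope_of_apply_eq_zero hρ)
      rw [hmul, analyticOrderAt_mul (by fun_prop) ((differentiable_dslope hf ρ).analyticAt ρ),
        analyticOrderAt_id_sub_const_self, add_comm, Nat.cast_add, Nat.cast_one] at hm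
      exact WithTop.add_right_cancel ENat.one_ne_top hm
    obtain ⟨g, hg, hgρ, hfg⟩ := ih (differentiable_dslope hf ρ) hslope
    refine ⟨g, hg, hgρ, fun z ↦ ?_⟩
    rw [eq_sub_mul_dslope_of_apply_eq_zero hρ, hfg, pow_succ']
    ring

lemma one_sub_div_ne_zero {z ρ : ℂ} (hρ : ρ ≠ 0) (hz : z ≠ ρ) : 1 - z / ρ ≠ 0 := by
  rw [sub_ne_zero, ne_comm, Ne, div_eq_one_iff_eq hρ]
  exact hz

lemma exists_eq_one_sub_div_pow_mul (hf : Differentiable ℂ f) {w : ℂ} (hw : f w ≠ 0) {ρ : ℂ}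
    (hρ : ρ ≠ 0) :
    ∃ g : ℂ → ℂ, Differentiable ℂ g ∧ g ρ ≠ 0 ∧
      ∀ z, f z = (1 - z / ρ) ^ analyticOrderNatAt f ρ * g z := by
  obtain ⟨g, hg, hgρ, hfg⟩ := exists_eq_sub_pow_mul hf
    (Nat.cast_analyticOrderNatAt (analyticOrderAt_ne_top_of_apply_ne_zero hf hw ρ)).symm
  refine ⟨fun z ↦ (-ρ) ^ analyticOrderNatAt f ρ * g z, by fun_prop, by simp [hρ, hgρ], fun z ↦ ?_⟩
  have hfactor : z - ρ = (1 - z / ρ) * -ρ := by field_simp; ring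
  rw [hfg, hfactor, mul_pow, mul_assoc]

lemma analyticOrderNatAt_mul_of_apply_ne_zero {g h : ℂ → ℂ} {z : ℂ} (hg : AnalyticAt ℂ g z)
    (hh : AnalyticAt ℂ h z) (hz : g z ≠ 0) :
    analyticOrderNatAt (g * h) z = analyticOrderNatAt h z := by
  simp only [analyticOrderNatAt, analyticOrderAt_mul hg hh, hg.analyticOrderAt_eq_zero.2 hz,
    zero_add]

lemma exists_eq_prod_one_sub_div_pow_mul (hf : Differentiable ℂ f) {w : ℂ} (hw : f w ≠ 0)
    (s : Finset ℂ) (hs : ∀ ρ ∈ s, ρ ≠ 0) :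
    ∃ g : ℂ → ℂ, Differentiable ℂ g ∧ (∀ ρ ∈ s, g ρ ≠ 0) ∧
      ∀ z, f z = (∏ ρ ∈ s, (1 - z / ρ) ^ analyticOrderNatAt f ρ) * g z := by
  classical
  induction s using Finset.induction_on with
  | empty => exact ⟨f, hf, by simp, by simp⟩
  | insert a s ha ih =>
    obtain ⟨ha0, hs⟩ := Finset.forall_mem_insert .. |>.1 hs
    obtain ⟨g, hg, hgs, hfg⟩ := ih hs
    set P : ℂ → ℂ := fun z ↦ ∏ ρ ∈ s, (1 - z / ρ) ^ analyticOrderNatAt f ρ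
    have hP : Differentiable ℂ P := Differentiable.fun_finsetProd fun ρ _ ↦ by fun_prop
    have hPa : P a ≠ 0 := Finset.prod_ne_zero_iff.2 fun ρ hρ ↦
      pow_ne_zero _ (one_sub_div_ne_zero (hs ρ hρ) (ne_of_mem_of_not_mem hρ ha).symm)
    have hord : analyticOrderNatAt f a = analyticOrderNatAt g a := by
      rw [← analyticOrderNatAt_mul_of_apply_ne_zero (hP.analyticAt a) (hg.analyticAt a) hPa]
      exact congrArg (analyticOrderNatAt · a) (funext hfg)
    have hgw : g w ≠ 0 := fun h ↦ hw (by rw [hfg, h, mul_zero])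
    obtain ⟨k, hk, hka, hgk⟩ := exists_eq_one_sub_div_pow_mul hg hgw ha0
    refine ⟨k, hk, (Finset.forall_mem_insert ..).2 ⟨hka, fun ρ hρ h ↦ hgs ρ hρ ?_⟩, fun z ↦ ?_⟩
    · rw [hgk, h, mul_zero]
    · rw [Finset.prod_insert ha, hord, hfg, hgk]
      ring

lemma finite_zeros_closedBall (hf : Differentiable ℂ f) {w : ℂ} (hw : f w ≠ 0) (R : ℝ) :
    (closedBall (0 : ℂ) R ∩ f ⁻¹' {0}).Finite := by
  have hdiscrete := (mem_codiscrete'.1 (AnalyticOnNhd.preimage_zero_mem_codiscrete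
    (fun z _ ↦ hf.analyticAt z) hw)).2
  rw [Set.preimage_compl, compl_compl] at hdiscrete
  exact ((isCompact_closedBall (0 : ℂ) R).inter_right
    (isClosed_singleton.preimage hf.continuous)).finite (hdiscrete.mono Set.inter_subset_right)

open Classical in
/-- The zeros of `f` of modulus at most `R`, as a finite set. It is given the value `∅` when there
are infinitely many of them, which for an entire function happens only if `f = 0`. -/
noncomputable def zerosInBall (f : ℂ → ℂ) (R : ℝ) : Finset ℂ :=
  if h : (closedBall (0 : ℂ) R ∩ f ⁻¹' {0}).Finite then h.toFinset else ∅

lemma mem_zerosInBall (hf : Differentiable ℂ f) {w : ℂ} (hw : f w ≠ 0) {R : ℝ} {z : ℂ} :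
    z ∈ zerosInBall f R ↔ ‖z‖ ≤ R ∧ f z = 0 := by
  simp [zerosInBall, dif_pos (finite_zeros_closedBall hf hw R)]

lemma exists_exp_eq_on_ball {g : ℂ → ℂ} {R : ℝ} (hR : 0 < R) (hg : DifferentiableOn ℂ g (ball 0 R))
    (h0 : g 0 = 1) (hne : ∀ z ∈ ball (0 : ℂ) R, g z ≠ 0) :
    ∃ h : ℂ → ℂ, h 0 = 0 ∧ (∀ z ∈ ball (0 : ℂ) R, HasDerivAt h (logDeriv g z) z) ∧
      ∀ z ∈ ball (0 : ℂ) R, g z = Complex.exp (h z) := by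
  have hlogDeriv : DifferentiableOn ℂ (logDeriv g) (ball 0 R) :=
    (hg.deriv isOpen_ball).div hg hne
  obtain ⟨h, hh0, hh⟩ := hlogDeriv.isExactOn_ball.with_val_at 0 0
  refine ⟨h, hh0, hh, fun z hz ↦ ?_⟩
  have hderiv : ∀ y ∈ ball (0 : ℂ) R, HasDerivAt (fun y ↦ Complex.exp (-h y) * g y) 0 y := by
    intro y hy
    have hgy := (hg.differentiableAt (isOpen_ball.mem_nhds hy)).hasDerivAt
    refine (((hh y hy).neg.cexp).mul hgy).congr_deriv ?_
    have := hne y hy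
    rw [logDeriv_apply]
    field_simp
    ring
  have hconst := isOpen_ball.is_const_of_deriv_eq_zero (convex_ball (0 : ℂ) R).isPreconnected
    (fun y hy ↦ (hderiv y hy).differentiableAt.differentiableWithinAt)
    (fun y hy ↦ (hderiv y hy).deriv) hz (mem_ball_self hR)
  rw [hh0, h0, neg_zero, Complex.exp_zero, mul_one] at hconst
  rw [← mul_one (Complex.exp (h z)), ← hconst, ← mul_assoc, ← Complex.exp_add, add_neg_cancel,
    Complex.exp_zero, one_mul]

lemma norm_log_le_two_mul {g h : ℂ → ℂ} {R M : ℝ} (hR : 0 < R)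
    (hM : 0 < M) (hh : DifferentiableOn ℂ h (ball 0 R)) (h0 : h 0 = 0)
    (hexp : ∀ z ∈ ball (0 : ℂ) R, g z = Complex.exp (h z))
    (hb : ∀ z ∈ ball (0 : ℂ) R, ‖g z‖ ≤ Real.exp M) {z : ℂ} (hz : ‖z‖ ≤ R / 2) :
    ‖h z‖ ≤ 2 * M := by
  have hre : Set.MapsTo h (ball 0 R) {z | z.re ≤ M} := fun y hy ↦ by
    simpa [hexp y hy, Complex.norm_exp] using hb y hy
  have hzR : z ∈ ball (0 : ℂ) R := mem_ball_zero_iff.2 (by linarith)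
  refine (Complex.borelCaratheodory_zero hM hh hre hR hzR h0).trans ?_
  rw [div_le_iff₀ (by linarith)]
  exact mul_le_mul_of_nonneg_left (by linarith) (by linarith)

lemma norm_logDeriv_sub_logDeriv_le {g : ℂ → ℂ} {R M : ℝ} (hR : 0 < R) (hM : 0 < M)
    (hg : DifferentiableOn ℂ g (ball 0 R)) (h0 : g 0 = 1) (hne : ∀ z ∈ ball (0 : ℂ) R, g z ≠ 0)
    (hb : ∀ z ∈ ball (0 : ℂ) R, ‖g z‖ ≤ Real.exp M) {z w : ℂ} (hz : ‖z‖ ≤ R / 8)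
    (hw : ‖w‖ ≤ R / 8) :
    ‖logDeriv g z - logDeriv g w‖ ≤ 64 * M / R ^ 2 * ‖z - w‖ := by
  obtain ⟨h, hh0, hh, hexp⟩ := exists_exp_eq_on_ball hR hg h0 hne
  have hhd : DifferentiableOn ℂ h (ball 0 R) := fun z hz ↦
    (hh z hz).differentiableAt.differentiableWithinAt
  have hderiv : ∀ y ∈ closedBall (0 : ℂ) (R / 8), ‖deriv (logDeriv g) y‖ ≤ 64 * M / R ^ 2 := by
    intro y hy
    rw [mem_closedBall_zero_iff] at hy
    have hball : ∀ v ∈ closedBall y (R / 4), ‖v‖ ≤ R / 2 := fun v hv ↦ by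
      have := norm_le_of_mem_closedBall hv
      linarith
    have hcauchy := Complex.norm_iteratedDeriv_le_of_forall_mem_sphere_norm_le 2
      (by positivity : 0 < R / 4)
      ((hhd.mono fun v hv ↦ mem_ball_zero_iff.2 (by linarith [hball v hv])).diffContOnCl_ball
        subset_rfl)
      fun v hv ↦ norm_log_le_two_mul hR hM hhd hh0 hexp hb
        (hball v (sphere_subset_closedBall hv))
    have hlog : deriv h =ᶠ[𝓝 y] logDeriv g :=
      mem_of_superset (isOpen_ball.mem_nhds (mem_ball_zero_iff.2 (by linarith : ‖y‖ < R)))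
        fun v hv ↦ (hh v hv).deriv
    rw [iteratedDeriv_succ, iteratedDeriv_one, hlog.deriv_eq] at hcauchy
    refine hcauchy.trans_eq ?_
    norm_num
    field_simp
    norm_num
  refine (convex_closedBall (0 : ℂ) (R / 8)).norm_image_sub_le_of_norm_deriv_le (fun y hy ↦ ?_)
    hderiv (by simpa using hw) (by simpa using hz)
  have hyR : y ∈ ball (0 : ℂ) R :=
    mem_ball_zero_iff.2 (by linarith [mem_closedBall_zero_iff.1 hy])
  exact (((hg.deriv isOpen_ball).div hg hne) y hyR).differentiableAt (isOpen_ball.mem_nhds hyR)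

lemma one_le_norm_one_sub_div {v ρ : ℂ} (hρ : ρ ≠ 0) (hv : 2 * ‖ρ‖ ≤ ‖v‖) : 1 ≤ ‖1 - v / ρ‖ := by
  have hdiv : 2 ≤ ‖v / ρ‖ := by rwa [norm_div, le_div_iff₀ (norm_pos_iff.2 hρ)]
  have htri := norm_sub_norm_le (v / ρ) 1
  rw [norm_one, norm_sub_rev] at htri
  linarith

lemma norm_le_of_eq_prod_one_sub_div_pow_mul {g : ℂ → ℂ} (hg : Differentiable ℂ g) {s : Finset ℂ}
    {m : ℂ → ℕ} (hfg : ∀ z, f z = (∏ ρ ∈ s, (1 - z / ρ) ^ m ρ) * g z) {R B : ℝ} (hR : 0 < R)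
    (hs : ∀ ρ ∈ s, ρ ≠ 0 ∧ 2 * ‖ρ‖ ≤ R) (hf : ∀ v ∈ sphere (0 : ℂ) R, ‖f v‖ ≤ B) {z : ℂ}
    (hz : ‖z‖ ≤ R) : ‖g z‖ ≤ B := by
  refine Complex.norm_le_of_forall_mem_frontier_norm_le (U := ball (0 : ℂ) R) isBounded_ball
    hg.diffContOnCl (fun v hv ↦ ?_) (by rwa [closure_ball _ hR.ne', mem_closedBall_zero_iff])
  rw [frontier_ball _ hR.ne'] at hv
  have hprod : 1 ≤ ∏ ρ ∈ s, ‖(1 - v / ρ) ^ m ρ‖ := by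
    refine Finset.one_le_prod fun ρ hρ ↦ ?_
    rw [norm_pow]
    refine one_le_pow₀ (one_le_norm_one_sub_div (hs ρ hρ).1 ?_)
    rw [mem_sphere_zero_iff_norm.1 hv]
    exact (hs ρ hρ).2
  calc ‖g v‖ ≤ (∏ ρ ∈ s, ‖(1 - v / ρ) ^ m ρ‖) * ‖g v‖ := le_mul_of_one_le_left (norm_nonneg _) hprod
    _ = ‖f v‖ := by rw [hfg, norm_mul, norm_prod]
    _ ≤ B := hf v hv

lemma logDeriv_one_sub_div {z ρ : ℂ} (hρ : ρ ≠ 0) :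
    logDeriv (fun z ↦ 1 - z / ρ) z = 1 / (z - ρ) := by
  have hd : HasDerivAt (fun z : ℂ ↦ 1 - z / ρ) (-(1 / ρ)) z := by
    simpa using ((hasDerivAt_id z).div_const ρ).const_sub 1
  have hfactor : 1 - z / ρ = -((z - ρ) / ρ) := by field_simp; ring
  rw [logDeriv_apply, hd.deriv, hfactor, neg_div_neg_eq, div_div_div_cancel_right₀ hρ]

lemma logDeriv_eq_sum_add_logDeriv {g : ℂ → ℂ} (hg : Differentiable ℂ g) {s : Finset ℂ} {m : ℂ → ℕ}
    (hs : ∀ ρ ∈ s, ρ ≠ 0) (hfg : ∀ z, f z = (∏ ρ ∈ s, (1 - z / ρ) ^ m ρ) * g z) {z : ℂ}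
    (hz : f z ≠ 0) :
    logDeriv f z = ∑ ρ ∈ s, (m ρ : ℂ) * (1 / (z - ρ)) + logDeriv g z := by
  obtain ⟨hP, hgz⟩ := mul_ne_zero_iff.1 (hfg z ▸ hz)
  rw [funext hfg, logDeriv_mul z hP hgz (.fun_finsetProd fun ρ _ ↦ by fun_prop) (hg z),
    logDeriv_prod (f := fun ρ z ↦ (1 - z / ρ) ^ m ρ) (Finset.prod_ne_zero_iff.1 hP)
      fun ρ _ ↦ by fun_prop]
  congr 1
  refine Finset.sum_congr rfl fun ρ hρ ↦ ?_
  rw [logDeriv_fun_pow (by fun_prop), logDeriv_one_sub_div (hs ρ hρ)]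

lemma norm_logDeriv_sub_sub_sum_zerosInBall_le (hf : Differentiable ℂ f) (h0 : f 0 = 1) {R M : ℝ}
    (hR : 0 < R) (hM : 0 < M) (hb : ∀ v ∈ sphere (0 : ℂ) (2 * R), ‖f v‖ ≤ Real.exp M) {z w : ℂ}
    (hz : ‖z‖ ≤ R / 8) (hw : ‖w‖ ≤ R / 8) (hfz : f z ≠ 0) (hfw : f w ≠ 0) :
    ‖(logDeriv f z - logDeriv f w) - ∑ ρ ∈ zerosInBall f R, (analyticOrderNatAt f ρ : ℂ) *
      (1 / (z - ρ) - 1 / (w - ρ))‖ ≤ 64 * M / R ^ 2 * ‖z - w‖ := by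
  have hf0 : f 0 ≠ 0 := h0 ▸ one_ne_zero
  have hmem {ρ : ℂ} : ρ ∈ zerosInBall f R ↔ ‖ρ‖ ≤ R ∧ f ρ = 0 := mem_zerosInBall hf hf0
  have hs : ∀ ρ ∈ zerosInBall f R, ρ ≠ 0 := by
    rintro ρ hρ rfl
    exact hf0 (hmem.1 hρ).2
  obtain ⟨g, hg, hgs, hfg⟩ := exists_eq_prod_one_sub_div_pow_mul hf hf0 (zerosInBall f R) hs
  have hg0 : g 0 = 1 := by simpa [h0] using (hfg 0).symm
  have hne : ∀ v ∈ ball (0 : ℂ) R, g v ≠ 0 := fun v hv hgv ↦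
    hgs v (hmem.2 ⟨(mem_ball_zero_iff.1 hv).le, by rw [hfg, hgv, mul_zero]⟩) hgv
  have hgM : ∀ v ∈ ball (0 : ℂ) R, ‖g v‖ ≤ Real.exp M := fun v hv ↦
    norm_le_of_eq_prod_one_sub_div_pow_mul hg hfg (by positivity : 0 < 2 * R)
      (fun ρ hρ ↦ ⟨hs ρ hρ, by linarith [(hmem.1 hρ).1]⟩) hb
      (by linarith [mem_ball_zero_iff.1 hv])
  refine (congrArg norm ?_).trans_le
    (norm_logDeriv_sub_logDeriv_le hR hM hg.differentiableOn hg0 hne hgM hz hw)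
  rw [logDeriv_eq_sum_add_logDeriv hg hs hfg hfz, logDeriv_eq_sum_add_logDeriv hg hs hfg hfw]
  simp only [mul_sub, Finset.sum_sub_distrib]
  ring

/- The logarithmic derivative of the Hadamard product; in differences the exponential factor, which
for order less than two is the exponential of a linear polynomial, drops out. -/
theorem tendsto_sum_zerosInBall_logDeriv_sub (hf : Differentiable ℂ f) (h0 : f 0 = 1) {C τ : ℝ}
    (hC : 0 < C) (hτ0 : 0 ≤ τ) (hτ : τ < 2) (hb : ∀ z, ‖f z‖ ≤ Real.exp (C * (1 + ‖z‖) ^ τ))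
    {z w : ℂ} (hfz : f z ≠ 0) (hfw : f w ≠ 0) :
    Tendsto (fun N : ℕ ↦ ∑ ρ ∈ zerosInBall f N, (analyticOrderNatAt f ρ : ℂ) *
      (1 / (z - ρ) - 1 / (w - ρ))) atTop (𝓝 (logDeriv f z - logDeriv f w)) := by
  rw [tendsto_iff_norm_sub_tendsto_zero]
  have hlim : Tendsto (fun N : ℕ ↦ 64 * C * 3 ^ τ * ‖z - w‖ * (N : ℝ) ^ (-(2 - τ)))
      atTop (𝓝 0) := by
    simpa using ((tendsto_rpow_neg_atTop (sub_pos.2 hτ)).comp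
      tendsto_natCast_atTop_atTop).const_mul (64 * C * 3 ^ τ * ‖z - w‖)
  refine squeeze_zero' (Eventually.of_forall fun _ ↦ norm_nonneg _) ?_ hlim
  filter_upwards [tendsto_natCast_atTop_atTop.eventually_ge_atTop (8 * ‖z‖),
    tendsto_natCast_atTop_atTop.eventually_ge_atTop (8 * ‖w‖), eventually_ge_atTop 1]
    with N hzN hwN hN
  have hN1 : (1 : ℝ) ≤ N := by exact_mod_cast hN
  have hN0 : (0 : ℝ) < N := by linarith
  rw [norm_sub_rev]
  have hest := norm_logDeriv_sub_sub_sum_zerosInBall_le hf h0 hN0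
    (by positivity : 0 < C * (1 + 2 * (N : ℝ)) ^ τ)
    (fun v hv ↦ by simpa [mem_sphere_zero_iff_norm.1 hv] using hb v)
    (by linarith) (by linarith) hfz hfw
  have hgrowth : (1 + 2 * (N : ℝ)) ^ τ ≤ 3 ^ τ * (N : ℝ) ^ τ := by
    rw [← Real.mul_rpow (by norm_num) hN0.le]
    exact Real.rpow_le_rpow (by positivity) (by linarith) hτ0
  have hexponent : (N : ℝ) ^ (-(2 - τ)) = (N : ℝ) ^ τ / (N : ℝ) ^ 2 := by
    rw [neg_sub, Real.rpow_sub hN0, Real.rpow_two]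
  calc _ ≤ 64 * (C * (1 + 2 * (N : ℝ)) ^ τ) / (N : ℝ) ^ 2 * ‖z - w‖ := hest
    _ ≤ 64 * (C * (3 ^ τ * (N : ℝ) ^ τ)) / (N : ℝ) ^ 2 * ‖z - w‖ := by gcongr
    _ = 64 * C * 3 ^ τ * ‖z - w‖ * (N : ℝ) ^ (-(2 - τ)) := by rw [hexponent]; ring

end EntireFunctions

/-! ### The Riemann xi function -/

section Growth

open MeasureTheory

lemma integrableOn_rpow_mul_norm {E : Type*} [NormedAddCommGroup E] [NormedSpace ℂ E] {f : ℝ → E}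
    {c : ℝ} (hf : MellinConvergent f c) :
    IntegrableOn (fun t : ℝ ↦ t ^ (c - 1) * ‖f t‖) (Set.Ioi 0) := by
  refine IntegrableOn.congr_fun hf.norm (fun t ht ↦ ?_) measurableSet_Ioi
  simp only [norm_smul]
  rw [Complex.norm_cpow_eq_rpow_re_of_pos ht]
  simp

lemma norm_mellin_le_of_mem_strip {E : Type*} [NormedAddCommGroup E] [NormedSpace ℂ E] {f : ℝ → E}
    {a b : ℝ} (ha : MellinConvergent f a) (hb : MellinConvergent f b) {s : ℂ} (has : a ≤ s.re)
    (hsb : s.re ≤ b) :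
    ‖mellin f s‖ ≤ ∫ t in Set.Ioi (0 : ℝ), (t ^ (a - 1) * ‖f t‖ + t ^ (b - 1) * ‖f t‖) := by
  refine norm_integral_le_of_norm_le
    ((integrableOn_rpow_mul_norm ha).add (integrableOn_rpow_mul_norm hb)) ?_
  refine (ae_restrict_iff' measurableSet_Ioi).2 (ae_of_all _ fun t ht ↦ ?_)
  have ht0 : (0 : ℝ) < t := ht
  rw [norm_smul, Complex.norm_cpow_eq_rpow_re_of_pos ht0, ← add_mul, Complex.sub_re, Complex.one_re]
  refine mul_le_mul_of_nonneg_right ?_ (norm_nonneg _)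
  rcases le_total t 1 with ht1 | ht1
  · exact (Real.rpow_le_rpow_of_exponent_ge ht0 ht1 (by linarith)).trans
      (le_add_of_nonneg_right (by positivity))
  · exact (Real.rpow_le_rpow_of_exponent_le ht1 (by linarith)).trans
      (le_add_of_nonneg_left (by positivity))

lemma exists_norm_completedRiemannZeta₀_le (a b : ℝ) :
    ∃ K : ℝ, ∀ s : ℂ, a ≤ s.re → s.re ≤ b → ‖completedRiemannZeta₀ s‖ ≤ K := by
  set P := HurwitzZeta.hurwitzEvenFEPair 0
  have hconv (s : ℂ) : MellinConvergent P.f_modif s :=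
    (P.isStrongFEPair_toStrongFEPair.hasMellin s).1
  refine ⟨(∫ t in Set.Ioi (0 : ℝ),
    (t ^ (a / 2 - 1) * ‖P.f_modif t‖ + t ^ (b / 2 - 1) * ‖P.f_modif t‖)) / 2, fun s has hsb ↦ ?_⟩
  have hmellin : completedRiemannZeta₀ s = mellin P.f_modif (s / 2) / 2 := rfl
  rw [hmellin, norm_div, Complex.norm_two]
  gcongr
  have hre : (s / 2).re = s.re / 2 := Complex.div_ofNat_re s 2
  exact norm_mellin_le_of_mem_strip (hconv _) (hconv _) (by linarith) (by linarith)

lemma norm_riemannZeta_le_tsum {σ : ℝ} (hσ : 1 < σ) {s : ℂ} (hs : σ ≤ s.re) :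
    ‖riemannZeta s‖ ≤ ∑' n : ℕ, 1 / (n : ℝ) ^ σ := by
  rw [zeta_eq_tsum_one_div_nat_cpow (by linarith)]
  refine tsum_of_norm_bounded (Real.summable_one_div_nat_rpow.2 hσ).hasSum fun n ↦ ?_
  rcases n.eq_zero_or_pos with rfl | hn
  · have hs0 : s ≠ 0 := by
      rintro rfl
      simp only [Complex.zero_re] at hs
      linarith
    simp [hs0, (by linarith : σ ≠ 0)]
  · rw [norm_div, norm_one, Complex.norm_natCast_cpow_of_pos hn]
    gcongr
    exact_mod_cast hn

lemma norm_Gamma_le {s : ℂ} (hs : 0 < s.re) : ‖Complex.Gamma s‖ ≤ Real.Gamma s.re := by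
  rw [Complex.Gamma_eq_integral hs, Real.Gamma_eq_integral hs, Complex.GammaIntegral]
  refine norm_integral_le_of_norm_le (Real.GammaIntegral_convergent hs) ?_
  refine (ae_restrict_iff' measurableSet_Ioi).2 (ae_of_all _ fun t ht ↦ ?_)
  rw [norm_mul, Complex.norm_cpow_eq_rpow_re_of_pos ht]
  simp [Complex.norm_exp]

lemma Gamma_le_exp {x : ℝ} (hx : 2 ≤ x) : Real.Gamma x ≤ Real.exp (2 * x ^ (3 / 2 : ℝ)) := by
  set n := ⌊x⌋₊
  have hnx : (n : ℝ) ≤ x := Nat.floor_le (by linarith)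
  have hn : (2 : ℝ) ≤ n := by exact_mod_cast Nat.le_floor (by exact_mod_cast hx)
  have hfactorial : Real.Gamma x ≤ n.factorial := by
    rw [← Real.Gamma_nat_eq_factorial]
    exact Real.Gamma_strictMonoOn_Ici.monotoneOn hx (Set.mem_Ici.2 (by linarith))
      (Nat.lt_floor_add_one x).le
  have hlog : Real.log x ≤ 2 * x ^ (1 / 2 : ℝ) := by
    have := Real.log_le_rpow_div (by linarith : 0 ≤ x) (by norm_num : (0 : ℝ) < 1 / 2)
    linarith
  calc Real.Gamma x ≤ (n : ℝ) ^ n := hfactorial.trans (by exact_mod_cast n.factorial_le_pow)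
    _ ≤ x ^ (n : ℝ) := by rw [Real.rpow_natCast]; gcongr
    _ ≤ x ^ x := Real.rpow_le_rpow_of_exponent_le (by linarith) hnx
    _ = Real.exp (Real.log x * x) := Real.rpow_def_of_pos (by linarith) x
    _ ≤ Real.exp (2 * x ^ (1 / 2 : ℝ) * x) := by gcongr
    _ = Real.exp (2 * x ^ (3 / 2 : ℝ)) := by
      rw [mul_assoc, ← Real.rpow_add_one (by linarith)]
      norm_num

lemma norm_Gammaℝ_le {s : ℂ} (hs : 4 ≤ s.re) :
    ‖s.Gammaℝ‖ ≤ Real.exp (2 * (1 + ‖s‖) ^ (3 / 2 : ℝ)) := by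
  have hre : (s / 2).re = s.re / 2 := Complex.div_ofNat_re s 2
  have hpi : Real.pi ^ (-s / 2).re ≤ 1 := by
    refine Real.rpow_le_one_of_one_le_of_nonpos (by linarith [Real.pi_gt_three]) ?_
    rw [neg_div, Complex.neg_re, hre]
    linarith
  rw [Complex.Gammaℝ_def, norm_mul, Complex.norm_cpow_eq_rpow_re_of_pos Real.pi_pos]
  refine (mul_le_of_le_one_left (norm_nonneg _) hpi).trans
    ((norm_Gamma_le (by linarith)).trans ((Gamma_le_exp (by linarith)).trans ?_))
  rw [hre]
  gcongr
  linarith [Complex.re_le_norm s]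

end Growth

/-- The Riemann xi function, normalised so that `xi 0 = xi 1 = 1`; it is twice the classical one. -/
noncomputable def xi (s : ℂ) : ℂ := s * (s - 1) * completedRiemannZeta₀ s + 1

lemma differentiable_xi : Differentiable ℂ xi := by
  have := differentiable_completedZeta₀
  unfold xi
  fun_prop

lemma xi_zero : xi 0 = 1 := by simp [xi]

lemma xi_one : xi 1 = 1 := by simp [xi]

lemma xi_one_sub (s : ℂ) : xi (1 - s) = xi s := by
  rw [xi, xi, completedRiemannZeta₀_one_sub]
  ring

lemma xi_eq {s : ℂ} (h0 : s ≠ 0) (h1 : s ≠ 1) (hG : s.Gammaℝ ≠ 0) :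
    xi s = s * (s - 1) * (s.Gammaℝ * riemannZeta s) := by
  have h1' : 1 - s ≠ 0 := sub_ne_zero.2 h1.symm
  rw [riemannZeta_def_of_ne_zero h0, completedRiemannZeta_eq, xi]
  field_simp
  ring

lemma xi_eq_of_one_lt_re {s : ℂ} (hs : 1 < s.re) :
    xi s = s * (s - 1) * (s.Gammaℝ * riemannZeta s) := by
  refine xi_eq ?_ ?_ (Complex.Gammaℝ_ne_zero_of_re_pos (by linarith)) <;>
  · rintro rfl
    norm_num at hs

lemma xi_ne_zero_of_one_le_re {s : ℂ} (hs : 1 ≤ s.re) : xi s ≠ 0 := by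
  by_cases h1 : s = 1
  · simp [h1, xi_one]
  have h0 : s ≠ 0 := by
    rintro rfl
    norm_num at hs
  have hG : s.Gammaℝ ≠ 0 := Complex.Gammaℝ_ne_zero_of_re_pos (by linarith)
  rw [xi_eq h0 h1 hG]
  exact mul_ne_zero (mul_ne_zero h0 (sub_ne_zero.2 h1))
    (mul_ne_zero hG (riemannZeta_ne_zero_of_one_le_re hs))

lemma re_mem_Ioo_of_xi_eq_zero {s : ℂ} (hs : xi s = 0) : s.re ∈ Set.Ioo 0 1 := by
  refine ⟨lt_of_not_ge fun h ↦ xi_ne_zero_of_one_le_re (s := 1 - s) ?_ (by rw [xi_one_sub, hs]),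
    lt_of_not_ge fun h ↦ xi_ne_zero_of_one_le_re h hs⟩
  rw [Complex.sub_re, Complex.one_re]
  linarith

lemma ne_zero_of_xi_eq_zero {s : ℂ} (hs : xi s = 0) : s ≠ 0 := by
  rintro rfl
  simp [xi_zero] at hs

lemma sub_ne_zero_of_xi_eq_zero {s ρ : ℂ} (hs : 1 ≤ s.re) (hρ : xi ρ = 0) : s - ρ ≠ 0 :=
  sub_ne_zero.2 fun h ↦ xi_ne_zero_of_one_le_re hs (h ▸ hρ)

lemma exists_norm_xi_le_of_half_le_re : ∃ A : ℝ, 0 ≤ A ∧ ∀ s : ℂ, 1 / 2 ≤ s.re →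
    ‖xi s‖ ≤ A * (1 + ‖s‖) ^ 2 * Real.exp (2 * (1 + ‖s‖) ^ (3 / 2 : ℝ)) := by
  obtain ⟨K, hK⟩ := exists_norm_completedRiemannZeta₀_le (1 / 2) 4
  have hK0 : 0 ≤ K := (norm_nonneg _).trans (hK 1 (by norm_num) (by norm_num))
  set Z := ∑' n : ℕ, 1 / (n : ℝ) ^ (2 : ℝ)
  have hZ0 : 0 ≤ Z := tsum_nonneg fun n ↦ by positivity
  refine ⟨K + Z + 1, by positivity, fun s hs ↦ ?_⟩
  have hn := norm_nonneg s
  have hexp : 1 ≤ Real.exp (2 * (1 + ‖s‖) ^ (3 / 2 : ℝ)) := Real.one_le_exp (by positivity)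
  set E := Real.exp (2 * (1 + ‖s‖) ^ (3 / 2 : ℝ))
  have hquad : ‖s * (s - 1)‖ ≤ (1 + ‖s‖) ^ 2 := by
    have := norm_sub_le s 1
    rw [norm_one] at this
    rw [norm_mul, sq]
    gcongr <;> linarith
  rcases le_total s.re 4 with h4 | h4
  · calc ‖xi s‖ ≤ ‖s * (s - 1)‖ * ‖completedRiemannZeta₀ s‖ + 1 := by
          rw [xi, ← norm_mul]
          simpa using norm_add_le (s * (s - 1) * completedRiemannZeta₀ s) 1
      _ ≤ (1 + ‖s‖) ^ 2 * K + 1 := by gcongr; exact hK s hs h4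
      _ ≤ (K + Z + 1) * (1 + ‖s‖) ^ 2 := by nlinarith
      _ ≤ (K + Z + 1) * (1 + ‖s‖) ^ 2 * E := le_mul_of_one_le_right (by positivity) hexp
  · have hZ : ‖riemannZeta s‖ ≤ Z := norm_riemannZeta_le_tsum one_lt_two (by linarith)
    rw [xi_eq_of_one_lt_re (by linarith), norm_mul, norm_mul s.Gammaℝ]
    calc _ ≤ (1 + ‖s‖) ^ 2 * (E * Z) := by gcongr; exact norm_Gammaℝ_le h4
      _ = Z * (1 + ‖s‖) ^ 2 * E := by ring
      _ ≤ (K + Z + 1) * (1 + ‖s‖) ^ 2 * E := by gcongr; linarith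

lemma mul_sq_mul_exp_le_exp {A y : ℝ} (hA : 0 ≤ A) (hy : 1 ≤ y) :
    A * y ^ 2 * Real.exp (2 * y ^ (3 / 2 : ℝ)) ≤ Real.exp ((A + 4) * y ^ (3 / 2 : ℝ)) := by
  have hy' : y ≤ y ^ (3 / 2 : ℝ) := Real.self_le_rpow_of_one_le hy (by norm_num)
  have hA' : A ≤ Real.exp (A * y ^ (3 / 2 : ℝ)) := by
    nlinarith [Real.add_one_le_exp (A * y ^ (3 / 2 : ℝ))]
  have hsq : y ^ 2 ≤ Real.exp (2 * y ^ (3 / 2 : ℝ)) := by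
    rw [two_mul, Real.exp_add, sq]
    have := Real.add_one_le_exp (y ^ (3 / 2 : ℝ))
    gcongr <;> linarith
  calc _ ≤ Real.exp (A * y ^ (3 / 2 : ℝ)) * Real.exp (2 * y ^ (3 / 2 : ℝ)) *
        Real.exp (2 * y ^ (3 / 2 : ℝ)) := by gcongr
    _ = _ := by rw [← Real.exp_add, ← Real.exp_add]; ring_nf

lemma exists_norm_xi_le_exp : ∃ C : ℝ, 0 < C ∧
    ∀ s, ‖xi s‖ ≤ Real.exp (C * (1 + ‖s‖) ^ (3 / 2 : ℝ)) := by
  obtain ⟨A, hA, hxi⟩ := exists_norm_xi_le_of_half_le_re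
  have hright (s w : ℂ) (hw : 1 / 2 ≤ w.re) (hws : ‖w‖ ≤ 1 + ‖s‖) :
      ‖xi w‖ ≤ Real.exp ((A + 4) * 2 ^ (3 / 2 : ℝ) * (1 + ‖s‖) ^ (3 / 2 : ℝ)) := by
    have hs := norm_nonneg s
    refine ((hxi w hw).trans (mul_sq_mul_exp_le_exp hA (by linarith [norm_nonneg w]))).trans ?_
    rw [mul_assoc, ← Real.mul_rpow (by norm_num) (by positivity)]
    gcongr
    linarith
  refine ⟨(A + 4) * 2 ^ (3 / 2 : ℝ), by positivity, fun s ↦ ?_⟩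
  rcases le_total (1 / 2) s.re with h | h
  · exact hright s s h (by linarith)
  · rw [← xi_one_sub]
    refine hright s (1 - s) (by rw [Complex.sub_re, Complex.one_re]; linarith) ?_
    simpa using norm_sub_le 1 s

section SumsOverZeros

open Filter Topology

variable {f : ℂ → ℂ} {w : ℂ}

open Classical in
lemma tendsto_subtype_zerosInBall (hf : Differentiable ℂ f) (hw : f w ≠ 0) :
    Tendsto (fun N : ℕ ↦ (zerosInBall f N).subtype (f · = 0)) atTop atTop := by
  refine tendsto_atTop_finset_of_monotone (fun M N hMN ρ hρ ↦ ?_) fun ρ ↦ ?_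
  · simp only [Finset.mem_subtype, mem_zerosInBall hf hw] at hρ ⊢
    exact ⟨hρ.1.trans (by exact_mod_cast hMN), hρ.2⟩
  · obtain ⟨N, hN⟩ := exists_nat_ge ‖(ρ : ℂ)‖
    exact ⟨N, Finset.mem_subtype.2 ((mem_zerosInBall hf hw).2 ⟨hN, ρ.2⟩)⟩

open Classical in
lemma sum_subtype_zerosInBall {M : Type*} [AddCommMonoid M] (hf : Differentiable ℂ f)
    (hw : f w ≠ 0) (F : ℂ → M) (R : ℝ) :
    ∑ ρ ∈ (zerosInBall f R).subtype (f · = 0), F ρ = ∑ ρ ∈ zerosInBall f R, F ρ :=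
  Finset.sum_subtype_of_mem F fun _ hρ ↦ ((mem_zerosInBall hf hw).1 hρ).2

lemma tendsto_sum_zerosInBall {M : Type*} [AddCommMonoid M] [TopologicalSpace M]
    (hf : Differentiable ℂ f) (hw : f w ≠ 0) {F : ℂ → M} {a : M} (hF : HasSum F a)
    (hsupp : ∀ ρ, f ρ ≠ 0 → F ρ = 0) :
    Tendsto (fun N : ℕ ↦ ∑ ρ ∈ zerosInBall f N, F ρ) atTop (𝓝 a) := by
  have hZ : HasSum (F ∘ ((↑) : {ρ // f ρ = 0} → ℂ)) a :=
    (hasSum_subtype_iff_of_support_subset fun ρ hρ ↦ not_not.1 (mt (hsupp ρ) hρ)).2 hF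
  simpa only [Function.comp_def, sum_subtype_zerosInBall hf hw] using
    hZ.comp (tendsto_subtype_zerosInBall hf hw)

lemma hasSum_of_tendsto_sum_zerosInBall (hf : Differentiable ℂ f) (hw : f w ≠ 0) {F : ℂ → ℝ}
    {a : ℝ} (hF : ∀ ρ, 0 ≤ F ρ) (hsupp : ∀ ρ, f ρ ≠ 0 → F ρ = 0)
    (ha : Tendsto (fun N : ℕ ↦ ∑ ρ ∈ zerosInBall f N, F ρ) atTop (𝓝 a)) : HasSum F a := by
  have hsum : Summable (F ∘ ((↑) : {ρ // f ρ = 0} → ℂ)) := by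
    refine summable_of_sum_le (fun ρ ↦ hF ρ) (c := a) fun u ↦ ge_of_tendsto ha ?_
    filter_upwards [(tendsto_subtype_zerosInBall hf hw).eventually_ge_atTop u] with N hN
    rw [← sum_subtype_zerosInBall hf hw]
    exact Finset.sum_le_sum_of_subset_of_nonneg hN fun ρ _ _ ↦ hF ρ
  have hF' : Summable F := ((hasSum_subtype_iff_of_support_subset
    fun ρ hρ ↦ not_not.1 (mt (hsupp ρ) hρ)).1 hsum.hasSum).summable
  rw [tendsto_nhds_unique ha (tendsto_sum_zerosInBall hf hw hF'.hasSum hsupp)]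
  exact hF'.hasSum

end SumsOverZeros

/-! ### The zeros of xi -/

/-- The multiplicity of `ρ` as a zero of `xi`, as a real number; it vanishes off the zeros. -/
noncomputable def xiMult (ρ : ℂ) : ℝ := analyticOrderNatAt xi ρ

/-- The weight `m(ρ) / (1 + γ²)` of a zero `ρ = β + iγ` of multiplicity `m(ρ)`, against which the
terms of all sums over zeros are compared. -/
noncomputable def zeroWeight (ρ : ℂ) : ℝ := xiMult ρ / (1 + ρ.im ^ 2)

/-- The value of `ξ'/ξ` at `1`, equal to the sum of `Re (1/ρ)` over the zeros of `xi`. -/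
noncomputable def hadamardConst : ℝ := (eulerMascheroniConstant - log (4 * π)) / 2 + 1

section Zeros

open Filter Topology

lemma xi_zero_ne_zero : xi 0 ≠ 0 := xi_zero ▸ one_ne_zero

lemma xiMult_nonneg (ρ : ℂ) : 0 ≤ xiMult ρ := Nat.cast_nonneg _

lemma xiMult_eq_zero {ρ : ℂ} (h : xi ρ ≠ 0) : xiMult ρ = 0 := by
  simp [xiMult, analyticOrderNatAt,
    (differentiable_xi.analyticAt ρ).analyticOrderAt_eq_zero.2 h]

lemma one_le_xiMult {ρ : ℂ} (h : xi ρ = 0) : 1 ≤ xiMult ρ := by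
  have htop := analyticOrderAt_ne_top_of_apply_ne_zero differentiable_xi xi_zero_ne_zero ρ
  have hne := (differentiable_xi.analyticAt ρ).analyticOrderAt_ne_zero.2 h
  rw [← Nat.cast_analyticOrderNatAt htop, Nat.cast_ne_zero] at hne
  exact Nat.one_le_cast.2 (Nat.one_le_iff_ne_zero.2 hne)

lemma xi_comp_one_sub : xi ∘ (fun z ↦ 1 - z) = xi := funext xi_one_sub

lemma deriv_one_sub_id (z : ℂ) : deriv (fun z : ℂ ↦ 1 - z) z = -1 := by
  rw [deriv_const_sub, deriv_id'']

lemma xiMult_one_sub (ρ : ℂ) : xiMult (1 - ρ) = xiMult ρ := by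
  have := analyticOrderAt_comp_of_deriv_ne_zero (f := xi) (g := fun z ↦ 1 - z) (z₀ := ρ)
    (by fun_prop) (by rw [deriv_one_sub_id]; exact neg_ne_zero.2 one_ne_zero)
  rw [xi_comp_one_sub] at this
  rw [xiMult, xiMult, analyticOrderNatAt, analyticOrderNatAt, this]

lemma zeroWeight_nonneg (ρ : ℂ) : 0 ≤ zeroWeight ρ :=
  div_nonneg (xiMult_nonneg ρ) (by positivity)

lemma zeroWeight_eq_zero {ρ : ℂ} (h : xi ρ ≠ 0) : zeroWeight ρ = 0 := by
  simp [zeroWeight, xiMult_eq_zero h]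

lemma tendsto_sum_zerosInBall_logDeriv_xi_sub {z w : ℂ} (hz : xi z ≠ 0) (hw : xi w ≠ 0) :
    Tendsto (fun N : ℕ ↦ ∑ ρ ∈ zerosInBall xi N, (xiMult ρ : ℂ) * (1 / (z - ρ) - 1 / (w - ρ)))
      atTop (𝓝 (logDeriv xi z - logDeriv xi w)) := by
  obtain ⟨C, hC, hb⟩ := exists_norm_xi_le_exp
  simpa [xiMult] using tendsto_sum_zerosInBall_logDeriv_sub differentiable_xi xi_zero hC
    (by norm_num) (by norm_num) hb hz hw

lemma logDeriv_xi_one : logDeriv xi 1 = hadamardConst := by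
  have hquad : HasDerivAt (fun s : ℂ ↦ s * (s - 1)) 1 1 := by
    simpa using (hasDerivAt_id' (1 : ℂ)).fun_mul ((hasDerivAt_id' (1 : ℂ)).sub_const 1)
  have hd : HasDerivAt xi (completedRiemannZeta₀ 1) 1 :=
    ((hquad.fun_mul (differentiable_completedZeta₀ 1).hasDerivAt).add_const 1).congr_deriv (by simp)
  rw [logDeriv_apply, hd.deriv, xi_one, completedRiemannZeta₀_one, div_one, hadamardConst]
  push_cast [Complex.ofReal_log (by positivity : 0 ≤ 4 * π)]
  rfl

lemma logDeriv_xi_one_sub (s : ℂ) : logDeriv xi (1 - s) = -logDeriv xi s := by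
  have := logDeriv_comp (f := xi) (g := fun z ↦ 1 - z) (x := s) (differentiable_xi _)
    (by fun_prop)
  rw [xi_comp_one_sub, deriv_one_sub_id] at this
  rw [this]
  ring

lemma logDeriv_xi_zero : logDeriv xi 0 = -hadamardConst := by
  simpa [logDeriv_xi_one] using logDeriv_xi_one_sub 1

lemma re_one_div_sub (s ρ : ℂ) :
    (1 / (s - ρ)).re = (s.re - ρ.re) / ((s.re - ρ.re) ^ 2 + (s.im - ρ.im) ^ 2) := by
  rw [one_div, Complex.inv_re, Complex.normSq_apply]
  simp [sq]

lemma re_one_div (ρ : ℂ) : (1 / ρ).re = ρ.re / (ρ.re ^ 2 + ρ.im ^ 2) := by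
  simpa using re_one_div_sub ρ 0

lemma xiMult_mul_re_one_div_nonneg (ρ : ℂ) : 0 ≤ xiMult ρ * (1 / ρ).re := by
  by_cases hρ : xi ρ = 0
  · rw [re_one_div]
    have := (re_mem_Ioo_of_xi_eq_zero hρ).1
    have := xiMult_nonneg ρ
    positivity
  · simp [xiMult_eq_zero hρ]

lemma zeroWeight_le_xiMult_mul_re_add (ρ : ℂ) :
    zeroWeight ρ ≤ xiMult ρ * (1 / ρ).re + xiMult ρ * (1 / (1 - ρ)).re := by
  by_cases hρ : xi ρ = 0
  swap
  · simp [zeroWeight, xiMult_eq_zero hρ]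
  obtain ⟨h0, h1⟩ := re_mem_Ioo_of_xi_eq_zero hρ
  have := sq_nonneg ρ.im
  rw [zeroWeight, ← mul_add, div_eq_mul_one_div, re_one_div, re_one_div_sub]
  refine mul_le_mul_of_nonneg_left ?_ (xiMult_nonneg ρ)
  have hβ : ρ.re / (1 + ρ.im ^ 2) ≤ ρ.re / (ρ.re ^ 2 + ρ.im ^ 2) := by
    gcongr
    nlinarith
  have hβ' : (1 - ρ.re) / (1 + ρ.im ^ 2) ≤
      (1 - ρ.re) / ((1 - ρ.re) ^ 2 + ρ.im ^ 2) := by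
    refine div_le_div_of_nonneg_left (by linarith) ?_ ?_ <;> nlinarith
  calc 1 / (1 + ρ.im ^ 2) = ρ.re / (1 + ρ.im ^ 2) + (1 - ρ.re) / (1 + ρ.im ^ 2) := by ring
    _ ≤ _ := add_le_add hβ (by simpa using hβ')

lemma hasSum_xiMult_mul_re_add :
    HasSum (fun ρ ↦ xiMult ρ * (1 / ρ).re + xiMult ρ * (1 / (1 - ρ)).re) (2 * hadamardConst) := by
  refine hasSum_of_tendsto_sum_zerosInBall differentiable_xi xi_zero_ne_zero
    (fun ρ ↦ (zeroWeight_nonneg ρ).trans (zeroWeight_le_xiMult_mul_re_add ρ))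
    (fun ρ hρ ↦ by simp [xiMult_eq_zero hρ]) ?_
  have hlim := (Complex.continuous_re.tendsto _).comp
    (tendsto_sum_zerosInBall_logDeriv_xi_sub (xi_ne_zero_of_one_le_re Complex.one_re.ge)
      xi_zero_ne_zero)
  have hval : (logDeriv xi 1 - logDeriv xi 0).re = 2 * hadamardConst := by
    rw [logDeriv_xi_one, logDeriv_xi_zero, sub_neg_eq_add, ← two_mul, Complex.re_mul_ofReal]
    simp
  rw [hval] at hlim
  refine hlim.congr fun N ↦ ?_
  simp only [Function.comp, Complex.re_sum, Complex.re_ofReal_mul, Complex.sub_re]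
  refine Finset.sum_congr rfl fun ρ _ ↦ ?_
  rw [zero_sub, one_div (-ρ), inv_neg, Complex.neg_re, ← one_div]
  ring

lemma summable_zeroWeight : Summable zeroWeight :=
  hasSum_xiMult_mul_re_add.summable.of_nonneg_of_le zeroWeight_nonneg
    zeroWeight_le_xiMult_mul_re_add

lemma tsum_zeroWeight_le : ∑' ρ, zeroWeight ρ ≤ 2 * hadamardConst :=
  hasSum_le zeroWeight_le_xiMult_mul_re_add summable_zeroWeight.hasSum hasSum_xiMult_mul_re_add

lemma hasSum_xiMult_mul_re_one_div : HasSum (fun ρ ↦ xiMult ρ * (1 / ρ).re) hadamardConst := by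
  have hrefl : (fun ρ ↦ xiMult ρ * (1 / (1 - ρ)).re) =
      (fun ρ ↦ xiMult ρ * (1 / ρ).re) ∘ Equiv.subLeft (1 : ℂ) := by
    ext ρ
    simp [xiMult_one_sub]
  have hsum : Summable fun ρ ↦ xiMult ρ * (1 / ρ).re :=
    hasSum_xiMult_mul_re_add.summable.of_nonneg_of_le xiMult_mul_re_one_div_nonneg fun ρ ↦
      le_add_of_nonneg_right <| by
        simpa [xiMult_one_sub] using xiMult_mul_re_one_div_nonneg (1 - ρ)
  have hsum' : HasSum (fun ρ ↦ xiMult ρ * (1 / (1 - ρ)).re) (∑' ρ, xiMult ρ * (1 / ρ).re) := by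
    rw [hrefl]
    exact (Equiv.subLeft (1 : ℂ)).hasSum_iff.2 hsum.hasSum
  have := (hsum.hasSum.add hsum').unique hasSum_xiMult_mul_re_add
  rw [(by linarith : hadamardConst = ∑' ρ, xiMult ρ * (1 / ρ).re)]
  exact hsum.hasSum

lemma antitone_harmonic_sub_log_add_half :
    Antitone fun n : ℕ ↦ (harmonic n : ℝ) - log (n + 1 / 2) := by
  refine antitone_nat_of_succ_le fun n ↦ ?_
  have h := Real.le_log_one_add_of_nonneg (x := 1 / ((n : ℝ) + 1 / 2)) (by positivity)
  have hleft : 2 * (1 / ((n : ℝ) + 1 / 2)) / (1 / ((n : ℝ) + 1 / 2) + 2) = ((n : ℝ) + 1)⁻¹ := by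
    field_simp
    ring
  have hright : 1 + 1 / ((n : ℝ) + 1 / 2) = ((n : ℝ) + 1 + 1 / 2) / (n + 1 / 2) := by
    field_simp
    ring
  rw [hleft, hright, Real.log_div (by positivity) (by positivity)] at h
  rw [harmonic_succ]
  push_cast
  linarith

lemma eulerMascheroniConstant_le (n : ℕ) :
    eulerMascheroniConstant ≤ (harmonic n : ℝ) - log (n + 1 / 2) := by
  refine antitone_harmonic_sub_log_add_half.le_of_tendsto ?_ n
  have hlog : Tendsto (fun n : ℕ ↦ log (1 + 1 / 2 / (n : ℝ))) atTop (𝓝 0) := by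
    simpa only [add_zero, Real.log_one] using
      ((tendsto_const_div_atTop_nhds_zero_nat (1 / 2)).const_add 1).log (by norm_num)
  have hlim := Real.tendsto_harmonic_sub_log.sub hlog
  rw [sub_zero] at hlim
  refine hlim.congr' ?_
  filter_upwards [eventually_ge_atTop 1] with n hn
  have : (0 : ℝ) < n := by exact_mod_cast hn
  rw [sub_sub, ← Real.log_mul (by positivity) (by positivity)]
  congr 2
  field_simp

lemma two_mul_hadamardConst_le : 2 * hadamardConst ≤ 0.04624 := by
  have hγ := eulerMascheroniConstant_le 40
  have hH : (harmonic 40 : ℝ) ≤ 4.278544 := by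
    have : harmonic 40 ≤ (4.278544 : ℚ) := by
      simp only [harmonic, Finset.sum_range_succ, Finset.sum_range_zero]
      norm_num
    exact (Rat.cast_le.2 this).trans (by norm_num)
  have hlog : 6.2323075 ≤ log (4 * π) + log ((40 : ℕ) + 1 / 2) := by
    rw [← Real.log_mul (by positivity) (by positivity)]
    have hpi : (512 : ℝ) * 0.994019 ≤ 4 * π * ((40 : ℕ) + 1 / 2) := by
      push_cast
      linarith [Real.pi_gt_d6]
    refine le_trans ?_ (Real.log_le_log (by norm_num) hpi)
    rw [Real.log_mul (by norm_num) (by norm_num), show (512 : ℝ) = 2 ^ 9 by norm_num, Real.log_pow]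
    have := Real.one_sub_inv_le_log_of_pos (show (0 : ℝ) < 0.994019 by norm_num)
    norm_num at this ⊢
    linarith [Real.log_two_gt_d9]
  rw [hadamardConst]
  linarith

lemma twenty_le_im_sq {ρ : ℂ} (hρ : xi ρ = 0) : 20 ≤ ρ.im ^ 2 := by
  have hw : zeroWeight ρ ≤ 0.04624 :=
    (summable_zeroWeight.le_tsum ρ fun _ _ ↦ zeroWeight_nonneg _).trans
      (tsum_zeroWeight_le.trans two_mul_hadamardConst_le)
  rw [zeroWeight, div_le_iff₀ (by positivity)] at hw
  linarith [one_le_xiMult hρ]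

lemma one_add_im_sq_le {ρ : ℂ} (hρ : xi ρ = 0) : 1 + ρ.im ^ 2 ≤ 21 / 20 * ‖ρ‖ ^ 2 := by
  rw [Complex.sq_norm, Complex.normSq_apply]
  nlinarith [twenty_le_im_sq hρ, sq_nonneg ρ.re]

lemma summable_of_norm_le_mul_zeroWeight {E : Type*} [NormedAddCommGroup E] [CompleteSpace E]
    {F : ℂ → E} {C : ℝ} (hF : ∀ ρ, xi ρ = 0 → ‖F ρ‖ ≤ C * zeroWeight ρ)
    (hsupp : ∀ ρ, xi ρ ≠ 0 → F ρ = 0) : Summable F := by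
  refine Summable.of_norm_bounded (summable_zeroWeight.mul_left C) fun ρ ↦ ?_
  by_cases hρ : xi ρ = 0
  · exact hF ρ hρ
  · simp [hsupp ρ hρ, zeroWeight_eq_zero hρ]

lemma norm_xiMult_mul_div_le {s ρ : ℂ} (hs : 1 < s.re) (hρ : xi ρ = 0) :
    ‖(xiMult ρ : ℂ) * (s / (ρ * (s - ρ)))‖ ≤
      (‖s‖ * (1 + ‖s‖ / (s.re - 1)) * (21 / 20)) * zeroWeight ρ := by
  have hs1 : 0 < s.re - 1 := by linarith
  have hdist : s.re - 1 ≤ ‖s - ρ‖ := by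
    have := Complex.re_le_norm (s - ρ)
    rw [Complex.sub_re] at this
    linarith [(re_mem_Ioo_of_xi_eq_zero hρ).2]
  have hdist0 : 0 < ‖s - ρ‖ := by linarith
  have hρ0 : 0 < ‖ρ‖ := norm_pos_iff.2 (ne_zero_of_xi_eq_zero hρ)
  have hnorm : ‖ρ‖ ≤ (1 + ‖s‖ / (s.re - 1)) * ‖s - ρ‖ := by
    have hsρ : ‖s‖ ≤ ‖s‖ / (s.re - 1) * ‖s - ρ‖ := by
      rw [div_mul_eq_mul_div, le_div_iff₀ hs1]
      gcongr
    have := norm_sub_le s (s - ρ)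
    rw [sub_sub_cancel] at this
    linarith
  have hinv : 1 / (‖ρ‖ * ‖s - ρ‖) ≤
      (1 + ‖s‖ / (s.re - 1)) * (21 / 20) / (1 + ρ.im ^ 2) := by
    rw [div_le_div_iff₀ (by positivity) (by positivity)]
    calc 1 * (1 + ρ.im ^ 2) ≤ 21 / 20 * (‖ρ‖ * ‖ρ‖) := by
          rw [one_mul, ← sq]
          exact one_add_im_sq_le hρ
      _ ≤ 21 / 20 * (‖ρ‖ * ((1 + ‖s‖ / (s.re - 1)) * ‖s - ρ‖)) := by gcongr
      _ = _ := by ring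
  rw [norm_mul, norm_div, norm_mul, Complex.norm_real, norm_of_nonneg (xiMult_nonneg ρ), zeroWeight]
  have := xiMult_nonneg ρ
  calc xiMult ρ * (‖s‖ / (‖ρ‖ * ‖s - ρ‖)) = xiMult ρ * ‖s‖ * (1 / (‖ρ‖ * ‖s - ρ‖)) := by ring
    _ ≤ xiMult ρ * ‖s‖ * ((1 + ‖s‖ / (s.re - 1)) * (21 / 20) / (1 + ρ.im ^ 2)) := by gcongr
    _ = _ := by ring

lemma hasSum_logDeriv_xi {s : ℂ} (hs : 1 < s.re) :
    HasSum (fun ρ ↦ (xiMult ρ : ℂ) * (s / (ρ * (s - ρ)))) (logDeriv xi s + hadamardConst) := by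
  have hsupp (ρ) (hρ : xi ρ ≠ 0) : (xiMult ρ : ℂ) * (s / (ρ * (s - ρ))) = 0 := by
    simp [xiMult_eq_zero hρ]
  have hsum := summable_of_norm_le_mul_zeroWeight (fun ρ ↦ norm_xiMult_mul_div_le hs) hsupp
  have hlim := tendsto_sum_zerosInBall_logDeriv_xi_sub (xi_ne_zero_of_one_le_re hs.le)
    xi_zero_ne_zero
  rw [logDeriv_xi_zero, sub_neg_eq_add] at hlim
  rw [← tendsto_nhds_unique
    (tendsto_sum_zerosInBall differentiable_xi xi_zero_ne_zero hsum.hasSum hsupp)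
    (hlim.congr fun N ↦ Finset.sum_congr rfl fun ρ hρ ↦ ?_)]
  · exact hsum.hasSum
  have hρ : xi ρ = 0 := ((mem_zerosInBall differentiable_xi xi_zero_ne_zero).1 hρ).2
  have hρ0 := ne_zero_of_xi_eq_zero hρ
  have hsρ := sub_ne_zero_of_xi_eq_zero hs.le hρ
  field_simp
  ring

lemma hasSum_re_logDeriv_xi {s : ℂ} (hs : 1 < s.re) :
    HasSum (fun ρ ↦ xiMult ρ * ((s.re - ρ.re) / ((s.re - ρ.re) ^ 2 + (s.im - ρ.im) ^ 2)))
      (logDeriv xi s).re := by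
  have h := (Complex.hasSum_re (hasSum_logDeriv_xi hs)).sub hasSum_xiMult_mul_re_one_div
  rw [Complex.add_re, Complex.ofReal_re, add_sub_cancel_right] at h
  refine h.congr_fun fun ρ ↦ ?_
  by_cases hρ : xi ρ = 0
  · have hρ0 := ne_zero_of_xi_eq_zero hρ
    have hsρ := sub_ne_zero_of_xi_eq_zero hs.le hρ
    rw [← re_one_div_sub, Complex.re_ofReal_mul, ← mul_sub, ← Complex.sub_re]
    congr 2
    field_simp
    ring
  · simp [xiMult_eq_zero hρ]

end Zeros

/-! ### The digamma function -/

section Digamma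

open Filter Topology Metric MeasureTheory

lemma tendsto_deriv_of_norm_le {ι : Type*} {l : Filter ι} [l.IsCountablyGenerated]
    {F : ι → ℂ → ℂ} {f : ℂ → ℂ} {z : ℂ} {r K : ℝ} (hr : 0 < r)
    (hF : ∀ᶠ i in l, DifferentiableOn ℂ (F i) (closedBall z r))
    (hf : DifferentiableOn ℂ f (closedBall z r))
    (hK : ∀ᶠ i in l, ∀ w ∈ closedBall z r, ‖F i w‖ ≤ K)
    (hlim : ∀ w ∈ closedBall z r, Tendsto (fun i ↦ F i w) l (𝓝 (f w))) :
    Tendsto (fun i ↦ deriv (F i) z) l (𝓝 (deriv f z)) := by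
  have hmem (θ : ℝ) : circleMap z r θ ∈ closedBall z r := circleMap_mem_closedBall z hr.le θ
  have hI : Tendsto (fun i ↦ ∮ w in C(z, r), (1 / (w - z) ^ 2) • F i w) l
      (𝓝 (∮ w in C(z, r), (1 / (w - z) ^ 2) • f w)) := by
    refine intervalIntegral.tendsto_integral_filter_of_dominated_convergence
      (fun _ ↦ r * (1 / r ^ 2 * K)) ?_ ?_ (by simp)
      (ae_of_all _ fun θ _ ↦ ((hlim _ (hmem θ)).const_smul _).const_smul _)
    · filter_upwards [hF] with i hi
      refine Continuous.aestronglyMeasurable ?_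
      have hFi : Continuous fun θ ↦ F i (circleMap z r θ) :=
        hi.continuousOn.comp_continuous (continuous_circleMap z r) hmem
      have hkernel : Continuous fun θ ↦ 1 / (circleMap z r θ - z) ^ 2 := by
        refine continuous_const.div (by fun_prop) fun θ ↦ pow_ne_zero _ ?_
        rw [circleMap_sub_center]
        exact circleMap_ne_center hr.ne'
      simp only [deriv_circleMap]
      exact ((continuous_circleMap 0 r).mul continuous_const).smul (hkernel.smul hFi)
    · filter_upwards [hK] with i hi
      refine ae_of_all _ fun θ _ ↦ ?_
      rw [deriv_circleMap, norm_smul, norm_smul, norm_mul, Complex.norm_I, norm_div, norm_pow,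
        norm_one, circleMap_sub_center, norm_circleMap_zero, abs_of_pos hr, mul_one]
      gcongr
      exact hi _ (hmem θ)
  rw [hf.deriv_eq_smul_circleIntegral hr] at hI
  have h2pi : (2 * (π : ℂ) * Complex.I) ≠ 0 := Complex.two_pi_I_ne_zero
  have := hI.const_smul ((2 * (π : ℂ) * Complex.I)⁻¹)
  rw [inv_smul_smul₀ h2pi] at this
  refine this.congr' ?_
  filter_upwards [hF] with i hi
  rw [hi.deriv_eq_smul_circleIntegral hr, inv_smul_smul₀ h2pi]

lemma norm_GammaSeq_le {s : ℂ} (hs : 0 < s.re) {n : ℕ} (hn : n ≠ 0) :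
    ‖Complex.GammaSeq s n‖ ≤ Real.Gamma s.re := by
  rw [Complex.GammaSeq_eq_approx_Gamma_integral hs hn, Real.Gamma_eq_integral hs,
    intervalIntegral.integral_of_le (by positivity)]
  have hI := Real.GammaIntegral_convergent hs
  have hle : ‖∫ x in Set.Ioc (0 : ℝ) n, (((1 - x / n) ^ n : ℝ) : ℂ) * (x : ℂ) ^ (s - 1)‖ ≤
      ∫ x in Set.Ioc (0 : ℝ) n, Real.exp (-x) * x ^ (s.re - 1) := by
    refine norm_integral_le_of_norm_le (hI.mono_set Set.Ioc_subset_Ioi_self) ?_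
    refine (ae_restrict_iff' measurableSet_Ioc).2 (ae_of_all _ fun t ht ↦ ?_)
    have hn0 : (0 : ℝ) < n := by exact_mod_cast Nat.pos_of_ne_zero hn
    have ht1 : 0 ≤ 1 - t / n := by
      rw [sub_nonneg, div_le_one hn0]
      exact ht.2
    rw [norm_mul, Complex.norm_cpow_eq_rpow_re_of_pos ht.1, Complex.norm_real,
      Real.norm_of_nonneg (by positivity), Complex.sub_re, Complex.one_re]
    exact mul_le_mul_of_nonneg_right (Real.one_sub_div_pow_le_exp_neg ht.2)
      (Real.rpow_nonneg ht.1.le _)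
  refine hle.trans (setIntegral_mono_set hI ?_ Set.Ioc_subset_Ioi_self.eventuallyLE)
  refine (ae_restrict_iff' measurableSet_Ioi).2 (ae_of_all _ fun t ht ↦ ?_)
  have : (0 : ℝ) < t := ht
  simp only [Pi.zero_apply]
  positivity

lemma add_natCast_ne_zero {z : ℂ} (hz : 0 < z.re) (k : ℕ) : z + k ≠ 0 := by
  intro h
  have := congrArg Complex.re h
  simp only [Complex.add_re, Complex.natCast_re, Complex.zero_re] at this
  linarith [k.cast_nonneg (α := ℝ)]

lemma differentiableAt_GammaSeq {z : ℂ} (hz : 0 < z.re) {n : ℕ} (hn : n ≠ 0) :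
    DifferentiableAt ℂ (fun w ↦ Complex.GammaSeq w n) z := by
  unfold Complex.GammaSeq
  refine DifferentiableAt.fun_div (.mul_const (.const_cpow (by fun_prop) (.inl (by simpa))) _)
    (by fun_prop) (Finset.prod_ne_zero_iff.2 fun k _ ↦ add_natCast_ne_zero hz k)

lemma logDeriv_GammaSeq {z : ℂ} (hz : 0 < z.re) {n : ℕ} (hn : n ≠ 0) :
    logDeriv (fun w ↦ Complex.GammaSeq w n) z = log n - ∑ k ∈ range (n + 1), 1 / (z + k) := by
  unfold Complex.GammaSeq
  have hn0 : (n : ℂ) ≠ 0 := by exact_mod_cast hn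
  have hfac : (n.factorial : ℂ) ≠ 0 := by exact_mod_cast n.factorial_ne_zero
  have hpow : HasDerivAt (fun w : ℂ ↦ (n : ℂ) ^ w) ((n : ℂ) ^ z * Complex.log n * 1) z :=
    (hasDerivAt_id z).const_cpow (.inl hn0)
  have hpow0 : (n : ℂ) ^ z ≠ 0 := by simp [Complex.cpow_eq_zero_iff, hn0]
  rw [logDeriv_div (f := fun w : ℂ ↦ (n : ℂ) ^ w * n.factorial)
    (g := fun w : ℂ ↦ ∏ j ∈ range (n + 1), (w + j)) z (mul_ne_zero hpow0 hfac)
    (Finset.prod_ne_zero_iff.2 fun k _ ↦ add_natCast_ne_zero hz k)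
    (hpow.differentiableAt.mul_const _) (by fun_prop), logDeriv_mul_const z _ hfac,
    logDeriv_prod (fun k _ ↦ add_natCast_ne_zero hz k) (by fun_prop), logDeriv_apply,
    hpow.deriv, mul_one, mul_div_cancel_left₀ _ hpow0, Complex.natCast_log]
  congr 1
  refine Finset.sum_congr rfl fun k _ ↦ ?_
  rw [logDeriv_apply, deriv_add_const, deriv_id'']

lemma half_re_le_re_of_mem_closedBall {z w : ℂ} (hw : w ∈ closedBall z (z.re / 2)) :
    z.re / 2 ≤ w.re := by
  rw [mem_closedBall, dist_eq_norm] at hw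
  have := (Complex.abs_re_le_norm (w - z)).trans hw
  rw [abs_le, Complex.sub_re] at this
  linarith [this.1]

lemma tendsto_deriv_GammaSeq {z : ℂ} (hz : 0 < z.re) :
    Tendsto (fun n : ℕ ↦ deriv (fun w ↦ Complex.GammaSeq w n) z) atTop
      (𝓝 (deriv Complex.Gamma z)) := by
  have hpos {w} (hw : w ∈ closedBall z (z.re / 2)) : 0 < w.re := by
    linarith [half_re_le_re_of_mem_closedBall hw]
  have hcont : ContinuousOn (fun w : ℂ ↦ Real.Gamma w.re) (closedBall z (z.re / 2)) :=
    fun w hw ↦ (ContinuousAt.comp (f := Complex.re)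
      (Real.differentiableAt_Gamma fun m h ↦ by
        linarith [hpos hw, m.cast_nonneg (α := ℝ)]).continuousAt
      Complex.continuous_re.continuousAt).continuousWithinAt
  obtain ⟨K, hK⟩ := ((isCompact_closedBall z (z.re / 2)).image_of_continuousOn hcont).bddAbove
  refine tendsto_deriv_of_norm_le (half_pos hz) (K := K) ?_ (fun w hw ↦ ?_) ?_
    fun w _ ↦ Complex.GammaSeq_tendsto_Gamma w
  · filter_upwards [eventually_ne_atTop 0] with n hn w hw
    exact (differentiableAt_GammaSeq (hpos hw) hn).differentiableWithinAt
  · refine (Complex.differentiableAt_Gamma w fun m h ↦ ?_).differentiableWithinAt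
    exact add_natCast_ne_zero (hpos hw) m (by rw [h, neg_add_cancel])
  · filter_upwards [eventually_ne_atTop 0] with n hn w hw
    exact (norm_GammaSeq_le (hpos hw) hn).trans (hK ⟨w, hw, rfl⟩)

lemma tendsto_log_sub_sum_digamma {z : ℂ} (hz : 0 < z.re) :
    Tendsto (fun n : ℕ ↦ (log n : ℂ) - ∑ k ∈ range (n + 1), 1 / (z + k)) atTop
      (𝓝 (Complex.digamma z)) := by
  refine ((tendsto_deriv_GammaSeq hz).div (Complex.GammaSeq_tendsto_Gamma z)
    (Complex.Gamma_ne_zero_of_re_pos hz)).congr' ?_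
  filter_upwards [eventually_ne_atTop 0] with n hn
  exact logDeriv_GammaSeq hz hn

lemma summable_one_div_sub_one_div_add {z : ℂ} (hz : 0 < z.re) :
    Summable fun k : ℕ ↦ 1 / ((k : ℂ) + 1) - 1 / (z + k) := by
  set c := min z.re 1
  have hc : 0 < c := lt_min hz one_pos
  have hsq : Summable fun k : ℕ ↦ ‖z - 1‖ * c⁻¹ * (1 / ((k : ℝ) + 1) ^ 2) := by
    refine Summable.mul_left _ ?_
    simpa using (summable_nat_add_iff 1).2 (Real.summable_one_div_nat_pow.2 one_lt_two)
  refine hsq.of_norm_bounded fun k ↦ ?_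
  have hk : (k : ℂ) + 1 ≠ 0 := by exact_mod_cast k.succ_ne_zero
  have hzk := add_natCast_ne_zero hz k
  have hdiff : 1 / ((k : ℂ) + 1) - 1 / (z + k) = (z - 1) / (((k : ℂ) + 1) * (z + k)) := by
    field_simp
    ring
  have hnorm : ‖(k : ℂ) + 1‖ = k + 1 := by exact_mod_cast Complex.norm_natCast (k + 1)
  have hlower : c * (k + 1) ≤ ‖z + k‖ := by
    have := Complex.re_le_norm (z + k)
    rw [Complex.add_re, Complex.natCast_re] at this
    nlinarith [min_le_left z.re 1, min_le_right z.re 1, k.cast_nonneg (α := ℝ)]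
  rw [hdiff, norm_div, norm_mul, hnorm]
  calc _ ≤ ‖z - 1‖ / (((k : ℝ) + 1) * (c * (k + 1))) := by gcongr
    _ = _ := by field_simp

lemma tendsto_harmonic_succ_sub_log :
    Tendsto (fun n : ℕ ↦ (harmonic (n + 1) : ℝ) - log n) atTop (𝓝 eulerMascheroniConstant) := by
  have := Real.tendsto_harmonic_sub_log.add (tendsto_one_div_add_atTop_nhds_zero_nat (𝕜 := ℝ))
  rw [add_zero] at this
  refine this.congr fun n ↦ ?_
  rw [harmonic_succ]
  push_cast
  ring

lemma hasSum_digamma {z : ℂ} (hz : 0 < z.re) :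
    HasSum (fun k : ℕ ↦ 1 / ((k : ℂ) + 1) - 1 / (z + k))
      (Complex.digamma z + eulerMascheroniConstant) := by
  have hsum := summable_one_div_sub_one_div_add hz
  have hlim := (tendsto_log_sub_sum_digamma hz).add
    ((Complex.continuous_ofReal.tendsto _).comp tendsto_harmonic_succ_sub_log)
  rw [← tendsto_nhds_unique (hsum.hasSum.tendsto_sum_nat.comp (tendsto_add_atTop_nat 1))
    (hlim.congr fun n ↦ ?_)]
  · exact hsum.hasSum
  simp only [Function.comp, Finset.sum_sub_distrib, harmonic]
  push_cast
  simp only [one_div]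
  ring

lemma log_norm_one_add_le {w : ℂ} (hw : 1 + w ≠ 0) : log ‖1 + w‖ ≤ w.re + ‖w‖ ^ 2 / 2 := by
  have : 0 < ‖1 + w‖ := norm_pos_iff.2 hw
  have hlog := Real.log_le_sub_one_of_pos (show 0 < ‖1 + w‖ ^ 2 by positivity)
  have hsq : ‖1 + w‖ ^ 2 = 1 + 2 * w.re + ‖w‖ ^ 2 := by
    rw [Complex.sq_norm, Complex.sq_norm, Complex.normSq_add]
    simp
    ring
  rw [Real.log_pow] at hlog
  push_cast at hlog
  linarith

lemma half_norm_one_div_sq_le {z : ℂ} (hz : 1 / 2 < z.re) :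
    ‖1 / z‖ ^ 2 / 2 ≤ 1 / (z.re + |z.im| - 1 / 2) - 1 / (z.re + 1 + |z.im| - 1 / 2) := by
  rw [norm_div, norm_one, div_pow, one_pow, Complex.sq_norm, Complex.normSq_apply,
    ← abs_mul_abs_self z.im]
  have hy := abs_nonneg z.im
  set x := z.re
  set y := |z.im|
  have hneg : x + y - 1 / 2 ≠ 0 := by linarith
  have hpos : x + 1 + y - 1 / 2 ≠ 0 := by linarith
  have hdiff : 1 / (x + y - 1 / 2) - 1 / (x + 1 + y - 1 / 2) = 1 / ((x + y) ^ 2 - 1 / 4) := by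
    rw [div_sub_div _ _ hneg hpos, div_eq_div_iff (mul_ne_zero hneg hpos) (by nlinarith)]
    ring
  rw [hdiff, div_div]
  refine one_div_le_one_div_of_le ?_ ?_ <;> nlinarith [sq_nonneg (x - y)]

lemma log_norm_add_one_le {z : ℂ} (hz : 1 / 2 < z.re) :
    log ‖z + 1‖ + 1 / (z.re + 1 + |z.im| - 1 / 2) ≤
      log ‖z‖ + 1 / (z.re + |z.im| - 1 / 2) + (1 / z).re := by
  have hz0 : z ≠ 0 := by simpa using add_natCast_ne_zero (by linarith : 0 < z.re) 0
  have hz1 : z + 1 ≠ 0 := by simpa using add_natCast_ne_zero (by linarith : 0 < z.re) 1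
  have hquot : 1 + 1 / z = (z + 1) / z := by field_simp
  have hlog := log_norm_one_add_le (w := 1 / z) (by rw [hquot]; exact div_ne_zero hz1 hz0)
  rw [hquot, norm_div, Real.log_div (norm_ne_zero_iff.2 hz1) (norm_ne_zero_iff.2 hz0)] at hlog
  linarith [half_norm_one_div_sq_le hz]

lemma log_norm_add_natCast_le {z : ℂ} (hz : 1 / 2 < z.re) (n : ℕ) :
    log ‖z + n‖ + 1 / (z.re + n + |z.im| - 1 / 2) ≤
      log ‖z‖ + 1 / (z.re + |z.im| - 1 / 2) + ∑ k ∈ range n, (1 / (z + k)).re := by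
  induction n with
  | zero => simp
  | succ n ih =>
    have hstep := log_norm_add_one_le (z := z + n) <| by
      rw [Complex.add_re, Complex.natCast_re]
      linarith [n.cast_nonneg (α := ℝ)]
    simp only [Complex.add_re, Complex.natCast_re, Complex.add_im, Complex.natCast_im,
      add_zero] at hstep
    rw [Finset.sum_range_succ]
    push_cast
    simp only [← add_assoc]
    linarith

lemma re_digamma_le {z : ℂ} (hz : 1 / 2 < z.re) :
    (Complex.digamma z).re ≤ log ‖z‖ + 1 / (z.re + |z.im| - 1 / 2) := by
  refine le_of_tendsto ((Complex.continuous_re.tendsto _).comp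
    (tendsto_log_sub_sum_digamma (by linarith : 0 < z.re))) ?_
  filter_upwards [eventually_ge_atTop 1] with n hn
  have hn0 : (0 : ℝ) < n := by exact_mod_cast hn
  have hsum := log_norm_add_natCast_le hz (n + 1)
  have hrest : 0 ≤ 1 / (z.re + (n + 1 : ℕ) + |z.im| - 1 / 2) := by
    refine one_div_nonneg.2 ?_
    push_cast
    linarith [abs_nonneg z.im]
  have hlog : log n ≤ log ‖z + (n + 1 : ℕ)‖ := by
    refine Real.log_le_log hn0 (le_trans ?_ (Complex.re_le_norm _))
    rw [Complex.add_re, Complex.natCast_re]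
    push_cast
    linarith
  simp only [Function.comp, Complex.sub_re, Complex.ofReal_re, Complex.re_sum]
  linarith

end Digamma

/-! ### A zero-free region -/

section ZeroFreeRegion

open Topology
open scoped ArithmeticFunction LSeries.notation
open ArithmeticFunction (vonMangoldt_nonneg LSeriesSummable_vonMangoldt
  LSeries_vonMangoldt_eq_deriv_riemannZeta_div)

lemma half_ne_neg_natCast {s : ℂ} (hs : 0 < s.re) (m : ℕ) : s / 2 ≠ -m := by
  rw [ne_eq, eq_neg_iff_add_eq_zero]
  exact add_natCast_ne_zero (by simpa) m

lemma hasDerivAt_pi_cpow (s : ℂ) :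
    HasDerivAt (fun w : ℂ ↦ (π : ℂ) ^ (-w / 2)) ((π : ℂ) ^ (-s / 2) * log π * (-1 / 2)) s := by
  have h : HasDerivAt (fun w : ℂ ↦ -w / 2) (-1 / 2) s := (hasDerivAt_id s).neg.div_const 2
  rw [Complex.ofReal_log pi_pos.le]
  exact h.const_cpow (.inl (by exact_mod_cast pi_ne_zero))

lemma hasDerivAt_Gamma_half {s : ℂ} (hs : 0 < s.re) :
    HasDerivAt (fun w : ℂ ↦ Complex.Gamma (w / 2)) (deriv Complex.Gamma (s / 2) * (1 / 2)) s :=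
  (Complex.differentiableAt_Gamma _ (half_ne_neg_natCast hs)).hasDerivAt.comp s
    ((hasDerivAt_id s).div_const 2)

lemma differentiableAt_Gammaℝ {s : ℂ} (hs : 0 < s.re) : DifferentiableAt ℂ Complex.Gammaℝ s :=
  (hasDerivAt_pi_cpow s).differentiableAt.mul (hasDerivAt_Gamma_half hs).differentiableAt

lemma logDeriv_Gammaℝ {s : ℂ} (hs : 0 < s.re) :
    logDeriv Complex.Gammaℝ s = Complex.digamma (s / 2) / 2 - log π / 2 := by
  have hpow : (π : ℂ) ^ (-s / 2) ≠ 0 := by simp [Complex.cpow_eq_zero_iff, pi_ne_zero]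
  have hGamma : Complex.Gamma (s / 2) ≠ 0 := Complex.Gamma_ne_zero (half_ne_neg_natCast hs)
  have hfun : Complex.Gammaℝ = fun w ↦ (π : ℂ) ^ (-w / 2) * Complex.Gamma (w / 2) := rfl
  rw [hfun, logDeriv_mul (f := fun w : ℂ ↦ (π : ℂ) ^ (-w / 2)) s hpow hGamma
    (hasDerivAt_pi_cpow s).differentiableAt (hasDerivAt_Gamma_half hs).differentiableAt,
    Complex.digamma_def, logDeriv_apply, logDeriv_apply, logDeriv_apply,
    (hasDerivAt_pi_cpow s).deriv, (hasDerivAt_Gamma_half hs).deriv]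
  field_simp
  ring

lemma logDeriv_xi_eq {s : ℂ} (hs : 1 < s.re) :
    logDeriv xi s = 1 / s + 1 / (s - 1) + logDeriv Complex.Gammaℝ s + logDeriv riemannZeta s := by
  have hs0 : s ≠ 0 := fun h ↦ by norm_num [h] at hs
  have hs1 : s ≠ 1 := fun h ↦ by norm_num [h] at hs
  have hsub : s - 1 ≠ 0 := sub_ne_zero.2 hs1
  have hGamma : s.Gammaℝ ≠ 0 := Complex.Gammaℝ_ne_zero_of_re_pos (by linarith)
  have hzeta : riemannZeta s ≠ 0 := riemannZeta_ne_zero_of_one_le_re hs.le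
  have hdGamma : DifferentiableAt ℂ Complex.Gammaℝ s := differentiableAt_Gammaℝ (by linarith)
  have hdzeta := differentiableAt_riemannZeta hs1
  have hxi : xi =ᶠ[𝓝 s] fun w ↦ (w * (w - 1)) * (w.Gammaℝ * riemannZeta w) := by
    filter_upwards [(isOpen_lt continuous_const Complex.continuous_re).mem_nhds hs] with w hw
    exact xi_eq_of_one_lt_re hw
  rw [(logDeriv_congr_nhds hxi).self_of_nhds, logDeriv_mul (f := fun w : ℂ ↦ w * (w - 1))
    (g := fun w : ℂ ↦ w.Gammaℝ * riemannZeta w) s (mul_ne_zero hs0 hsub)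
    (mul_ne_zero hGamma hzeta) (by fun_prop) (hdGamma.mul hdzeta),
    logDeriv_mul s hGamma hzeta hdGamma hdzeta, logDeriv_mul (f := fun w : ℂ ↦ w)
    (g := fun w : ℂ ↦ w - 1) s hs0 hsub (by fun_prop) (by fun_prop), logDeriv_id',
    logDeriv_apply (fun w : ℂ ↦ w - 1), deriv_sub_const, deriv_id'']
  ring

lemma LSeries_vonMangoldt_eq_sub_logDeriv_xi {s : ℂ} (hs : 1 < s.re) :
    L ↗Λ s =
      1 / (s - 1) - log π / 2 + Complex.digamma (s / 2 + 1) / 2 - logDeriv xi s := by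
  have hs0 : s ≠ 0 := fun h ↦ by norm_num [h] at hs
  rw [LSeries_vonMangoldt_eq_deriv_riemannZeta_div hs, logDeriv_xi_eq hs,
    logDeriv_Gammaℝ (by linarith), Complex.digamma_apply_add_one _
    (half_ne_neg_natCast (by linarith)), logDeriv_apply riemannZeta]
  field_simp
  ring

lemma re_term_vonMangoldt (σ t : ℝ) (n : ℕ) :
    (LSeries.term ↗Λ (σ + t * Complex.I) n).re =
      Λ n * (n : ℝ) ^ (-σ) * cos (t * log n) := by
  rcases eq_or_ne n 0 with rfl | hn
  · simp
  have hn0 : (0 : ℝ) < n := by exact_mod_cast hn.bot_lt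
  have hnC : (n : ℂ) ≠ 0 := by exact_mod_cast hn
  have hexp : (Complex.log n * -(σ + t * Complex.I)) =
      ((log n * -σ : ℝ) : ℂ) + ((-(t * log n) : ℝ) : ℂ) * Complex.I := by
    rw [← Complex.natCast_log]
    push_cast
    ring
  rw [LSeries.term_of_ne_zero hn, div_eq_mul_inv, ← Complex.cpow_neg,
    Complex.cpow_def_of_ne_zero hnC, hexp, Complex.re_ofReal_mul, Complex.exp_add,
    ← Complex.ofReal_exp, Complex.re_ofReal_mul, Complex.exp_ofReal_mul_I_re, cos_neg,
    rpow_def_of_pos hn0, mul_assoc]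

lemma hasSum_re_LSeries_vonMangoldt {σ : ℝ} (hσ : 1 < σ) (t : ℝ) :
    HasSum (fun n : ℕ ↦ Λ n * (n : ℝ) ^ (-σ) * cos (t * log n))
      (L ↗Λ (σ + t * Complex.I)).re := by
  have h := Complex.hasSum_re
    (LSeriesSummable_vonMangoldt (s := σ + t * Complex.I) (by simpa)).hasSum
  simp only [re_term_vonMangoldt] at h
  exact h

lemma re_LSeries_vonMangoldt_nonneg {σ : ℝ} (hσ : 1 < σ) : 0 ≤ (L ↗Λ σ).re := by
  have h := hasSum_re_LSeries_vonMangoldt hσ 0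
  simp only [Complex.ofReal_zero, zero_mul, add_zero, cos_zero, mul_one] at h
  exact h.nonneg fun n ↦ mul_nonneg vonMangoldt_nonneg (by positivity)

lemma three_four_one_re_LSeries_vonMangoldt_nonneg {σ : ℝ} (hσ : 1 < σ) (t : ℝ) :
    0 ≤ 3 * (L ↗Λ σ).re + 4 * (L ↗Λ (σ + t * Complex.I)).re +
      (L ↗Λ (σ + (2 * t : ℝ) * Complex.I)).re := by
  have h0 := hasSum_re_LSeries_vonMangoldt hσ 0
  simp only [Complex.ofReal_zero, zero_mul, add_zero, cos_zero, mul_one] at h0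
  refine (((h0.mul_left 3).add ((hasSum_re_LSeries_vonMangoldt hσ t).mul_left 4)).add
    (hasSum_re_LSeries_vonMangoldt hσ (2 * t))).nonneg fun n ↦ ?_
  have ha : 0 ≤ Λ n * (n : ℝ) ^ (-σ) := mul_nonneg vonMangoldt_nonneg (by positivity)
  rw [mul_assoc 2 t, cos_two_mul]
  linarith [mul_nonneg ha (sq_nonneg (1 + cos (t * log n)))]

lemma xiMult_mul_div_nonneg {s : ℂ} (hs : 1 < s.re) (ρ : ℂ) :
    0 ≤ xiMult ρ * ((s.re - ρ.re) / ((s.re - ρ.re) ^ 2 + (s.im - ρ.im) ^ 2)) := by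
  by_cases hρ : xi ρ = 0
  · have hlt := (re_mem_Ioo_of_xi_eq_zero hρ).2
    exact mul_nonneg (xiMult_nonneg ρ) (div_nonneg (by linarith) (by positivity))
  · simp [xiMult_eq_zero hρ]

lemma re_logDeriv_xi_nonneg {s : ℂ} (hs : 1 < s.re) : 0 ≤ (logDeriv xi s).re :=
  (hasSum_re_logDeriv_xi hs).nonneg (xiMult_mul_div_nonneg hs)

lemma one_div_sub_re_le_re_logDeriv_xi {σ : ℝ} (hσ : 1 < σ) {ρ : ℂ} (hρ : xi ρ = 0) :
    1 / (σ - ρ.re) ≤ (logDeriv xi (σ + ρ.im * Complex.I)).re := by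
  have hs : 1 < (σ + ρ.im * Complex.I).re := by simpa
  have hpos : 0 < σ - ρ.re := by linarith [(re_mem_Ioo_of_xi_eq_zero hρ).2]
  have hle := le_hasSum (hasSum_re_logDeriv_xi hs) ρ fun w _ ↦ xiMult_mul_div_nonneg hs w
  have hterm : (σ - ρ.re) / ((σ - ρ.re) ^ 2 + (ρ.im - ρ.im) ^ 2) = 1 / (σ - ρ.re) := by
    rw [sub_self]
    field_simp
    ring
  simp only [Complex.add_re, Complex.ofReal_re, Complex.re_ofReal_mul, Complex.I_re, mul_zero,
    add_zero, Complex.add_im, Complex.ofReal_im, Complex.im_ofReal_mul, Complex.I_im, mul_one,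
    zero_add, hterm] at hle
  exact (le_mul_of_one_le_left (by positivity) (one_le_xiMult hρ)).trans hle

lemma re_hasSum_digamma_term (x : ℝ) (k : ℕ) :
    (1 / ((k : ℂ) + 1) - 1 / ((x : ℂ) + k)).re = 1 / ((k : ℝ) + 1) - 1 / (x + k) := by
  rw [← Complex.ofReal_re (1 / ((k : ℝ) + 1) - 1 / (x + k))]
  push_cast
  rfl

lemma re_digamma_mono {x y : ℝ} (hx : 0 < x) (hxy : x ≤ y) :
    (Complex.digamma x).re ≤ (Complex.digamma y).re := by
  have hle := hasSum_le (fun k ↦ ?_) (Complex.hasSum_re (hasSum_digamma (z := x) (by simpa)))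
    (Complex.hasSum_re (hasSum_digamma (z := y) (by simpa using hx.trans_le hxy)))
  · simpa using hle
  · rw [re_hasSum_digamma_term, re_hasSum_digamma_term]
    gcongr

lemma re_digamma_two_le : (Complex.digamma (2 : ℝ)).re ≤ 1 / 2 := by
  have h := Complex.digamma_apply_add_one 1 fun m ↦ by
    rw [ne_eq, eq_neg_iff_add_eq_zero]
    exact add_natCast_ne_zero (by simp) m
  rw [Complex.digamma_one] at h
  rw [Complex.ofReal_ofNat, ← one_add_one_eq_two, h]
  simp only [inv_one, Complex.add_re, Complex.neg_re, Complex.ofReal_re, Complex.one_re]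
  linarith [one_half_lt_eulerMascheroniConstant]

lemma re_LSeries_vonMangoldt_eq {s : ℂ} (hs : 1 < s.re) :
    (L ↗Λ s).re = (1 / (s - 1)).re - log π / 2 +
      (Complex.digamma (s / 2 + 1)).re / 2 - (logDeriv xi s).re := by
  rw [LSeries_vonMangoldt_eq_sub_logDeriv_xi hs]
  simp

lemma re_LSeries_vonMangoldt_ofReal_le {σ : ℝ} (hσ : 1 < σ) (hσ2 : σ ≤ 2) :
    (L ↗Λ σ).re ≤ 1 / (σ - 1) - log π / 2 + 1 / 4 := by
  have hxi := re_logDeriv_xi_nonneg (s := σ) (by simpa)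
  have hdigamma := (re_digamma_mono (x := σ / 2 + 1) (by linarith)
    (by linarith)).trans re_digamma_two_le
  have hpole : (1 / ((σ : ℂ) - 1)).re = 1 / (σ - 1) := by
    exact_mod_cast Complex.ofReal_re (1 / (σ - 1))
  rw [re_LSeries_vonMangoldt_eq (by simpa), hpole]
  push_cast at hdigamma
  linarith

lemma re_LSeries_vonMangoldt_le {σ : ℝ} (hσ : 1 < σ) (hσ2 : σ ≤ 2) (t : ℝ) :
    (L ↗Λ (σ + t * Complex.I)).re ≤ (σ - 1) / ((σ - 1) ^ 2 + t ^ 2) - log π / 2 +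
      (log (4 + (t / 2) ^ 2) / 2 + 2 / (2 + |t|)) / 2 -
      (logDeriv xi (σ + t * Complex.I)).re := by
  set z : ℂ := (σ + t * Complex.I) / 2 + 1
  have hre : z.re = σ / 2 + 1 := by simp [z]
  have him : z.im = t / 2 := by simp [z]
  have hlog : log ‖z‖ ≤ log (4 + (t / 2) ^ 2) / 2 := by
    rw [Complex.norm_def, Complex.normSq_apply, hre, him, ← sq, ← sq, log_sqrt (by positivity)]
    gcongr
    nlinarith
  have herr : 1 / (σ / 2 + 1 + |t / 2| - 1 / 2) ≤ 2 / (2 + |t|) := by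
    have := abs_nonneg t
    rw [abs_div, abs_two, div_le_div_iff₀ (by linarith) (by linarith)]
    linarith
  have hdigamma := re_digamma_le (z := z) (by rw [hre]; linarith)
  rw [hre, him] at hdigamma
  have hpole : (1 / ((σ + t * Complex.I : ℂ) - 1)).re = (σ - 1) / ((σ - 1) ^ 2 + t ^ 2) := by
    rw [re_one_div_sub]
    simp
  rw [re_LSeries_vonMangoldt_eq (by simpa), hpole]
  linarith

lemma four_div_le_of_xi_eq_zero {ρ : ℂ} (hρ : xi ρ = 0) {ε : ℝ} (hε : 0 < ε) (hε1 : ε ≤ 1) :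
    4 / (ε + (1 - ρ.re)) ≤ 3 / ε + 3 / 4 - 4 * log π - 2 * log 2 + 5 * (ε / ρ.im ^ 2) +
      5 / 4 * log (16 + ρ.im ^ 2) + 5 / (2 + |ρ.im|) := by
  set γ := ρ.im
  have hγ : 0 < γ ^ 2 := by linarith [twenty_le_im_sq hρ]
  have hσ : 1 < 1 + ε := by linarith
  have h341 := three_four_one_re_LSeries_vonMangoldt_nonneg hσ γ
  have hreal := re_LSeries_vonMangoldt_ofReal_le hσ (by linarith)
  have hγ1 := re_LSeries_vonMangoldt_le hσ (by linarith) γ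
  have hγ2 := re_LSeries_vonMangoldt_le hσ (by linarith) (2 * γ)
  have hxi1 := one_div_sub_re_le_re_logDeriv_xi hσ hρ
  have hxi2 := re_logDeriv_xi_nonneg (s := (1 + ε : ℝ) + (2 * γ : ℝ) * Complex.I)
    (by simpa using hε)
  have hpole1 : ε / (ε ^ 2 + γ ^ 2) ≤ ε / γ ^ 2 := by
    gcongr
    linarith [sq_nonneg ε]
  have hpole2 : ε / (ε ^ 2 + (2 * γ) ^ 2) ≤ ε / γ ^ 2 := by
    gcongr
    nlinarith [sq_nonneg ε]
  have hlog1 : log (4 + (γ / 2) ^ 2) = log (16 + γ ^ 2) - 2 * log 2 := by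
    rw [show 4 + (γ / 2) ^ 2 = (16 + γ ^ 2) / 2 ^ 2 by ring,
      log_div (by positivity) (by norm_num), log_pow]
    norm_num
  have hlog2 : log (4 + (2 * γ / 2) ^ 2) ≤ log (16 + γ ^ 2) :=
    log_le_log (by positivity) (by linarith)
  have herr : 2 / (2 + |2 * γ|) ≤ 2 / (2 + |γ|) := by
    rw [abs_mul, abs_two]
    gcongr
    linarith [abs_nonneg γ]
  have hsub : 1 + ε - ρ.re = ε + (1 - ρ.re) := by ring
  simp only [hsub, add_sub_cancel_left, hlog1] at hxi1 hreal hγ1 hγ2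
  rw [div_eq_mul_one_div 4, div_eq_mul_one_div 3 ε, div_eq_mul_one_div 5 (2 + |γ|)]
  rw [div_eq_mul_one_div 2 (2 + |γ|)] at herr hγ1
  linarith

lemma le_log_pi : 1.143 ≤ log π := by
  have hpow : (2 : ℝ) ^ 33 ≤ π ^ 20 := calc
    (2 : ℝ) ^ 33 ≤ 3.14 ^ 20 := by norm_num
    _ ≤ π ^ 20 := by
      gcongr
      exact pi_gt_d2.le
  have h := log_le_log (by positivity) hpow
  rw [log_pow, log_pow] at h
  norm_num at h
  linarith [log_two_gt_d9]

lemma exp_five_lt : exp 5 < 149 := by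
  have h : exp 5 = exp 1 ^ 5 := by
    rw [← exp_nat_mul]
    norm_num
  calc exp 5 = exp 1 ^ 5 := h
    _ < 2.7183 ^ 5 := by
      gcongr
      linarith [exp_one_lt_d9]
    _ < 149 := by norm_num

lemma zeroFree_error_le_of_abs_le_hundred {T γ ε : ℝ} (hT : 300 ≤ T) (hγ : 20 ≤ γ ^ 2)
    (hγ100 : |γ| ≤ 100) (hε1 : ε ≤ 0.1) :
    3 / 4 - 4 * log π - 2 * log 2 + 5 * (ε / γ ^ 2) + 5 / 4 * log (16 + γ ^ 2) +
      5 / (2 + |γ|) ≤ 2.5 * (log T - 2) := by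
  have hlog : log (16 + γ ^ 2) ≤ 2 * log T - 3 * log 2 := calc
    log (16 + γ ^ 2) ≤ log (T ^ 2 / 2 ^ 3) := by
      have : γ ^ 2 ≤ 100 ^ 2 := sq_le_sq.2 (by simpa)
      exact log_le_log (by positivity) (by nlinarith)
    _ = 2 * log T - 3 * log 2 := by
      rw [log_div (by positivity) (by norm_num), log_pow, log_pow]
      norm_num
  have hpole : ε / γ ^ 2 ≤ 0.1 / 20 := by gcongr
  have hγ4 : (4 : ℝ) ≤ |γ| := by
    simpa using sq_le_sq.1 (show (4 : ℝ) ^ 2 ≤ γ ^ 2 by linarith)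
  have herr : 5 / (2 + |γ|) ≤ 5 / (2 + 4) := by gcongr
  linarith [log_two_gt_d9, le_log_pi]

lemma zeroFree_error_le_of_hundred_le_abs {T γ ε : ℝ} (hT : 300 ≤ T) (hγT : |γ| ≤ T)
    (hγ100 : 100 ≤ |γ|) (hε1 : ε ≤ 0.1) :
    3 / 4 - 4 * log π - 2 * log 2 + 5 * (ε / γ ^ 2) + 5 / 4 * log (16 + γ ^ 2) +
      5 / (2 + |γ|) ≤ 2.5 * (log T - 2) := by
  have hlog : log (16 + γ ^ 2) ≤ 2 * log T + 0.01 := calc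
    log (16 + γ ^ 2) ≤ log (T ^ 2 * 1.01) := by
      have : γ ^ 2 ≤ T ^ 2 := sq_le_sq.2 (hγT.trans (le_abs_self T))
      exact log_le_log (by positivity) (by nlinarith)
    _ = 2 * log T + log 1.01 := by
      rw [log_mul (by positivity) (by norm_num), log_pow]
      norm_num
    _ ≤ 2 * log T + 0.01 := by
      linarith [log_le_sub_one_of_pos (show (0 : ℝ) < 1.01 by norm_num)]
  have hγ2 : (100 : ℝ) ^ 2 ≤ γ ^ 2 := sq_le_sq.2 (by simpa)
  have hpole : ε / γ ^ 2 ≤ 0.1 / 100 ^ 2 := by gcongr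
  have herr : 5 / (2 + |γ|) ≤ 5 / (2 + 100) := by gcongr
  linarith [log_two_gt_d9, le_log_pi]

lemma four_div_le_of_abs_im_le {T : ℝ} (hT : 300 ≤ T) {ρ : ℂ} (hρ : xi ρ = 0) (him : |ρ.im| ≤ T)
    {ε : ℝ} (hε : 0 < ε) (hε1 : ε ≤ 0.1) :
    4 / (ε + (1 - ρ.re)) ≤ 3 / ε + 2.5 * (log T - 2) := by
  have hmain := four_div_le_of_xi_eq_zero hρ hε (by linarith)
  rcases le_total |ρ.im| 100 with h | h
  · linarith [zeroFree_error_le_of_abs_le_hundred hT (twenty_le_im_sq hρ) h hε1]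
  · linarith [zeroFree_error_le_of_hundred_le_abs hT him h hε1]

lemma le_one_sub_re_of_xi_eq_zero {T : ℝ} (hT : 300 ≤ T) {ρ : ℂ} (hρ : xi ρ = 0)
    (him : |ρ.im| ≤ T) :
    0.0717 / (2.5 * (log T - 2)) ≤ 1 - ρ.re := by
  have hlogT : 5 ≤ log T := by
    rw [le_log_iff_exp_le (by linarith)]
    linarith [exp_five_lt]
  set K := 2.5 * (log T - 2)
  have hK : 7.5 ≤ K := by
    simp only [K]
    linarith
  have hη : 0 < 1 - ρ.re := by linarith [(re_mem_Ioo_of_xi_eq_zero hρ).2]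
  -- `ε K = 2 √3 - 3 ≈ 0.464` maximises the resulting lower bound `4 ε / (3 + ε K) - ε`.
  have hmain := four_div_le_of_abs_im_le hT hρ him (ε := 0.464 / K) (by positivity)
    ((div_le_iff₀ (by linarith)).2 (by linarith))
  rw [div_le_iff₀ (by positivity), div_div_eq_mul_div] at hmain
  have hprod : (3 * K / 0.464 + K) * (0.464 / K + (1 - ρ.re)) =
      (3 / 0.464 + 1) * (0.464 + (1 - ρ.re) * K) := by
    field_simp
  rw [div_le_iff₀ (by linarith)]
  rw [hprod] at hmain
  norm_num at hmain ⊢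
  linarith

lemma re_logDeriv_xi_ofReal_le {T : ℝ} (hT : 1 < T) :
    (logDeriv xi T).re ≤
      1 / (T - 1) - log π / 2 + (log ((T + 2) / 2) + 2 / (T - 1)) / 2 := by
  have hnonneg := re_LSeries_vonMangoldt_nonneg hT
  have hdigamma := re_digamma_le (z := (((T + 2) / 2 : ℝ) : ℂ))
    (by rw [Complex.ofReal_re]; linarith)
  have hpole : (1 / ((T : ℂ) - 1)).re = 1 / (T - 1) := by
    exact_mod_cast Complex.ofReal_re (1 / (T - 1))
  have herr : 1 / ((T + 2) / 2 + |0| - 1 / 2) ≤ 2 / (T - 1) := by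
    rw [abs_zero, div_le_div_iff₀ (by linarith) (by linarith)]
    linarith
  have harg : (T : ℂ) / 2 + 1 = (((T + 2) / 2 : ℝ) : ℂ) := by
    push_cast
    ring
  rw [re_LSeries_vonMangoldt_eq (by simpa), hpole, harg] at hnonneg
  rw [Complex.norm_real, norm_of_nonneg (by linarith), Complex.ofReal_re,
    Complex.ofReal_im] at hdigamma
  linarith

lemma zeroWeight_le_of_lt_abs_im {T : ℝ} (hT : 1 < T) {ρ : ℂ} (hρ : xi ρ = 0)
    (him : T < |ρ.im|) :
    zeroWeight ρ ≤
      2 / (T - 1) * (xiMult ρ * ((T - ρ.re) / ((T - ρ.re) ^ 2 + (0 - ρ.im) ^ 2))) := by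
  obtain ⟨h0, h1⟩ := re_mem_Ioo_of_xi_eq_zero hρ
  have hsq : T ^ 2 ≤ ρ.im ^ 2 := by
    rw [← sq_abs ρ.im]
    gcongr
  have hre : (T - ρ.re) ^ 2 ≤ T ^ 2 := by gcongr <;> linarith
  have hle : 1 / (1 + ρ.im ^ 2) ≤
      2 / (T - 1) * ((T - ρ.re) / ((T - ρ.re) ^ 2 + (0 - ρ.im) ^ 2)) := by
    have hT1 : 0 < T - 1 := by linarith
    have hTρ : 0 < T - ρ.re := by linarith
    rw [div_mul_div_comm, div_le_div_iff₀ (by positivity) (by positivity)]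
    nlinarith [mul_nonneg (sub_nonneg.2 h1.le) (sq_nonneg ρ.im),
      mul_nonneg hT1.le (sub_nonneg.2 (hre.trans hsq))]
  calc zeroWeight ρ = xiMult ρ * (1 / (1 + ρ.im ^ 2)) := div_eq_mul_one_div _ _
    _ ≤ xiMult ρ * (2 / (T - 1) * ((T - ρ.re) / ((T - ρ.re) ^ 2 + (0 - ρ.im) ^ 2))) :=
      mul_le_mul_of_nonneg_left hle (xiMult_nonneg ρ)
    _ = _ := mul_left_comm _ _ _

lemma tsum_zeroWeight_lt_abs_im_le {T : ℝ} (hT : 1 < T) :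
    ∑' ρ, {ρ : ℂ | T < |ρ.im|}.indicator zeroWeight ρ ≤
      1 / (T - 1) * (log ((T + 2) / (2 * π)) + 4 / (T - 1)) := by
  have : 0 < T - 1 := by linarith
  have hs : 1 < (T : ℂ).re := by simpa
  have hle (ρ : ℂ) : {ρ : ℂ | T < |ρ.im|}.indicator zeroWeight ρ ≤ 2 / (T - 1) *
      (xiMult ρ * ((T - ρ.re) / ((T - ρ.re) ^ 2 + (0 - ρ.im) ^ 2))) := by
    by_cases hmem : T < |ρ.im| ∧ xi ρ = 0
    · rw [Set.indicator_of_mem (show ρ ∈ {ρ : ℂ | T < |ρ.im|} from hmem.1)]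
      exact zeroWeight_le_of_lt_abs_im hT hmem.2 hmem.1
    · have hzero : {ρ : ℂ | T < |ρ.im|}.indicator zeroWeight ρ = 0 := by
        rw [Set.indicator_apply_eq_zero]
        exact fun h ↦ zeroWeight_eq_zero fun hρ ↦ hmem ⟨h, hρ⟩
      rw [hzero]
      exact mul_nonneg (by positivity) (xiMult_mul_div_nonneg hs ρ)
  have hlog : log ((T + 2) / (2 * π)) = log ((T + 2) / 2) - log π := by
    rw [← log_div (by positivity) (by positivity), div_div]
  calc ∑' ρ, {ρ : ℂ | T < |ρ.im|}.indicator zeroWeight ρ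
    _ ≤ 2 / (T - 1) * (logDeriv xi T).re :=
      hasSum_le hle (summable_zeroWeight.indicator _).hasSum
        ((hasSum_re_logDeriv_xi hs).mul_left (2 / (T - 1)))
    _ ≤ 2 / (T - 1) *
        (1 / (T - 1) - log π / 2 + (log ((T + 2) / 2) + 2 / (T - 1)) / 2) := by
      gcongr
      exact re_logDeriv_xi_ofReal_le hT
    _ = 1 / (T - 1) * (log ((T + 2) / (2 * π)) + 4 / (T - 1)) := by
      rw [hlog]
      ring

end ZeroFreeRegion

/-! ### Laplace transforms -/

section LaplaceTransforms

open MeasureTheory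
open scoped FourierTransform

/-- `F` is continuous on `[0, ∞)` with `F u = O(exp (a * u))`, and `G` agrees on the half-plane
`a < re s` with the Laplace transform `∫ F u * exp (-s * u) du` over `(0, ∞)`. -/
structure HasLaplaceTransform (a : ℝ) (F : ℝ → ℂ) (G : ℂ → ℂ) : Prop where
  continuousOn : ContinuousOn F (Set.Ici 0)
  exists_norm_le : ∃ C : ℝ, ∀ u, 0 ≤ u → ‖F u‖ ≤ C * exp (a * u)
  integral_eq : ∀ s : ℂ, a < s.re → ∫ u in Set.Ioi (0 : ℝ), F u * Complex.exp (-s * u) = G s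

lemma norm_mul_cexp_neg_le {z s : ℂ} {a u C : ℝ} (h : ‖z‖ ≤ C * exp (a * u)) :
    ‖z * Complex.exp (-s * u)‖ ≤ C * exp ((a - s.re) * u) := by
  rw [norm_mul, Complex.norm_exp]
  calc ‖z‖ * exp (-s * u).re ≤ C * exp (a * u) * exp (-s * u).re := by gcongr
    _ = C * exp ((a - s.re) * u) := by
      rw [mul_assoc, ← exp_add, Complex.re_mul_ofReal, Complex.neg_re]; ring_nf

lemma integrableOn_exp_sub_mul {a b : ℝ} (h : a < b) :
    IntegrableOn (fun u : ℝ ↦ exp ((a - b) * u)) (Set.Ioi 0) :=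
  integrableOn_exp_mul_Ioi (sub_neg.2 h) 0

namespace HasLaplaceTransform

variable {a : ℝ} {F F' : ℝ → ℂ} {G G' : ℂ → ℂ}

lemma integrableOn (h : HasLaplaceTransform a F G) {s : ℂ} (hs : a < s.re) :
    IntegrableOn (fun u : ℝ ↦ F u * Complex.exp (-s * u)) (Set.Ioi 0) := by
  obtain ⟨C, hC⟩ := h.exists_norm_le
  refine Integrable.mono' ((integrableOn_exp_sub_mul hs).const_mul C) ?_ ?_
  · refine ContinuousOn.aestronglyMeasurable ?_ measurableSet_Ioi
    exact (h.continuousOn.mono Set.Ioi_subset_Ici_self).mul (by fun_prop)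
  · filter_upwards [ae_restrict_mem measurableSet_Ioi] with u hu
    exact norm_mul_cexp_neg_le (hC u (le_of_lt hu))

lemma add (h : HasLaplaceTransform a F G) (h' : HasLaplaceTransform a F' G') :
    HasLaplaceTransform a (fun u ↦ F u + F' u) (fun s ↦ G s + G' s) where
  continuousOn := h.continuousOn.add h'.continuousOn
  exists_norm_le := by
    obtain ⟨C, hC⟩ := h.exists_norm_le
    obtain ⟨C', hC'⟩ := h'.exists_norm_le
    refine ⟨C + C', fun u hu ↦ ?_⟩
    rw [add_mul]
    exact norm_add_le_of_le (hC u hu) (hC' u hu)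
  integral_eq s hs := by
    simp_rw [add_mul]
    rw [integral_add (h.integrableOn hs) (h'.integrableOn hs), h.integral_eq s hs,
      h'.integral_eq s hs]

lemma const_mul (h : HasLaplaceTransform a F G) (c : ℂ) :
    HasLaplaceTransform a (fun u ↦ c * F u) (fun s ↦ c * G s) where
  continuousOn := continuousOn_const.mul h.continuousOn
  exists_norm_le := by
    obtain ⟨C, hC⟩ := h.exists_norm_le
    refine ⟨‖c‖ * C, fun u hu ↦ ?_⟩
    rw [norm_mul, mul_assoc]
    exact mul_le_mul_of_nonneg_left (hC u hu) (norm_nonneg c)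
  integral_eq s hs := by
    simp_rw [mul_assoc]
    rw [integral_const_mul, h.integral_eq s hs]

lemma congr (h : HasLaplaceTransform a F G) (hF : ∀ u, 0 ≤ u → F u = F' u)
    (hG : ∀ s, a < s.re → G s = G' s) : HasLaplaceTransform a F' G' where
  continuousOn := h.continuousOn.congr fun u hu ↦ (hF u hu).symm
  exists_norm_le := by
    obtain ⟨C, hC⟩ := h.exists_norm_le
    exact ⟨C, fun u hu ↦ hF u hu ▸ hC u hu⟩
  integral_eq s hs := by
    rw [← hG s hs, ← h.integral_eq s hs]
    exact setIntegral_congr_fun measurableSet_Ioi fun u hu ↦ by simp only [hF u (le_of_lt hu)]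

lemma sub (h : HasLaplaceTransform a F G) (h' : HasLaplaceTransform a F' G') :
    HasLaplaceTransform a (fun u ↦ F u - F' u) (fun s ↦ G s - G' s) := by
  simpa only [neg_one_mul, ← sub_eq_add_neg] using h.add (h'.const_mul (-1))

lemma continuousOn_tsum {ι : Type*} {f : ι → ℝ → ℂ} {g : ι → ℂ → ℂ} {b : ι → ℝ}
    (hb : Summable b) (h : ∀ i, HasLaplaceTransform a (f i) (g i))
    (hf : ∀ i u, 0 ≤ u → ‖f i u‖ ≤ b i * exp (a * u)) :
    ContinuousOn (fun u ↦ ∑' i, f i u) (Set.Ici 0) := by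
  have hb_nonneg (i : ι) : 0 ≤ b i := by simpa using (norm_nonneg _).trans (hf i 0 le_rfl)
  intro u hu
  have hcont : ContinuousOn (fun u ↦ ∑' i, f i u) (Set.Icc 0 (u + 1)) := by
    refine _root_.continuousOn_tsum
      (fun i ↦ (h i).continuousOn.mono Set.Icc_subset_Ici_self)
      (hb.mul_right (exp (|a| * (u + 1)))) fun i v hv ↦ (hf i v hv.1).trans ?_
    gcongr
    · exact hb_nonneg i
    · exact hv.1
    · exact le_abs_self a
    · exact hv.2
  refine (hcont u ⟨hu, by linarith⟩).mono_of_mem_nhdsWithin ?_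
  exact Filter.inter_mem self_mem_nhdsWithin
    (mem_nhdsWithin_of_mem_nhds (Iic_mem_nhds (by linarith)))

lemma tsum_of_countable {ι : Type*} [Countable ι] {f : ι → ℝ → ℂ} {g : ι → ℂ → ℂ} {b : ι → ℝ}
    (hb : Summable b) (h : ∀ i, HasLaplaceTransform a (f i) (g i))
    (hf : ∀ i u, 0 ≤ u → ‖f i u‖ ≤ b i * exp (a * u)) :
    HasLaplaceTransform a (fun u ↦ ∑' i, f i u) (fun s ↦ ∑' i, g i s) where
  continuousOn := HasLaplaceTransform.continuousOn_tsum hb h hf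
  exists_norm_le := by
    refine ⟨∑' i, b i, fun u hu ↦ ?_⟩
    rw [← tsum_mul_right]
    exact tsum_of_norm_bounded (hb.mul_right _).hasSum fun i ↦ hf i u hu
  integral_eq s hs := by
    have hsum : Summable fun i ↦
        ∫ u in Set.Ioi (0 : ℝ), ‖f i u * Complex.exp (-s * u)‖ := by
      refine .of_nonneg_of_le (fun i ↦ integral_nonneg fun u ↦ norm_nonneg _) (fun i ↦ ?_)
        (hb.mul_right (∫ u in Set.Ioi (0 : ℝ), exp ((a - s.re) * u)))
      rw [← integral_const_mul]
      exact setIntegral_mono_on ((h i).integrableOn hs).norm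
        ((integrableOn_exp_sub_mul hs).const_mul _) measurableSet_Ioi
        fun u hu ↦ norm_mul_cexp_neg_le (hf i u (le_of_lt hu))
    have key := hasSum_integral_of_summable_integral_norm
      (fun i ↦ (h i).integrableOn hs) hsum
    simp_rw [(h _).integral_eq s hs, tsum_mul_right] at key
    exact key.tsum_eq.symm

theorem tsum {ι : Type*} {f : ι → ℝ → ℂ} {g : ι → ℂ → ℂ} {b : ι → ℝ}
    (hb : Summable b) (h : ∀ i, HasLaplaceTransform a (f i) (g i))
    (hf : ∀ i u, 0 ≤ u → ‖f i u‖ ≤ b i * exp (a * u)) :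
    HasLaplaceTransform a (fun u ↦ ∑' i, f i u) (fun s ↦ ∑' i, g i s) := by
  have hf_zero {i : ι} (hi : i ∉ Function.support b) {u : ℝ} (hu : 0 ≤ u) : f i u = 0 := by
    simpa [Function.notMem_support.1 hi] using hf i u hu
  have hg_zero {i : ι} (hi : i ∉ Function.support b) {s : ℂ} (hs : a < s.re) : g i s = 0 := by
    rw [← (h i).integral_eq s hs]
    refine setIntegral_eq_zero_of_forall_eq_zero fun u hu ↦ ?_
    rw [hf_zero hi (le_of_lt hu), zero_mul]
  have : Countable (Function.support b) := hb.countable_support.to_subtype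
  have hsub : HasLaplaceTransform a (fun u ↦ ∑' i : Function.support b, f i u)
      (fun s ↦ ∑' i : Function.support b, g i s) :=
    tsum_of_countable (hb.subtype _) (fun i ↦ h i) fun i ↦ hf i
  refine hsub.congr (fun u hu ↦ ?_) fun s hs ↦ ?_
  · exact tsum_subtype_eq_of_support_subset fun i hi ↦ not_imp_comm.1 (hf_zero · hu) hi
  · exact tsum_subtype_eq_of_support_subset fun i hi ↦ not_imp_comm.1 (hg_zero · hs) hi

/-- The function `F u * exp (-b * u)` on `(0, ∞)`, extended by zero. Its Fourier transform is the
Laplace transform of `F` on the line `re s = b`. -/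
noncomputable def damped (F : ℝ → ℂ) (b u : ℝ) : ℂ :=
  (Set.Ioi 0).indicator (fun u : ℝ ↦ F u * Complex.exp (-b * u)) u

lemma integrable_damped (h : HasLaplaceTransform a F G) {b : ℝ} (hb : a < b) :
    Integrable (damped F b) := by
  have hintegrable : IntegrableOn (fun u : ℝ ↦ F u * Complex.exp (-b * u)) (Set.Ioi 0) :=
    h.integrableOn (s := b) (by simpa)
  exact hintegrable.integrable_indicator measurableSet_Ioi

lemma fourier_damped (h : HasLaplaceTransform a F G) {b : ℝ} (hb : a < b) (w : ℝ) :
    𝓕 (damped F b) w = G (b + (2 * π * w : ℝ) * Complex.I) := by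
  rw [← h.integral_eq _ (by simpa), fourier_real_eq_integral_exp_smul,
    ← integral_indicator measurableSet_Ioi]
  refine integral_congr_ae (Filter.Eventually.of_forall fun u ↦ ?_)
  by_cases hu : u ∈ Set.Ioi (0 : ℝ)
  · simp only [damped, Set.indicator_of_mem hu, smul_eq_mul]
    rw [mul_left_comm, ← Complex.exp_add]
    push_cast
    ring_nf
  · simp only [damped, Set.indicator_of_notMem hu, smul_zero]

lemma continuousAt_damped (h : HasLaplaceTransform a F G) (b : ℝ) {u : ℝ} (hu : 0 < u) :
    ContinuousAt (damped F b) u := by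
  have hF : ContinuousAt F u := h.continuousOn.continuousAt (Ici_mem_nhds hu)
  have hcont : ContinuousAt (fun u : ℝ ↦ F u * Complex.exp (-b * u)) u := hF.mul (by fun_prop)
  refine hcont.congr ?_
  filter_upwards [Ioi_mem_nhds hu] with v hv
  simp only [damped, Set.indicator_of_mem hv]

lemma eq_zero_of_pos (h : HasLaplaceTransform a F 0) {u : ℝ} (hu : 0 < u) : F u = 0 := by
  have hfourier : 𝓕 (damped F (a + 1)) = 0 := funext (h.fourier_damped (lt_add_one a))
  have hinv := (h.integrable_damped (lt_add_one a)).fourierInv_fourier_eq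
    (by rw [hfourier]; exact integrable_zero _ _ _) (h.continuousAt_damped (a + 1) hu)
  rw [hfourier, fourierInv_eq, damped, Set.indicator_of_mem (Set.mem_Ioi.2 hu)] at hinv
  simpa using hinv.symm

theorem eq_of_pos (h : HasLaplaceTransform a F G) (h' : HasLaplaceTransform a F' G) {u : ℝ}
    (hu : 0 < u) : F u = F' u :=
  sub_eq_zero.1 (((h.sub h').congr (fun _ _ ↦ rfl) fun s _ ↦ sub_self (G s)).eq_zero_of_pos hu)

end HasLaplaceTransform

lemma hasLaplaceTransform_exp {a : ℝ} {b : ℂ} (hb : b.re ≤ a) :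
    HasLaplaceTransform a (fun u ↦ Complex.exp (b * u)) (fun s ↦ 1 / (s - b)) where
  continuousOn := by fun_prop
  exists_norm_le := by
    refine ⟨1, fun u hu ↦ ?_⟩
    rw [Complex.norm_exp, one_mul, Complex.re_mul_ofReal]
    gcongr
  integral_eq s hs := by
    simp_rw [← Complex.exp_add, ← add_mul, ← sub_eq_add_neg]
    rw [integral_exp_mul_complex_Ioi (by rw [Complex.sub_re]; linarith), Complex.ofReal_zero,
      mul_zero, Complex.exp_zero, ← neg_sub s b, div_neg, neg_div, neg_neg]

lemma max_one_sub_mul_exp_neg_of_log_le {x u : ℝ} (hx : 0 < x) (hu : log x ≤ u) :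
    max (1 - x * exp (-u)) 0 = 1 - x * exp (-u) := by
  refine max_eq_left (sub_nonneg.2 ?_)
  rw [exp_neg, ← div_eq_mul_inv, div_le_one (exp_pos u)]
  exact (log_le_iff_le_exp hx).1 hu

lemma max_one_sub_mul_exp_neg_of_le_log {x u : ℝ} (hx : 0 < x) (hu : u ≤ log x) :
    max (1 - x * exp (-u)) 0 = 0 := by
  refine max_eq_right (sub_nonpos.2 ?_)
  rw [exp_neg, ← div_eq_mul_inv, one_le_div (exp_pos u)]
  exact (le_log_iff_exp_le hx).1 hu

lemma integral_max_one_sub_mul_exp {x : ℝ} (hx : 1 ≤ x) (s : ℂ) :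
    ∫ u in Set.Ioi (0 : ℝ), ((max (1 - x * exp (-u)) 0 : ℝ) : ℂ) * Complex.exp (-s * u) =
      ∫ u in Set.Ioi (log x), (Complex.exp (-s * u) - x * Complex.exp (-(s + 1) * u)) := by
  have hx_pos : 0 < x := by linarith
  rw [setIntegral_eq_of_subset_of_forall_sdiff_eq_zero (s := Set.Ioi (log x)) measurableSet_Ioi
    (Set.Ioi_subset_Ioi (log_nonneg hx))]
  · refine setIntegral_congr_fun measurableSet_Ioi fun u hu ↦ ?_
    simp only [max_one_sub_mul_exp_neg_of_log_le hx_pos (le_of_lt hu)]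
    push_cast
    rw [sub_mul, one_mul, mul_assoc, ← Complex.exp_add]
    ring_nf
  · intro u hu
    rw [max_one_sub_mul_exp_neg_of_le_log hx_pos (not_lt.1 hu.2), Complex.ofReal_zero, zero_mul]

lemma integral_Ioi_log_cexp_sub {x : ℝ} (hx : 0 < x) {s : ℂ} (hs : 0 < s.re) :
    ∫ u in Set.Ioi (log x), (Complex.exp (-s * u) - x * Complex.exp (-(s + 1) * u)) =
      (x : ℂ) ^ (-s) / (s * (s + 1)) := by
  have hx_ne : (x : ℂ) ≠ 0 := by exact_mod_cast hx.ne'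
  have hs_ne : s ≠ 0 := by rintro rfl; simp at hs
  have hs_succ_re : 0 < (s + 1).re := by rw [Complex.add_re, Complex.one_re]; linarith
  have hs_succ_ne : s + 1 ≠ 0 := fun h ↦ by simp [h] at hs_succ_re
  have hexp : Complex.exp (-s * (log x : ℝ)) = (x : ℂ) ^ (-s) := by
    rw [Complex.cpow_def_of_ne_zero hx_ne, ← Complex.ofReal_log hx.le, mul_comm]
  have hexp_succ : Complex.exp (-(s + 1) * (log x : ℝ)) = (x : ℂ) ^ (-s) / x := by
    rw [neg_add', sub_mul, one_mul, Complex.exp_sub, hexp, Complex.ofReal_log hx.le,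
      Complex.exp_log hx_ne]
  have hs_neg : (-s).re < 0 := by simpa
  have hs_succ_neg : (-(s + 1)).re < 0 := by rw [Complex.neg_re]; linarith
  rw [integral_sub (integrableOn_exp_mul_complex_Ioi hs_neg _)
    ((integrableOn_exp_mul_complex_Ioi hs_succ_neg _).const_mul _), integral_const_mul,
    integral_exp_mul_complex_Ioi hs_neg, integral_exp_mul_complex_Ioi hs_succ_neg, hexp,
    hexp_succ]
  field_simp
  ring

lemma abs_max_one_sub_mul_exp_le {a u x : ℝ} (ha : 0 ≤ a) (hu : 0 ≤ u) (hx : 0 ≤ x) :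
    |max (1 - x * exp (-u)) 0| ≤ exp (a * u) := by
  rw [abs_of_nonneg (le_max_right _ _)]
  calc max (1 - x * exp (-u)) 0 ≤ 1 := max_le (sub_le_self 1 (by positivity)) zero_le_one
    _ ≤ exp (a * u) := one_le_exp (by positivity)

lemma hasLaplaceTransform_max {a x : ℝ} (ha : 0 ≤ a) (hx : 1 ≤ x) :
    HasLaplaceTransform a (fun u ↦ ((max (1 - x * exp (-u)) 0 : ℝ) : ℂ))
      (fun s ↦ (x : ℂ) ^ (-s) / (s * (s + 1))) where
  continuousOn := by fun_prop
  exists_norm_le := by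
    refine ⟨1, fun u hu ↦ ?_⟩
    rw [Complex.norm_real, one_mul, norm_eq_abs]
    exact abs_max_one_sub_mul_exp_le ha hu (by linarith)
  integral_eq s hs := by
    rw [integral_max_one_sub_mul_exp hx,
      integral_Ioi_log_cexp_sub (by linarith) (ha.trans_lt hs)]

end LaplaceTransforms

/-! ### The explicit formula -/

section ExplicitFormula

open scoped ArithmeticFunction LSeries.notation
open ArithmeticFunction (vonMangoldt_nonneg LSeriesSummable_vonMangoldt)

/-- The Cesàro mean `ψ₁(x) / x = ∑ n ≤ x, Λ n * (1 - n / x)` of the Chebyshev function, as a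
function of `u = log x`. -/
noncomputable def psiMean (u : ℝ) : ℝ := ∑' n : ℕ, Λ n * max (1 - n * exp (-u)) 0

/-- The contribution of a zero `b` of `ζ` to the explicit formula for `psiMean`; the subtracted
exponential makes it vanish at `u = 0`. -/
noncomputable def zeroTerm (b : ℂ) (u : ℝ) : ℂ :=
  (Complex.exp (b * u) - Complex.exp (-u)) / (b * (b + 1))

/-- The contribution to `psiMean` of the trivial zeros `-2, -4, …` of `ζ`. -/
noncomputable def trivialZeroSum (u : ℝ) : ℂ := ∑' k : ℕ, zeroTerm (-(2 * k + 2)) u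

/-- The contribution to `psiMean` of the nontrivial zeros of `ζ`, with multiplicity. -/
noncomputable def nontrivialZeroSum (u : ℝ) : ℂ := ∑' ρ : ℂ, xiMult ρ * zeroTerm ρ u

lemma ne_zero_of_re_pos {s : ℂ} (hs : 0 < s.re) : s ≠ 0 := by
  rintro rfl
  exact hs.ne rfl

lemma add_one_ne_zero_of_re_pos {s : ℂ} (hs : 0 < s.re) : s + 1 ≠ 0 := by
  simpa using add_natCast_ne_zero hs 1

lemma max_one_sub_mul_exp_neg_le {a u x : ℝ} (ha : 0 ≤ a) (hx : 0 < x) :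
    max (1 - x * exp (-u)) 0 ≤ exp (a * u) / x ^ a := by
  rcases le_total (log x) u with hu | hu
  · rw [max_one_sub_mul_exp_neg_of_log_le hx hu]
    calc 1 - x * exp (-u) ≤ 1 := sub_le_self 1 (by positivity)
      _ ≤ exp (a * u) / x ^ a := by
        rw [one_le_div (by positivity), rpow_def_of_pos hx, mul_comm (log x)]
        gcongr
  · rw [max_one_sub_mul_exp_neg_of_le_log hx hu]
    positivity

lemma vonMangoldt_mul_max_nonneg (n : ℕ) (u : ℝ) : 0 ≤ Λ n * max (1 - n * exp (-u)) 0 :=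
  mul_nonneg vonMangoldt_nonneg (le_max_right _ _)

lemma vonMangoldt_mul_max_le {a : ℝ} (ha : 0 ≤ a) (n : ℕ) (u : ℝ) :
    Λ n * max (1 - n * exp (-u)) 0 ≤ ‖LSeries.term ↗Λ a n‖ * exp (a * u) := by
  rcases eq_or_ne n 0 with rfl | hn
  · simp
  · rw [LSeries.norm_term_eq, if_neg hn, Complex.norm_real, norm_of_nonneg vonMangoldt_nonneg,
      Complex.ofReal_re, div_mul_eq_mul_div, mul_div_assoc]
    exact mul_le_mul_of_nonneg_left
      (max_one_sub_mul_exp_neg_le ha (by exact_mod_cast hn.bot_lt)) vonMangoldt_nonneg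

lemma summable_norm_term_vonMangoldt {a : ℝ} (ha : 1 < a) :
    Summable fun n ↦ ‖LSeries.term ↗Λ a n‖ :=
  (LSeriesSummable_vonMangoldt (s := a) (by simpa)).norm

lemma summable_vonMangoldt_mul_max (u : ℝ) :
    Summable fun n : ℕ ↦ Λ n * max (1 - n * exp (-u)) 0 :=
  .of_nonneg_of_le (fun n ↦ vonMangoldt_mul_max_nonneg n u)
    (fun n ↦ vonMangoldt_mul_max_le zero_le_two n u)
    ((summable_norm_term_vonMangoldt one_lt_two).mul_right _)

lemma hasLaplaceTransform_vonMangoldt_mul_max {a : ℝ} (ha : 0 ≤ a) (n : ℕ) :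
    HasLaplaceTransform a (fun u ↦ ((Λ n * max (1 - n * exp (-u)) 0 : ℝ) : ℂ))
      (fun s ↦ LSeries.term ↗Λ s n / (s * (s + 1))) := by
  rcases eq_or_ne n 0 with rfl | hn
  · simpa using (hasLaplaceTransform_exp (b := a) le_rfl).const_mul 0
  · have hn_one : (1 : ℝ) ≤ n := by exact_mod_cast Nat.one_le_iff_ne_zero.2 hn
    refine ((hasLaplaceTransform_max ha hn_one).const_mul (Λ n)).congr
      (fun u _ ↦ (Complex.ofReal_mul _ _).symm) fun s _ ↦ ?_
    rw [LSeries.term_of_ne_zero hn, Complex.cpow_neg, Complex.ofReal_natCast,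
      div_eq_mul_inv _ (_ ^ _), mul_div_assoc]

theorem hasLaplaceTransform_psiMean {a : ℝ} (ha : 1 < a) :
    HasLaplaceTransform a (fun u ↦ (psiMean u : ℂ)) (fun s ↦ L ↗Λ s / (s * (s + 1))) := by
  have ha_nonneg : 0 ≤ a := by linarith
  refine (HasLaplaceTransform.tsum (summable_norm_term_vonMangoldt ha)
    (hasLaplaceTransform_vonMangoldt_mul_max ha_nonneg) fun n u _ ↦ ?_).congr
    (fun u _ ↦ (Complex.ofReal_tsum _).symm) fun s _ ↦ tsum_div_const
  rw [Complex.norm_real, norm_of_nonneg (vonMangoldt_mul_max_nonneg n u)]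
  exact vonMangoldt_mul_max_le ha_nonneg n u

lemma hasLaplaceTransform_zeroTerm {a : ℝ} (ha : 0 ≤ a) {b : ℂ} (hb : b ≠ 0) (hb' : b + 1 ≠ 0)
    (hba : b.re ≤ a) :
    HasLaplaceTransform a (zeroTerm b) (fun s ↦ s / (b * (s - b)) / (s * (s + 1))) := by
  have hneg : HasLaplaceTransform a _ _ :=
    hasLaplaceTransform_exp (b := -1) (by rw [Complex.neg_re, Complex.one_re]; linarith)
  refine (((hasLaplaceTransform_exp hba).sub hneg).const_mul (1 / (b * (b + 1)))).congr
    (fun u _ ↦ ?_) fun s hs ↦ ?_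
  · rw [zeroTerm, neg_one_mul, one_div_mul_eq_div]
  · have hs_ne : s ≠ 0 := ne_zero_of_re_pos (ha.trans_lt hs)
    have hs_succ : s + 1 ≠ 0 := add_one_ne_zero_of_re_pos (ha.trans_lt hs)
    have hsb : s - b ≠ 0 := sub_ne_zero.2 fun h ↦ by rw [h] at hs; linarith
    rw [sub_neg_eq_add]
    field_simp
    ring

lemma norm_zeroTerm_le (b : ℂ) (u : ℝ) :
    ‖zeroTerm b u‖ ≤ (exp (b.re * u) + exp (-u)) / ‖b * (b + 1)‖ := by
  rw [zeroTerm, norm_div]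
  gcongr
  refine (norm_sub_le _ _).trans_eq ?_
  rw [Complex.norm_exp, Complex.norm_exp, Complex.re_mul_ofReal, Complex.neg_re,
    Complex.ofReal_re]

lemma norm_zeroTerm_neg_two_mul_le (k : ℕ) {u : ℝ} (hu : 0 ≤ u) :
    ‖zeroTerm (-(2 * k + 2)) u‖ ≤ 1 / ((k : ℝ) + 1) ^ 2 * exp (-u) := by
  have hexp : exp ((-(2 * k + 2) : ℂ).re * u) ≤ exp (-u) := by
    have hre : (-(2 * k + 2) : ℂ).re = -(2 * k + 2) := by simp
    rw [hre]
    gcongr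
    nlinarith [mul_nonneg (Nat.cast_nonneg (α := ℝ) k) hu]
  have hnorm : ‖(-(2 * k + 2) * (-(2 * k + 2) + 1) : ℂ)‖ = 2 * (k + 1) * (2 * k + 1) := by
    rw [show (-(2 * k + 2) * (-(2 * k + 2) + 1) : ℂ) = ((2 * (k + 1) * (2 * k + 1) : ℕ) : ℂ) by
      push_cast; ring, Complex.norm_natCast]
    push_cast
    rfl
  calc ‖zeroTerm (-(2 * k + 2)) u‖ ≤ (exp (-u) + exp (-u)) / (2 * (k + 1) * (2 * k + 1)) := by
        rw [← hnorm]
        exact (norm_zeroTerm_le _ u).trans (by gcongr)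
    _ = 1 / ((k + 1) * (2 * k + 1)) * exp (-u) := by field_simp; ring
    _ ≤ 1 / ((k : ℝ) + 1) ^ 2 * exp (-u) := by
        rw [sq]
        gcongr
        linarith [Nat.cast_nonneg (α := ℝ) k]

lemma hasSum_one_div_add_one_sq : HasSum (fun k : ℕ ↦ 1 / ((k : ℝ) + 1) ^ 2) (π ^ 2 / 6) := by
  have h := hasSum_zeta_two
  rw [← hasSum_nat_add_iff' 1] at h
  simpa using h

lemma hasLaplaceTransform_zeroTerm_neg_two_mul {a : ℝ} (ha : 0 ≤ a) (k : ℕ) :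
    HasLaplaceTransform a (zeroTerm (-(2 * k + 2)))
      (fun s ↦ -((1 / ((k : ℂ) + 1) - 1 / (s / 2 + 1 + k)) / 2 / (s * (s + 1)))) := by
  have hk : (k : ℂ) + 1 ≠ 0 := by exact_mod_cast k.succ_ne_zero
  have hb : (-(2 * k + 2) : ℂ) ≠ 0 := by
    rw [show (-(2 * k + 2) : ℂ) = -(2 * (k + 1)) by ring]
    exact neg_ne_zero.2 (mul_ne_zero two_ne_zero hk)
  have hb' : (-(2 * k + 2) : ℂ) + 1 ≠ 0 := by
    rw [show (-(2 * k + 2) : ℂ) + 1 = -((2 * k + 1 : ℕ) : ℂ) by push_cast; ring]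
    exact neg_ne_zero.2 (by exact_mod_cast (2 * k).succ_ne_zero)
  have hre : (-(2 * k + 2) : ℂ).re ≤ a := by
    simp only [Complex.neg_re, Complex.add_re, Complex.mul_re, Complex.natCast_re,
      Complex.natCast_im, Complex.re_ofNat, mul_zero, sub_zero]
    linarith [Nat.cast_nonneg (α := ℝ) k]
  refine (hasLaplaceTransform_zeroTerm ha hb hb' hre).congr (fun _ _ ↦ rfl) fun s hs ↦ ?_
  have hs_ne : s + 2 * (k + 1) ≠ 0 := by
    have hs_half : 0 < (s / 2 + 1).re := by simp; linarith
    have := add_natCast_ne_zero hs_half k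
    contrapose! this
    linear_combination this / 2
  rw [show s / 2 + 1 + k = (s + 2 * (k + 1)) / 2 by ring,
    show s - -(2 * k + 2) = s + 2 * (k + 1) by ring,
    show (-(2 * k + 2) : ℂ) = -(2 * (k + 1)) by ring, ← neg_div]
  congr 1
  field_simp
  ring

theorem hasLaplaceTransform_trivialZeroSum {a : ℝ} (ha : 0 ≤ a) :
    HasLaplaceTransform a trivialZeroSum (fun s ↦
      -((Complex.digamma (s / 2 + 1) + eulerMascheroniConstant) / 2 / (s * (s + 1)))) := by
  refine (HasLaplaceTransform.tsum hasSum_one_div_add_one_sq.summable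
    (hasLaplaceTransform_zeroTerm_neg_two_mul ha) fun k u hu ↦ ?_).congr
    (fun _ _ ↦ rfl) fun s hs ↦ ?_
  · refine (norm_zeroTerm_neg_two_mul_le k hu).trans ?_
    gcongr
    linarith [mul_nonneg ha hu]
  · have hs_half : 0 < (s / 2 + 1).re := by simp; linarith
    exact (((hasSum_digamma hs_half).div_const 2).div_const (s * (s + 1))).neg.tsum_eq

lemma norm_le_norm_add_one {z : ℂ} (hz : 0 ≤ z.re) : ‖z‖ ≤ ‖z + 1‖ := by
  refine (pow_le_pow_iff_left₀ (norm_nonneg _) (norm_nonneg _) two_ne_zero).1 ?_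
  rw [Complex.sq_norm, Complex.sq_norm, Complex.normSq_apply, Complex.normSq_apply,
    Complex.add_re, Complex.add_im, Complex.one_re, Complex.one_im, add_zero]
  nlinarith

/-- The absolute value of the coefficient of `exp (ρ * u)` in `nontrivialZeroSum u`. -/
noncomputable def zeroCoeff (ρ : ℂ) : ℝ := xiMult ρ / ‖ρ * (ρ + 1)‖

lemma zeroCoeff_nonneg (ρ : ℂ) : 0 ≤ zeroCoeff ρ := div_nonneg (xiMult_nonneg ρ) (norm_nonneg _)

lemma zeroCoeff_eq_zero {ρ : ℂ} (h : xi ρ ≠ 0) : zeroCoeff ρ = 0 := by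
  rw [zeroCoeff, xiMult_eq_zero h, zero_div]

lemma zeroCoeff_le (ρ : ℂ) : zeroCoeff ρ ≤ 1.05 * zeroWeight ρ := by
  by_cases hρ : xi ρ = 0
  · have hre := re_mem_Ioo_of_xi_eq_zero hρ
    have hnorm_pos : 0 < ‖ρ‖ := norm_pos_iff.2 (ne_zero_of_xi_eq_zero hρ)
    have hnorm : 1 + ρ.im ^ 2 ≤ 1.05 * ‖ρ * (ρ + 1)‖ := by
      rw [norm_mul]
      nlinarith [one_add_im_sq_le hρ, norm_le_norm_add_one hre.1.le]
    rw [zeroCoeff, zeroWeight, ← mul_div_assoc,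
      div_le_div_iff₀ (by nlinarith [norm_nonneg ρ]) (by positivity), mul_comm 1.05, mul_assoc]
    exact mul_le_mul_of_nonneg_left hnorm (xiMult_nonneg ρ)
  · rw [zeroCoeff_eq_zero hρ, zeroWeight_eq_zero hρ, mul_zero]

lemma norm_xiMult_mul_zeroTerm_le (ρ : ℂ) (u : ℝ) :
    ‖xiMult ρ * zeroTerm ρ u‖ ≤ zeroCoeff ρ * (exp (ρ.re * u) + exp (-u)) := by
  rw [zeroCoeff, norm_mul, Complex.norm_real, norm_of_nonneg (xiMult_nonneg ρ), div_mul_eq_mul_div,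
    mul_div_assoc]
  exact mul_le_mul_of_nonneg_left (norm_zeroTerm_le ρ u) (xiMult_nonneg ρ)

lemma hasLaplaceTransform_xiMult_mul_zeroTerm {a : ℝ} (ha : 1 ≤ a) (ρ : ℂ) :
    HasLaplaceTransform a (fun u ↦ xiMult ρ * zeroTerm ρ u)
      (fun s ↦ xiMult ρ * (s / (ρ * (s - ρ))) / (s * (s + 1))) := by
  by_cases hρ : xi ρ = 0
  · have hre := re_mem_Ioo_of_xi_eq_zero hρ
    simpa only [mul_div_assoc] using (hasLaplaceTransform_zeroTerm (by linarith)
      (ne_zero_of_xi_eq_zero hρ) (add_one_ne_zero_of_re_pos hre.1)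
      (hre.2.le.trans ha)).const_mul (xiMult ρ)
  · simpa [xiMult_eq_zero hρ] using (hasLaplaceTransform_exp (b := a) le_rfl).const_mul 0

theorem hasLaplaceTransform_nontrivialZeroSum {a : ℝ} (ha : 1 ≤ a) :
    HasLaplaceTransform a nontrivialZeroSum
      (fun s ↦ (logDeriv xi s + hadamardConst) / (s * (s + 1))) := by
  refine (HasLaplaceTransform.tsum (summable_zeroWeight.mul_left 2.1)
    (hasLaplaceTransform_xiMult_mul_zeroTerm ha) fun ρ u hu ↦ ?_).congr
    (fun _ _ ↦ rfl) fun s hs ↦ ?_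
  · by_cases hρ : xi ρ = 0
    · have hre := re_mem_Ioo_of_xi_eq_zero hρ
      have hexp : exp (ρ.re * u) + exp (-u) ≤ 2 * exp (a * u) := by
        rw [two_mul]
        gcongr
        · exact hre.2.le.trans ha
        · nlinarith
      calc _ ≤ zeroCoeff ρ * (exp (ρ.re * u) + exp (-u)) :=
            norm_xiMult_mul_zeroTerm_le ρ u
        _ ≤ 1.05 * zeroWeight ρ * (2 * exp (a * u)) :=
            mul_le_mul (zeroCoeff_le ρ) hexp (by positivity)
              (mul_nonneg (by norm_num) (zeroWeight_nonneg ρ))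
        _ = 2.1 * zeroWeight ρ * exp (a * u) := by ring
    · simp [xiMult_eq_zero hρ, zeroWeight_eq_zero hρ]
  · exact ((hasSum_logDeriv_xi (ha.trans_lt hs)).div_const _).tsum_eq

lemma one_sub_log_two_mul_pi :
    1 - log (2 * π) = hadamardConst - log π / 2 - eulerMascheroniConstant / 2 := by
  rw [hadamardConst, log_mul two_ne_zero pi_ne_zero, log_mul four_ne_zero pi_ne_zero,
    show (4 : ℝ) = 2 ^ 2 by norm_num, log_pow]
  push_cast
  ring

/-- The principal part of the explicit formula for `psiMean`: the pole
of `ζ` at `1`, the constant term, and the multiple of `exp (-u)` that makes it vanish at `u = 0`. -/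
noncomputable def psiMeanMain (u : ℝ) : ℝ :=
  exp u / 2 - log (2 * π) + (log (2 * π) - 1 / 2) * exp (-u)

lemma hasLaplaceTransform_psiMeanMain {a : ℝ} (ha : 1 ≤ a) :
    HasLaplaceTransform a (fun u ↦ (psiMeanMain u : ℂ))
      (fun s ↦ (1 / (s - 1) + (1 - log (2 * π) : ℝ)) / (s * (s + 1))) := by
  have hone : HasLaplaceTransform a _ _ := hasLaplaceTransform_exp (b := 1) (by simpa)
  have hzero : HasLaplaceTransform a _ _ := hasLaplaceTransform_exp (b := 0) (by simp; linarith)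
  have hneg : HasLaplaceTransform a _ _ := hasLaplaceTransform_exp (b := -1) (by simp; linarith)
  refine (((hone.const_mul (1 / 2)).sub (hzero.const_mul (log (2 * π) : ℝ))).add
    (hneg.const_mul (log (2 * π) - 1 / 2 : ℝ))).congr (fun u _ ↦ ?_) fun s hs ↦ ?_
  · rw [psiMeanMain, zero_mul, Complex.exp_zero]
    push_cast
    ring_nf
  · have hs_pos : 0 < s.re := by linarith
    have hs_ne : s ≠ 0 := ne_zero_of_re_pos hs_pos
    have hs_succ : s + 1 ≠ 0 := add_one_ne_zero_of_re_pos hs_pos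
    have hs_sub : s - 1 ≠ 0 := sub_ne_zero.2 fun h ↦ by simp [h] at hs; linarith
    rw [sub_neg_eq_add, sub_zero]
    push_cast
    field_simp
    ring

theorem psiMean_explicit_formula {u : ℝ} (hu : 0 < u) :
    (psiMean u : ℂ) = psiMeanMain u - trivialZeroSum u - nontrivialZeroSum u := by
  refine (hasLaplaceTransform_psiMean one_lt_two).eq_of_pos
    ((((hasLaplaceTransform_psiMeanMain one_le_two).sub
      (hasLaplaceTransform_trivialZeroSum zero_le_two)).sub
      (hasLaplaceTransform_nontrivialZeroSum one_le_two)).congr (fun _ _ ↦ rfl) fun s hs ↦ ?_) hu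
  rw [LSeries_vonMangoldt_eq_sub_logDeriv_xi (one_lt_two.trans hs), one_sub_log_two_mul_pi]
  push_cast
  ring

end ExplicitFormula

/-! ### Upper bounds for the Chebyshev mean -/

section ChebyshevMean

/-- A majorant of `2 * exp (-u) * ‖nontrivialZeroSum u‖`, obtained by pairing each zero `ρ` with
`1 - ρ`. -/
noncomputable def zeroSumMajorant (u : ℝ) : ℝ :=
  ∑' ρ : ℂ, zeroWeight ρ * (exp ((max ρ.re (1 - ρ.re) - 1) * u) + 1.05 * exp (-u / 2))

lemma zeroCoeff_le_zeroWeight {ρ : ℂ} (hre : 1 / 2 ≤ ρ.re) : zeroCoeff ρ ≤ zeroWeight ρ := by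
  by_cases hρ : xi ρ = 0
  · have him := twenty_le_im_sq hρ
    refine div_le_div_of_nonneg_left (xiMult_nonneg _) (by positivity) ?_
    refine (pow_le_pow_iff_left₀ (by positivity) (norm_nonneg _) two_ne_zero).1 ?_
    have hnorm : 1 / 4 + ρ.im ^ 2 ≤ ‖ρ‖ ^ 2 := by
      rw [Complex.sq_norm, Complex.normSq_apply]
      nlinarith
    have hnorm_succ : 9 / 4 + ρ.im ^ 2 ≤ ‖ρ + 1‖ ^ 2 := by
      rw [Complex.sq_norm, Complex.normSq_apply, Complex.add_re, Complex.add_im, Complex.one_re,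
        Complex.one_im]
      nlinarith
    rw [norm_mul, mul_pow]
    calc (1 + ρ.im ^ 2) ^ 2 ≤ (1 / 4 + ρ.im ^ 2) * (9 / 4 + ρ.im ^ 2) := by nlinarith
      _ ≤ ‖ρ‖ ^ 2 * ‖ρ + 1‖ ^ 2 := by gcongr
  · rw [zeroCoeff_eq_zero hρ, zeroWeight_eq_zero hρ]

lemma zeroWeight_one_sub (ρ : ℂ) : zeroWeight (1 - ρ) = zeroWeight ρ := by
  simp [zeroWeight, xiMult_one_sub]

lemma tsum_zeroWeight_le_const : ∑' ρ, zeroWeight ρ ≤ 0.04624 :=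
  tsum_zeroWeight_le.trans two_mul_hadamardConst_le

lemma exp_max_re_sub_one_mul_le_one {ρ : ℂ} (hρ : xi ρ = 0) {u : ℝ} (hu : 0 ≤ u) :
    exp ((max ρ.re (1 - ρ.re) - 1) * u) ≤ 1 := by
  have hre := re_mem_Ioo_of_xi_eq_zero hρ
  refine exp_le_one_iff.2 (mul_nonpos_of_nonpos_of_nonneg (sub_nonpos.2 (max_le ?_ ?_)) hu)
  · exact hre.2.le
  · linarith [hre.1]

lemma zeroSumMajorant_term_le (ρ : ℂ) {u : ℝ} (hu : 0 ≤ u) :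
    zeroWeight ρ * (exp ((max ρ.re (1 - ρ.re) - 1) * u) + 1.05 * exp (-u / 2)) ≤
      zeroWeight ρ * (1 + 1.05 * exp (-u / 2)) := by
  by_cases hρ : xi ρ = 0
  · have := zeroWeight_nonneg ρ
    gcongr
    exact exp_max_re_sub_one_mul_le_one hρ hu
  · rw [zeroWeight_eq_zero hρ, zero_mul, zero_mul]

lemma summable_zeroSumMajorant {u : ℝ} (hu : 0 ≤ u) : Summable fun ρ : ℂ ↦
    zeroWeight ρ * (exp ((max ρ.re (1 - ρ.re) - 1) * u) + 1.05 * exp (-u / 2)) :=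
  .of_nonneg_of_le (fun ρ ↦ mul_nonneg (zeroWeight_nonneg ρ) (by positivity))
    (fun ρ ↦ zeroSumMajorant_term_le ρ hu) (summable_zeroWeight.mul_right _)

lemma summable_zeroCoeff : Summable zeroCoeff :=
  .of_nonneg_of_le zeroCoeff_nonneg zeroCoeff_le (summable_zeroWeight.mul_left _)

lemma summable_zeroCoeff_mul_exp {u : ℝ} (hu : 0 ≤ u) :
    Summable fun ρ : ℂ ↦ zeroCoeff ρ * exp ((ρ.re - 1) * u) := by
  refine .of_nonneg_of_le (fun ρ ↦ mul_nonneg (zeroCoeff_nonneg ρ) (exp_nonneg _)) (fun ρ ↦ ?_)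
    summable_zeroCoeff
  by_cases hρ : xi ρ = 0
  · have hre := re_mem_Ioo_of_xi_eq_zero hρ
    exact mul_le_of_le_one_right (zeroCoeff_nonneg ρ)
      (exp_le_one_iff.2 (mul_nonpos_of_nonpos_of_nonneg (by linarith [hre.2]) hu))
  · rw [zeroCoeff_eq_zero hρ, zero_mul]

lemma zeroCoeff_pair_le {ρ : ℂ} (hre : 1 / 2 ≤ ρ.re) {u : ℝ} (hu : 0 ≤ u) :
    zeroCoeff ρ * exp ((ρ.re - 1) * u) + zeroCoeff (1 - ρ) * exp (((1 - ρ).re - 1) * u) ≤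
      zeroWeight ρ * (exp ((max ρ.re (1 - ρ.re) - 1) * u) + 1.05 * exp (-u / 2)) := by
  have hcoeff := zeroCoeff_le_zeroWeight hre
  have hcoeff_refl : zeroCoeff (1 - ρ) ≤ 1.05 * zeroWeight ρ :=
    zeroWeight_one_sub ρ ▸ zeroCoeff_le (1 - ρ)
  have hexp : exp (((1 - ρ).re - 1) * u) ≤ exp (-u / 2) := by
    gcongr
    rw [Complex.sub_re, Complex.one_re]
    nlinarith
  have := zeroWeight_nonneg ρ
  rw [max_eq_left (by linarith)]
  calc zeroCoeff ρ * exp ((ρ.re - 1) * u) + zeroCoeff (1 - ρ) * exp (((1 - ρ).re - 1) * u)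
      ≤ zeroWeight ρ * exp ((ρ.re - 1) * u) + 1.05 * zeroWeight ρ * exp (-u / 2) := by gcongr
    _ = zeroWeight ρ * (exp ((ρ.re - 1) * u) + 1.05 * exp (-u / 2)) := by ring

lemma two_mul_tsum_zeroCoeff_mul_exp_le {u : ℝ} (hu : 0 ≤ u) :
    2 * ∑' ρ : ℂ, zeroCoeff ρ * exp ((ρ.re - 1) * u) ≤ zeroSumMajorant u := by
  have hsum := (summable_zeroCoeff_mul_exp hu).hasSum
  have hsum_refl := (Equiv.subLeft (1 : ℂ)).hasSum_iff.2 hsum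
  rw [two_mul]
  refine hasSum_le (fun ρ ↦ ?_) (hsum.add hsum_refl) (summable_zeroSumMajorant hu).hasSum
  rcases le_total (1 / 2) ρ.re with hre | hre
  · exact zeroCoeff_pair_le hre hu
  · have h := zeroCoeff_pair_le (ρ := 1 - ρ) (by simp; linarith) hu
    rw [sub_sub_cancel, zeroWeight_one_sub, Complex.sub_re 1 ρ, Complex.one_re, sub_sub_cancel,
      max_comm] at h
    simpa only [Function.comp_apply, Equiv.subLeft_apply, Complex.sub_re, Complex.one_re,
      add_comm (zeroCoeff ρ * _)] using h

lemma norm_nontrivialZeroSum_le {u : ℝ} (hu : 0 ≤ u) :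
    ‖nontrivialZeroSum u‖ ≤ exp u / 2 * zeroSumMajorant u + 0.05 * exp (-u) := by
  have hsum := ((summable_zeroCoeff_mul_exp hu).mul_left (exp u)).hasSum.add
    (summable_zeroCoeff.mul_right (exp (-u))).hasSum
  have hterm (ρ : ℂ) : ‖xiMult ρ * zeroTerm ρ u‖ ≤
      exp u * (zeroCoeff ρ * exp ((ρ.re - 1) * u)) + zeroCoeff ρ * exp (-u) := by
    refine (norm_xiMult_mul_zeroTerm_le ρ u).trans_eq ?_
    rw [mul_left_comm, ← exp_add, mul_add]
    ring_nf
  have hcoeff : ∑' ρ, zeroCoeff ρ ≤ 0.05 := by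
    have h := summable_zeroCoeff.tsum_le_tsum zeroCoeff_le (summable_zeroWeight.mul_left _)
    rw [tsum_mul_left] at h
    linarith [tsum_zeroWeight_le_const]
  refine (tsum_of_norm_bounded hsum hterm).trans ?_
  rw [tsum_mul_left, tsum_mul_right, div_mul_eq_mul_div, mul_div_assoc]
  gcongr
  linarith [two_mul_tsum_zeroCoeff_mul_exp_le hu]

lemma norm_trivialZeroSum_le {u : ℝ} (hu : 0 ≤ u) : ‖trivialZeroSum u‖ ≤ 2 * exp (-u) := by
  refine (tsum_of_norm_bounded (hasSum_one_div_add_one_sq.mul_right _)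
    fun k ↦ norm_zeroTerm_neg_two_mul_le k hu).trans ?_
  gcongr
  nlinarith [pi_lt_d2, pi_pos]

lemma le_log_two_mul_pi : 1.835 ≤ log (2 * π) := by
  rw [log_mul two_ne_zero pi_ne_zero]
  linarith [le_log_pi, log_two_gt_d9]

lemma exp_neg_le_of_five_le {u : ℝ} (hu : 5 ≤ u) : exp (-u) ≤ 0.0068 := by
  have hexp : 148 ≤ exp 5 := by
    rw [show (5 : ℝ) = (5 : ℕ) * 1 by norm_num, exp_nat_mul]
    have : (2.718 : ℝ) ^ 5 ≤ exp 1 ^ 5 := by gcongr; linarith [exp_one_gt_d9]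
    exact le_trans (by norm_num) this
  calc exp (-u) ≤ exp (-5) := by gcongr
    _ = (exp 5)⁻¹ := exp_neg 5
    _ ≤ (148 : ℝ)⁻¹ := by gcongr
    _ ≤ 0.0068 := by norm_num

theorem psiMean_le {u : ℝ} (hu : 5 ≤ u) :
    psiMean u ≤ exp u / 2 * (1 + zeroSumMajorant u) - 1.8 := by
  have hu_nonneg : 0 ≤ u := by linarith
  have hformula := congrArg Complex.re (psiMean_explicit_formula (show 0 < u by linarith))
  rw [Complex.sub_re, Complex.sub_re, Complex.ofReal_re, Complex.ofReal_re] at hformula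
  have htrivial := (Complex.abs_re_le_norm _).trans (norm_trivialZeroSum_le hu_nonneg)
  have hnontrivial := (Complex.abs_re_le_norm _).trans (norm_nontrivialZeroSum_le hu_nonneg)
  have hmain : psiMeanMain u ≤ exp u / 2 - 1.835 + 1.335 * exp (-u) := by
    rw [psiMeanMain]
    nlinarith [le_log_two_mul_pi, exp_neg_le_of_five_le hu]
  linarith [neg_abs_le (trivialZeroSum u).re, neg_abs_le (nontrivialZeroSum u).re,
    exp_neg_le_of_five_le hu]

lemma zeroSumMajorant_le {u : ℝ} (hu : 0 ≤ u) :
    zeroSumMajorant u ≤ 0.04624 + 0.04856 * exp (-u / 2) := by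
  have h := (summable_zeroSumMajorant hu).tsum_le_tsum
    (fun ρ ↦ zeroSumMajorant_term_le ρ hu) (summable_zeroWeight.mul_right _)
  rw [tsum_mul_right] at h
  rw [zeroSumMajorant]
  nlinarith [tsum_zeroWeight_le_const, exp_pos (-u / 2)]

theorem psiMean_le_mul_exp {u : ℝ} (hu : 5 ≤ u) : psiMean u ≤ 1.0465 / 2 * exp u := by
  have hmajorant := zeroSumMajorant_le (u := u) (by linarith)
  have hsq : exp u = exp (u / 2) ^ 2 := by rw [← exp_nat_mul]; ring_nf
  have hcancel : exp (u / 2) * exp (-u / 2) = 1 := by rw [← exp_add]; ring_nf; exact exp_zero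
  calc psiMean u ≤ exp u / 2 * (1 + zeroSumMajorant u) - 1.8 := psiMean_le hu
    _ ≤ exp u / 2 * (1 + (0.04624 + 0.04856 * exp (-u / 2))) - 1.8 := by gcongr
    _ = exp (u / 2) ^ 2 / 2 * 1.04624
          + 0.02428 * exp (u / 2) * (exp (u / 2) * exp (-u / 2)) - 1.8 := by rw [hsq]; ring
    _ ≤ 1.0465 / 2 * exp u := by
      rw [hcancel, hsq]
      nlinarith [sq_nonneg (exp (u / 2) - 93)]

lemma zeroSumMajorant_le_of_re_le {T u d : ℝ} (hu : 0 ≤ u)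
    (hzero : ∀ ρ, xi ρ = 0 → |ρ.im| ≤ T → ρ.re ≤ 1 - d) :
    zeroSumMajorant u ≤ 0.04624 * (exp (-d * u) + 1.05 * exp (-u / 2)) +
      ∑' ρ, {ρ : ℂ | T < |ρ.im|}.indicator zeroWeight ρ := by
  have hterm (ρ : ℂ) :
      zeroWeight ρ * (exp ((max ρ.re (1 - ρ.re) - 1) * u) + 1.05 * exp (-u / 2)) ≤
        zeroWeight ρ * (exp (-d * u) + 1.05 * exp (-u / 2)) +
          {ρ : ℂ | T < |ρ.im|}.indicator zeroWeight ρ := by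
    by_cases hρ : xi ρ = 0
    · have hw := zeroWeight_nonneg ρ
      by_cases hT : T < |ρ.im|
      · rw [Set.indicator_of_mem (show ρ ∈ {ρ : ℂ | T < |ρ.im|} from hT)]
        nlinarith [exp_max_re_sub_one_mul_le_one hρ hu, exp_pos (-d * u)]
      · have hρ_refl := hzero (1 - ρ) (by rw [xi_one_sub, hρ]) (by simpa using hT)
        rw [Complex.sub_re, Complex.one_re] at hρ_refl
        have hmax : max ρ.re (1 - ρ.re) ≤ 1 - d := max_le (hzero ρ hρ (not_lt.1 hT)) hρ_refl
        rw [Set.indicator_of_notMem (show ρ ∉ {ρ : ℂ | T < |ρ.im|} from hT), add_zero]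
        gcongr
        linarith
    · rw [zeroWeight_eq_zero hρ, zero_mul, zero_mul, zero_add]
      exact Set.indicator_nonneg (fun ρ _ ↦ zeroWeight_nonneg ρ) ρ
  have h := hasSum_le hterm (summable_zeroSumMajorant hu).hasSum
    ((summable_zeroWeight.mul_right _).hasSum.add (summable_zeroWeight.indicator _).hasSum)
  rw [tsum_mul_right] at h
  refine h.trans ?_
  gcongr
  exact tsum_zeroWeight_le_const

lemma exp_neg_le_one_div {x : ℝ} (hx : 0 < x) : exp (-x) ≤ 1 / (2.7182 * x) := by
  have hexp : 2.7182 * x ≤ exp x := by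
    calc 2.7182 * x ≤ exp 1 * exp (x - 1) := by
          gcongr
          · linarith [exp_one_gt_d9]
          · linarith [add_one_le_exp (x - 1)]
      _ = exp x := by rw [← exp_add, add_sub_cancel]
  rw [exp_neg, ← one_div]
  gcongr

lemma exp_neg_half_le_div {u : ℝ} (hu : 60 ≤ u) : exp (-u / 2) ≤ 0.0001 / u := by
  have hexp := pow_div_factorial_le_exp (x := u / 2) (by linarith) 6
  have hpow : (30 : ℝ) ^ 5 * (u / 2) ≤ (u / 2) ^ 6 := by
    rw [pow_succ (u / 2) 5]
    gcongr
    linarith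
  rw [neg_div, exp_neg, ← one_div, div_le_div_iff₀ (exp_pos _) (by linarith)]
  norm_num [Nat.factorial] at hpow hexp
  linarith

lemma tsum_zeroWeight_lt_abs_im_le_div {u : ℝ} (hu : 60 ≤ u) :
    ∑' ρ, {ρ : ℂ | 5 * u < |ρ.im|}.indicator zeroWeight ρ ≤ 0.2007 * (log (5 * u) - 1.81) / u := by
  have hT : 0 < 5 * u - 1 := by linarith
  have hlog_nonneg : 0 ≤ log ((5 * u + 2) / (2 * π)) := by
    refine log_nonneg ?_
    rw [one_le_div (by positivity)]
    linarith [pi_lt_d2]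
  have hlog : log ((5 * u + 2) / (2 * π)) ≤ log (5 * u) + 0.007 - 1.835 := by
    rw [log_div (by positivity) (by positivity)]
    have h : log (5 * u + 2) ≤ log (5 * u * 1.007) := log_le_log (by linarith) (by linarith)
    rw [log_mul (by positivity) (by norm_num)] at h
    linarith [log_le_sub_one_of_pos (show (0 : ℝ) < 1.007 by norm_num), le_log_two_mul_pi]
  have hfour : 4 / (5 * u - 1) ≤ 0.0134 := by rw [div_le_iff₀ hT]; linarith
  have hinv : 1 / (5 * u - 1) ≤ 0.2007 / u := by
    rw [div_le_div_iff₀ hT (by linarith)]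
    linarith
  calc _ ≤ 1 / (5 * u - 1) * (log ((5 * u + 2) / (2 * π)) + 4 / (5 * u - 1)) :=
        tsum_zeroWeight_lt_abs_im_le (by linarith)
    _ ≤ 0.2007 / u * (log (5 * u) - 1.81) :=
        mul_le_mul hinv (by linarith) (by positivity) (by positivity)
    _ = 0.2007 * (log (5 * u) - 1.81) / u := by ring

theorem zeroSumMajorant_le_div {u : ℝ} (hu : 60 ≤ u) :
    zeroSumMajorant u ≤ (0.794 * log (5 * u) - 1.547) / u := by
  have hlog : 5 < log (5 * u) := by
    rw [lt_log_iff_exp_lt (by linarith)]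
    linarith [exp_five_lt]
  set d := 0.0717 / (2.5 * (log (5 * u) - 2)) with hd
  have : 0 < d := div_pos (by norm_num) (by linarith)
  have hmajorant := zeroSumMajorant_le_of_re_le (d := d) (show 0 ≤ u by linarith) fun ρ hρ him ↦ by
    linarith [le_one_sub_re_of_xi_eq_zero (T := 5 * u) (by linarith) hρ him]
  have hexp : 0.04624 * exp (-d * u) ≤ 0.5933 * (log (5 * u) - 2) / u := by
    have hlog_sub : 0 < log (5 * u) - 2 := by linarith
    calc 0.04624 * exp (-d * u) ≤ 0.04624 * (1 / (2.7182 * (d * u))) := by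
          rw [neg_mul]
          gcongr
          exact exp_neg_le_one_div (by positivity)
      _ = 0.04624 * 2.5 / (0.0717 * 2.7182) * ((log (5 * u) - 2) / u) := by
          rw [hd]
          field_simp
      _ ≤ 0.5933 * (log (5 * u) - 2) / u := by
          rw [mul_div_assoc 0.5933]
          exact mul_le_mul_of_nonneg_right (by norm_num) (by positivity)
  calc zeroSumMajorant u ≤ 0.5933 * (log (5 * u) - 2) / u + 0.04624 * (1.05 * (0.0001 / u)) +
        0.2007 * (log (5 * u) - 1.81) / u := by
        linarith [exp_neg_half_le_div hu, tsum_zeroWeight_lt_abs_im_le_div hu]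
    _ = (0.5933 * (log (5 * u) - 2) + 0.04624 * (1.05 * 0.0001) +
        0.2007 * (log (5 * u) - 1.81)) / u := by ring
    _ ≤ (0.794 * log (5 * u) - 1.547) / u := by
        gcongr
        linarith

end ChebyshevMean

/-! ### The integrated prime counting function -/

section PrimeCountIntegral

open scoped ArithmeticFunction

/-- The integral of the prime counting function over `[0, y]`. -/
noncomputable def primeCountIntegral (y : ℝ) : ℝ := ∑ p ∈ Nat.primesLE ⌊y⌋₊, (y - p)

lemma mem_primesLE_floor {y : ℝ} (hy : 0 ≤ y) {p : ℕ} :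
    p ∈ Nat.primesLE ⌊y⌋₊ ↔ p.Prime ∧ (p : ℝ) ≤ y := by
  rw [Nat.mem_primesLE, Nat.le_floor_iff hy, and_comm]

lemma sum_sub_le_primeCountIntegral {s : Finset ℕ} (hs : ∀ p ∈ s, p.Prime) {y : ℝ} (hy : 0 ≤ y) :
    ∑ p ∈ s, (y - p) ≤ primeCountIntegral y :=
  calc ∑ p ∈ s, (y - p) ≤ ∑ p ∈ s with ((p : ℕ) : ℝ) ≤ y, (y - p) := by
        rw [sum_filter]
        refine sum_le_sum fun p _ ↦ ?_
        split_ifs with hpy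
        · exact le_rfl
        · linarith
    _ ≤ primeCountIntegral y := by
        refine sum_le_sum_of_subset_of_nonneg (fun p hp ↦ ?_) fun p hp _ ↦ ?_
        · rw [mem_filter] at hp
          exact (mem_primesLE_floor hy).2 ⟨hs p hp.1, hp.2⟩
        · exact sub_nonneg.2 ((mem_primesLE_floor hy).1 hp).2

lemma injOn_nthPrime (n : ℕ) : Set.InjOn nthPrime (Icc 1 n : Finset ℕ) := by
  intro a ha b hb hab
  have := Nat.nth_injective Nat.infinite_setOfPred_prime hab
  rw [mem_coe, mem_Icc] at ha hb
  omega

theorem mul_sub_primeCountIntegral_le_sum_nthPrime (n : ℕ) {y : ℝ} (hy : 0 ≤ y) :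
    n * y - primeCountIntegral y ≤ ∑ i ∈ Icc 1 n, (nthPrime i : ℝ) := by
  have hprime : ∀ p ∈ (Icc 1 n).image nthPrime, p.Prime :=
    forall_mem_image.2 fun _ _ ↦ Nat.prime_nth_prime _
  have hsum := sum_sub_le_primeCountIntegral hprime hy
  rw [sum_image (injOn_nthPrime n), sum_sub_distrib, sum_const, Nat.card_Icc, nsmul_eq_mul,
    Nat.add_sub_cancel] at hsum
  linarith

lemma sum_log_mul_max_le {s : Finset ℕ} (hs : ∀ p ∈ s, p.Prime) {t : ℝ} (ht : 0 < t) :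
    ∑ p ∈ s, log p * max (t - p) 0 ≤ t * psiMean (log t) := by
  have hterm : ∀ p ∈ s, log p * max (t - p) 0 = t * (Λ p * max (1 - p * exp (-log t)) 0) := by
    intro p hp
    have hmax : max (t - p) 0 = t * max (1 - p * t⁻¹) 0 := by
      rw [mul_max_of_nonneg _ _ ht.le, mul_zero]
      congr 1
      field_simp
    rw [ArithmeticFunction.vonMangoldt_apply_prime (hs p hp), exp_neg, exp_log ht, hmax]
    ring
  rw [sum_congr rfl hterm, ← mul_sum]
  gcongr
  exact (summable_vonMangoldt_mul_max _).sum_le_tsum s fun n _ ↦ vonMangoldt_mul_max_nonneg n _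

/-- The second derivative of `t ↦ (y - t) / log t`. Integrating `(t - p) * log p` against it is
partial summation, twice, from `∑ log p * (y - p)` to `∑ (y - p)`. -/
noncomputable def partialSumKernel (y t : ℝ) : ℝ :=
  2 / (t * log t ^ 2) + (y - t) * (1 / (t ^ 2 * log t ^ 2) + 2 / (t ^ 2 * log t ^ 3))

lemma partialSumKernel_nonneg {y t : ℝ} (ht : 1 ≤ t) (hty : t ≤ y) : 0 ≤ partialSumKernel y t := by
  have := log_nonneg ht
  have := sub_nonneg.2 hty
  unfold partialSumKernel
  positivity

lemma continuousAt_partialSumKernel (y : ℝ) {t : ℝ} (ht : 1 < t) :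
    ContinuousAt (partialSumKernel y) t := by
  have := log_pos ht
  have := continuousAt_log (show t ≠ 0 by positivity)
  unfold partialSumKernel
  fun_prop (disch := positivity)

lemma intervalIntegrable_of_continuousAt {f : ℝ → ℝ} (hf : ∀ t, 1 < t → ContinuousAt f t)
    {a b : ℝ} (ha : 1 < a) (hb : 1 < b) : IntervalIntegrable f MeasureTheory.volume a b :=
  ContinuousOn.intervalIntegrable fun t ht ↦
    (hf t ((lt_min ha hb).trans_le ht.1)).continuousWithinAt

lemma hasDerivAt_partialSum (y p : ℝ) {t : ℝ} (ht : 1 < t) :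
    HasDerivAt (fun t ↦ (t - p) * (-1 / log t - (y - t) / (t * log t ^ 2)) - (y - t) / log t)
      ((t - p) * partialSumKernel y t) t := by
  have ht_ne : t ≠ 0 := by positivity
  have hlog_ne : log t ≠ 0 := (log_pos ht).ne'
  have hlog := hasDerivAt_log ht_ne
  have hid := hasDerivAt_id t
  have hsub := (hasDerivAt_const t y).sub hid
  have hquot := hsub.div (hid.mul (hlog.pow 2)) (mul_ne_zero ht_ne (pow_ne_zero 2 hlog_ne))
  have hinv := (hasDerivAt_const t (-1 : ℝ)).div hlog hlog_ne
  refine (((hid.sub (hasDerivAt_const t p)).mul (hinv.sub hquot)).sub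
    (hsub.div hlog hlog_ne)).congr_deriv ?_
  simp only [partialSumKernel, id_eq, Pi.sub_apply, Pi.mul_apply, Pi.pow_apply, Pi.div_apply]
  field_simp
  ring

lemma integral_sub_mul_partialSumKernel {p y : ℝ} (hp : 1 < p) (hy : 1 < y) :
    ∫ t in p..y, (t - p) * partialSumKernel y t = (y - p) / log p - (y - p) / log y := by
  rw [intervalIntegral.integral_eq_sub_of_hasDerivAt
    (fun t ht ↦ hasDerivAt_partialSum y p ((lt_min hp hy).trans_le ht.1))
    (intervalIntegrable_of_continuousAt (fun t ht ↦ ContinuousAt.mul (by fun_prop)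
      (continuousAt_partialSumKernel y ht)) hp hy)]
  ring

lemma intervalIntegrable_max_mul_partialSumKernel {a b : ℝ} (p y : ℝ) (ha : 1 < a)
    (hb : 1 < b) : IntervalIntegrable (fun t ↦ log p * max (t - p) 0 * partialSumKernel y t)
      MeasureTheory.volume a b :=
  intervalIntegrable_of_continuousAt
    (fun _ ht ↦ ContinuousAt.mul (by fun_prop) (continuousAt_partialSumKernel y ht)) ha hb

lemma sub_eq_add_integral {a p y : ℝ} (ha : 1 < a) (hap : a ≤ p) (hpy : p ≤ y) :
    y - p = log p * max (y - p) 0 / log y +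
      ∫ t in a..y, log p * max (t - p) 0 * partialSumKernel y t := by
  have hp : 1 < p := ha.trans_le hap
  have hy : 1 < y := hp.trans_le hpy
  have hlog_ne : log p ≠ 0 := (log_pos hp).ne'
  have hbelow : ∫ t in a..p, log p * max (t - p) 0 * partialSumKernel y t = 0 := by
    refine intervalIntegral.integral_zero_ae (.of_forall fun t ht ↦ ?_)
    rw [Set.uIoc_of_le hap] at ht
    rw [max_eq_right (sub_nonpos.2 ht.2), mul_zero, zero_mul]
  have habove : ∫ t in p..y, log p * max (t - p) 0 * partialSumKernel y t =
      log p * ((y - p) / log p - (y - p) / log y) := by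
    rw [← integral_sub_mul_partialSumKernel hp hy, ← intervalIntegral.integral_const_mul]
    refine intervalIntegral.integral_congr fun t ht ↦ ?_
    rw [Set.uIcc_of_le hpy] at ht
    rw [max_eq_left (sub_nonneg.2 ht.1), mul_assoc]
  rw [← intervalIntegral.integral_add_adjacent_intervals
    (intervalIntegrable_max_mul_partialSumKernel p y ha hp)
    (intervalIntegrable_max_mul_partialSumKernel p y hp hy), hbelow, habove,
    max_eq_left (sub_nonneg.2 hpy)]
  field_simp
  ring

lemma sum_sub_eq_add_integral {s : Finset ℕ} {a y : ℝ} (ha : 1 < a) (hy : 1 < y)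
    (hs : ∀ p ∈ s, a ≤ p ∧ p ≤ y) :
    ∑ p ∈ s, (y - p) = (∑ p ∈ s, log p * max (y - p) 0) / log y +
      ∫ t in a..y, (∑ p ∈ s, log p * max (t - p) 0) * partialSumKernel y t := by
  rw [sum_congr rfl fun p hp ↦ sub_eq_add_integral ha (hs p hp).1 (hs p hp).2, sum_add_distrib,
    sum_div, ← intervalIntegral.integral_finsetSum fun (p : ℕ) _ ↦
      intervalIntegrable_max_mul_partialSumKernel p y ha hy]
  simp_rw [sum_mul]

/-- An antiderivative of a majorant of `t ^ 2 / 2 * partialSumKernel y t` on `[exp 5, y]`. It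
comes from repeated integration by parts, the last term absorbing the remainder. -/
noncomputable def kernelPrimitive (y t : ℝ) : ℝ :=
  1 / 2 * (y * (t * (1 / log t ^ 2 + 4 / log t ^ 3 + 60 / log t ^ 4)) +
    1 / 2 * t ^ 2 * (1 / log t ^ 2 - 1 / log t ^ 3))

/-- The derivative of `kernelPrimitive y`. -/
noncomputable def kernelMajorant (y t : ℝ) : ℝ :=
  1 / 2 * (y * (1 / log t ^ 2 + 2 / log t ^ 3 + 48 / log t ^ 4 - 240 / log t ^ 5) +
    t * (1 / log t ^ 2 - 2 / log t ^ 3 + 1.5 / log t ^ 4))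

lemma hasDerivAt_kernelPrimitive (y : ℝ) {t : ℝ} (ht : 1 < t) :
    HasDerivAt (kernelPrimitive y) (kernelMajorant y t) t := by
  have ht_ne : t ≠ 0 := by positivity
  have hlog_ne : log t ≠ 0 := (log_pos ht).ne'
  have hid := hasDerivAt_id t
  have hinv_pow (c : ℝ) (k : ℕ) :=
    (hasDerivAt_const t c).div ((hasDerivAt_log ht_ne).pow k) (pow_ne_zero k hlog_ne)
  refine ((((hid.mul (((hinv_pow 1 2).add (hinv_pow 4 3)).add (hinv_pow 60 4))).const_mul y).add
    (((hid.pow 2).const_mul (1 / 2)).mul ((hinv_pow 1 2).sub (hinv_pow 1 3)))).const_mul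
    (1 / 2)).congr_deriv ?_
  simp only [kernelMajorant, id_eq, Pi.add_apply, Pi.sub_apply, Pi.pow_apply, Pi.div_apply]
  field_simp
  ring

lemma continuousAt_kernelMajorant (y : ℝ) {t : ℝ} (ht : 1 < t) :
    ContinuousAt (kernelMajorant y) t := by
  have := log_pos ht
  have := continuousAt_log (show t ≠ 0 by positivity)
  unfold kernelMajorant
  fun_prop (disch := positivity)

lemma sq_div_two_mul_partialSumKernel_le {y t : ℝ} (ht : 5 ≤ log t) (ht_pos : 0 < t)
    (hy : 0 ≤ y) : t ^ 2 / 2 * partialSumKernel y t ≤ kernelMajorant y t := by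
  unfold partialSumKernel kernelMajorant
  set l := log t
  have : 0 < l := by linarith
  rw [← sub_nonneg]
  calc 0 ≤ 1 / 2 * (y * (48 * (l - 5) / l ^ 5) + t * (1.5 / l ^ 4)) := by
        have := sub_nonneg.2 ht
        positivity
    _ = _ := by
        field_simp
        ring

lemma integral_kernelMajorant {a b : ℝ} (y : ℝ) (ha : 1 < a) (hb : 1 < b) :
    ∫ t in a..b, kernelMajorant y t = kernelPrimitive y b - kernelPrimitive y a :=
  intervalIntegral.integral_eq_sub_of_hasDerivAt
    (fun _ ht ↦ hasDerivAt_kernelPrimitive y ((lt_min ha hb).trans_le ht.1))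
    (intervalIntegrable_of_continuousAt (fun _ ↦ continuousAt_kernelMajorant y) ha hb)

lemma kernelPrimitive_exp_five_nonneg {y : ℝ} (hy : 0 ≤ y) : 0 ≤ kernelPrimitive y (exp 5) := by
  have : (0 : ℝ) ≤ 1 / 5 ^ 2 - 1 / 5 ^ 3 := by norm_num
  rw [kernelPrimitive, log_exp]
  positivity

lemma kernelPrimitive_exp_self {L : ℝ} (hL : L ≠ 0) : kernelPrimitive (exp L) (exp L) =
    exp L ^ 2 / (2 * L) * (1.5 / L + 3.5 / L ^ 2 + 60 / L ^ 3) := by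
  rw [kernelPrimitive, log_exp]
  field_simp
  ring

lemma sum_log_mul_max_mul_partialSumKernel_le {s : Finset ℕ} (hs : ∀ p ∈ s, p.Prime) {y t : ℝ}
    (ht : exp 5 ≤ t) (hty : t ≤ y) :
    (∑ p ∈ s, log p * max (t - p) 0) * partialSumKernel y t ≤ 1.0465 * kernelMajorant y t := by
  have ht_one : 1 ≤ t := (one_le_exp (by norm_num)).trans ht
  have hlog : 5 ≤ log t := (le_log_iff_exp_le (by linarith)).2 ht
  have hmean := psiMean_le_mul_exp hlog
  rw [exp_log (by linarith)] at hmean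
  calc _ ≤ t * (1.0465 / 2 * t) * partialSumKernel y t := by
        have := partialSumKernel_nonneg ht_one hty
        gcongr
        exact (sum_log_mul_max_le hs (by linarith)).trans (by gcongr)
    _ = 1.0465 * (t ^ 2 / 2 * partialSumKernel y t) := by ring
    _ ≤ 1.0465 * kernelMajorant y t := by
        gcongr
        exact sq_div_two_mul_partialSumKernel_le hlog (by linarith) (by linarith)

lemma integral_sum_log_mul_max_le {s : Finset ℕ} (hs : ∀ p ∈ s, p.Prime) {y : ℝ}
    (hy : exp 5 ≤ y) :
    ∫ t in exp 5..y, (∑ p ∈ s, log p * max (t - p) 0) * partialSumKernel y t ≤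
      1.0465 * kernelPrimitive y y := by
  have hone : 1 < exp 5 := one_lt_exp_iff.2 (by norm_num)
  have hy_one : 1 < y := hone.trans_le hy
  calc _ ≤ ∫ t in exp 5..y, 1.0465 * kernelMajorant y t := by
        refine intervalIntegral.integral_mono_on hy
          (intervalIntegrable_of_continuousAt (fun t ht ↦ ContinuousAt.mul (by fun_prop)
            (continuousAt_partialSumKernel y ht)) hone hy_one)
          (intervalIntegrable_of_continuousAt (fun t ht ↦ continuousAt_const.mul
            (continuousAt_kernelMajorant y ht)) hone hy_one)
          fun t ht ↦ sum_log_mul_max_mul_partialSumKernel_le hs ht.1 ht.2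
    _ = 1.0465 * (kernelPrimitive y y - kernelPrimitive y (exp 5)) := by
        rw [intervalIntegral.integral_const_mul, integral_kernelMajorant y hone hy_one]
    _ ≤ 1.0465 * kernelPrimitive y y := by
        linarith [kernelPrimitive_exp_five_nonneg (show 0 ≤ y by linarith)]

lemma sum_sub_le_of_exp_five_le {s : Finset ℕ} {L : ℝ} (hL : 5 ≤ L)
    (hs : ∀ p ∈ s, p.Prime ∧ exp 5 ≤ p ∧ p ≤ exp L) :
    ∑ p ∈ s, (exp L - p) ≤ exp L ^ 2 / (2 * L) *
      (1 + zeroSumMajorant L + 1.0465 * (1.5 / L + 3.5 / L ^ 2 + 60 / L ^ 3)) := by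
  have hprime : ∀ p ∈ s, p.Prime := fun p hp ↦ (hs p hp).1
  have hone : 1 < exp 5 := one_lt_exp_iff.2 (by norm_num)
  have hy : exp 5 ≤ exp L := exp_le_exp.2 hL
  have hboundary : ∑ p ∈ s, log p * max (exp L - p) 0 ≤
      exp L * (exp L / 2 * (1 + zeroSumMajorant L)) := by
    refine (sum_log_mul_max_le hprime (exp_pos L)).trans ?_
    rw [log_exp]
    gcongr
    linarith [psiMean_le hL]
  rw [sum_sub_eq_add_integral hone (hone.trans_le hy) fun p hp ↦ (hs p hp).2, log_exp]
  calc _ ≤ exp L * (exp L / 2 * (1 + zeroSumMajorant L)) / L +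
        1.0465 * kernelPrimitive (exp L) (exp L) := by
        gcongr
        exact integral_sum_log_mul_max_le hprime hy
    _ = _ := by
        rw [kernelPrimitive_exp_self (by linarith)]
        field_simp

lemma card_primesBelow_149 : #(Nat.primesBelow 149) = 34 := by decide +kernel

theorem primeCountIntegral_exp_le {L : ℝ} (hL : 5 ≤ L) :
    primeCountIntegral (exp L) ≤ exp L ^ 2 / (2 * L) *
      (1 + zeroSumMajorant L + 1.0465 * (1.5 / L + 3.5 / L ^ 2 + 60 / L ^ 3)) + 34 * exp L := by
  rw [primeCountIntegral, ← sum_filter_not_add_sum_filter _ (· < 149)]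
  have hmem {p : ℕ} := mem_primesLE_floor (exp_nonneg L) (p := p)
  gcongr
  · refine sum_sub_le_of_exp_five_le hL fun p hp ↦ ?_
    rw [mem_filter, hmem, not_lt] at hp
    have : (149 : ℝ) ≤ p := mod_cast hp.2
    exact ⟨hp.1.1, exp_five_lt.le.trans this, hp.1.2⟩
  · have hsub : {p ∈ Nat.primesLE ⌊exp L⌋₊ | p < 149} ⊆ Nat.primesBelow 149 := by
      intro p hp
      rw [mem_filter] at hp
      exact Nat.mem_primesBelow.2 ⟨hp.2, Nat.prime_of_mem_primesLE hp.1⟩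
    calc _ ≤ #{p ∈ Nat.primesLE ⌊exp L⌋₊ | p < 149} • exp L :=
          sum_le_card_nsmul _ _ _ fun p _ ↦ sub_le_self _ (Nat.cast_nonneg p)
      _ ≤ 34 * exp L := by
          rw [nsmul_eq_mul]
          gcongr
          exact_mod_cast card_primesBelow_149 ▸ card_le_card hsub

end PrimeCountIntegral

/-! ### Large indices -/

section LargeIndices

/-- With `exp L = n * (L - 1)`, taking `y = exp L` in `n * y - primeCountIntegral y` gives the lower
bound `n ^ 2 / 2 * (L - marginLoss L)` for the sum of the first `n` primes, up to `O(exp L)`. -/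
noncomputable def marginLoss (L : ℝ) : ℝ :=
  1 / L + (L - 1) ^ 2 / L *
    (zeroSumMajorant L + 1.0465 * (1.5 / L + 3.5 / L ^ 2 + 60 / L ^ 3))

lemma le_sum_nthPrime_of_exp_eq {n : ℕ} {L : ℝ} (hL : 5 ≤ L) (hn : exp L = n * (L - 1)) :
    n ^ 2 / 2 * (L - marginLoss L) - 34 * (n * (L - 1)) ≤ ∑ i ∈ Icc 1 n, (nthPrime i : ℝ) := by
  refine le_trans ?_ (mul_sub_primeCountIntegral_le_sum_nthPrime n (exp_nonneg L))
  refine le_trans (le_of_eq ?_) (sub_le_sub_left (primeCountIntegral_exp_le hL) _)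
  rw [hn, marginLoss]
  field_simp
  ring

lemma lt_sum_nthPrime_of_marginLoss_lt {n : ℕ} {L c : ℝ} (hL : 5 ≤ L) (hn : exp L = n * (L - 1))
    (hloss : marginLoss L < c + log (L - 1))
    (hremainder : 34 * (n * (L - 1)) + 1 / 4 ≤ (n : ℝ) ^ 2 / 2 * (1 / 2 - c)) :
    (n : ℝ) ^ 2 / 2 * (log n - 1 / 2) + 1 / 4 < ∑ i ∈ Icc 1 n, (nthPrime i : ℝ) := by
  have hL_sub : 0 < L - 1 := by linarith
  have hn_pos : (0 : ℝ) < n := pos_of_mul_pos_left (hn ▸ exp_pos L) hL_sub.le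
  have hlog : L = log n + log (L - 1) := by
    rw [← log_mul hn_pos.ne' hL_sub.ne', ← hn, log_exp]
  have hmain : (n : ℝ) ^ 2 / 2 * (log n - c) < n ^ 2 / 2 * (L - marginLoss L) :=
    mul_lt_mul_of_pos_left (by linarith) (by positivity)
  linarith [le_sum_nthPrime_of_exp_eq hL hn]

lemma neg_sub_sq_le_log_one_sub {u : ℝ} (hu : 0 ≤ u) (hu_le : u ≤ 1 / 11) :
    -u - 1.1 * u ^ 2 ≤ log (1 - u) := by
  have hinv : (1 - u)⁻¹ ≤ 1 + u + 1.1 * u ^ 2 := by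
    rw [inv_le_comm₀ (by linarith) (by positivity), inv_le_iff_one_le_mul₀ (by positivity)]
    nlinarith [mul_nonneg (sq_nonneg u) (sub_nonneg.2 hu_le)]
  linarith [one_sub_inv_le_log_of_pos (show 0 < 1 - u by linarith)]

lemma le_log_sub_one {L : ℝ} (hL : 11 ≤ L) :
    log L - 1 / L - 1.1 * (1 / L) ^ 2 ≤ log (L - 1) := by
  have hu : 1 / L ≤ 1 / 11 := by gcongr
  have hfactor : L - 1 = L * (1 - 1 / L) := by field_simp
  rw [hfactor, log_mul (by linarith) (by linarith)]
  linarith [neg_sub_sq_le_log_one_sub (by positivity) hu]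

lemma marginLoss_le {L : ℝ} (hL : 11 ≤ L) : marginLoss L ≤
    (L - 2 + 1 / L) * zeroSumMajorant L + 1.56975 + 1.52325 * (1 / L) + 57.035 * (1 / L) ^ 2 := by
  rw [marginLoss]
  set u := 1 / L with hu
  have hu_pos : 0 < u := by positivity
  have hu_le : u ≤ 1 / 11 := by rw [hu]; gcongr
  have hpoly : (1 - u) ^ 2 * (1.5 + 3.5 * u + 60 * u ^ 2) ≤ 1.5 + 0.5 * u + 54.5 * u ^ 2 := by
    nlinarith [pow_pos hu_pos 3]
  calc _ = (L - 2 + u) * zeroSumMajorant L + u +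
        1.0465 * ((1 - u) ^ 2 * (1.5 + 3.5 * u + 60 * u ^ 2)) := by
        rw [hu]
        field_simp
        ring
    _ ≤ _ := by nlinarith

lemma log_add_one_sub_div_le_log {m x : ℝ} (hm : 0 < m) (hx : 0 < x) :
    log m + 1 - m / x ≤ log x := by
  have h := log_le_sub_one_of_pos (div_pos hm hx)
  rw [log_div hm.ne' hx.ne'] at h
  linarith

lemma cubic_pos_of_endpoints_pos {A B C D a b x : ℝ} (hA : 0 ≤ A) (hB : 0 ≤ B) (ha : 0 ≤ a)
    (hax : a ≤ x) (hxb : x ≤ b) (hpos_a : 0 < C * a - D - A * a ^ 2 - B * a ^ 3)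
    (hpos_b : 0 < C * b - D - A * b ^ 2 - B * b ^ 3) :
    0 < C * x - D - A * x ^ 2 - B * x ^ 3 := by
  have hlinear : ConcaveOn ℝ (Set.Ici 0) fun x : ℝ ↦ C * x - D :=
    ((LinearMap.mulLeft ℝ C).concaveOn (convex_Ici 0)).sub (convexOn_const D (convex_Ici 0))
  have hconcave : ConcaveOn ℝ (Set.Ici 0) fun x : ℝ ↦ C * x - D - A * x ^ 2 - B * x ^ 3 :=
    (hlinear.sub ((convexOn_pow 2).smul hA)).sub ((convexOn_pow 3).smul hB)
  exact (lt_min hpos_a hpos_b).trans_le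
    (hconcave.min_le_of_mem_Icc ha (ha.trans (hax.trans hxb)) ⟨hax, hxb⟩)

lemma zeroSumMajorant_le_of_eleven_le {u : ℝ} (hu : 11 ≤ u) : zeroSumMajorant u ≤ 0.0465 := by
  have hexp : exp (-u / 2) ≤ 0.0068 * (1 / (2.7182 * (1 / 2))) :=
    calc exp (-u / 2) ≤ exp (-5 + -(1 / 2)) := by gcongr; linarith
      _ ≤ 0.0068 * (1 / (2.7182 * (1 / 2))) := by
        rw [exp_add]
        gcongr
        · exact exp_neg_le_of_five_le le_rfl
        · exact exp_neg_le_one_div one_half_pos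
  linarith [zeroSumMajorant_le (show 0 ≤ u by linarith)]

lemma marginLoss_lt_of_tangent {L m : ℝ} (hL : 11 ≤ L) (hm : 0 < m)
    (h : 0 < (log m - 0.09145) * (1 / L) - 0.0465 - (m + 2.57) * (1 / L) ^ 2
      - 58.14 * (1 / L) ^ 3) :
    marginLoss L < 0.3853 + log (L - 1) := by
  have htangent := log_add_one_sub_div_le_log hm (show 0 < L by linarith)
  have hlog := le_log_sub_one hL
  have hloss := marginLoss_le hL
  rw [div_eq_mul_one_div m L] at htangent
  set u := 1 / L
  have hu_pos : 0 < u := by positivity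
  have hzeros : (L - 2 + u) * zeroSumMajorant L ≤ (L - 2 + u) * 0.0465 := by
    gcongr
    · linarith
    · exact zeroSumMajorant_le_of_eleven_le hL
  have hL_lt : 0.0465 * L < log m - 0.09145 - (m + 2.57) * u - 58.14 * u ^ 2 := by
    have hmul : u * L = 1 := one_div_mul_cancel (by linarith)
    refine lt_of_mul_lt_mul_left ?_ hu_pos.le
    linarith
  linarith [sq_nonneg u]

lemma log_sixty_four : log 64 = 6 * log 2 := by
  rw [show (64 : ℝ) = 2 ^ 6 by norm_num, log_pow, Nat.cast_ofNat]

lemma marginLoss_lt_of_le_sixty {L : ℝ} (hL : 11 ≤ L) (hL60 : L ≤ 60) :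
    marginLoss L < 0.3853 + log (L - 1) := by
  have hlog16 : log 16 = 4 * log 2 := by
    rw [show (16 : ℝ) = 2 ^ 4 by norm_num, log_pow, Nat.cast_ofNat]
  have hlog64 := log_sixty_four
  have hlog2 := log_two_gt_d9
  rcases le_total L 25 with h25 | h25
  · refine marginLoss_lt_of_tangent (m := 16) hL (by norm_num) ?_
    refine cubic_pos_of_endpoints_pos (a := 1 / 25) (b := 1 / 11) (by norm_num) (by norm_num)
      (by norm_num) (by gcongr) (by gcongr) ?_ ?_ <;> linarith
  · refine marginLoss_lt_of_tangent (m := 64) hL (by norm_num) ?_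
    refine cubic_pos_of_endpoints_pos (a := 1 / 60) (b := 1 / 25) (by norm_num) (by norm_num)
      (by norm_num) (by gcongr) (by gcongr) ?_ ?_ <;> linarith

lemma log_five_le : log 5 ≤ 1.637 := by
  rw [show (5 : ℝ) = 2 ^ 2 * 1.25 by norm_num, log_mul (by norm_num) (by norm_num), log_pow,
    Nat.cast_ofNat]
  linarith [log_two_lt_d9, log_le_sub_one_of_pos (show (0 : ℝ) < 1.25 by norm_num)]

lemma le_log_of_sixty_le {L : ℝ} (hL : 60 ≤ L) : 4.092 ≤ log L := by
  have htangent := log_add_one_sub_div_le_log (show (0 : ℝ) < 64 by norm_num)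
    (show (0 : ℝ) < 60 by norm_num)
  linarith [log_sixty_four, log_two_gt_d9, log_le_log (show (0 : ℝ) < 60 by norm_num) hL]

lemma marginLoss_lt_of_sixty_le {L : ℝ} (hL : 60 ≤ L) :
    marginLoss L < 0.4999 + log (L - 1) := by
  have hL_pos : 0 < L := by linarith
  have hlog := le_log_sub_one (show 11 ≤ L by linarith)
  have hloss := marginLoss_le (show 11 ≤ L by linarith)
  have hmajorant : L * zeroSumMajorant L ≤ 0.794 * log L - 0.247 := by
    have h := zeroSumMajorant_le_div hL
    rw [le_div_iff₀' hL_pos, log_mul (by norm_num) hL_pos.ne'] at h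
    linarith [log_five_le]
  have hlogL := le_log_of_sixty_le hL
  set u := 1 / L with hu
  have hu_pos : 0 < u := by positivity
  have hu_le : u ≤ 1 / 60 := by rw [hu]; gcongr
  have hzeros : (L - 2 + u) * zeroSumMajorant L ≤ (1 - u) ^ 2 * (0.794 * log L - 0.247) := by
    have hfactor : L - 2 + u = (1 - u) ^ 2 * L := by
      rw [hu]
      field_simp
      ring
    rw [hfactor, mul_assoc]
    gcongr
  have hcoeff : 0 ≤ 1 - 0.794 * (1 - u) ^ 2 := by nlinarith
  nlinarith [mul_le_mul_of_nonneg_left hlogL hcoeff]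

lemma exp_mul_sq_le {a L : ℝ} (ha : 3 ≤ a) (haL : a ≤ L) :
    exp a * (L - 1) ^ 2 ≤ (a - 1) ^ 2 * exp L := by
  have hroot : L - 1 ≤ (a - 1) * exp ((L - a) / 2) := by
    nlinarith [add_one_le_exp ((L - a) / 2)]
  calc exp a * (L - 1) ^ 2 ≤ exp a * ((a - 1) * exp ((L - a) / 2)) ^ 2 := by
        gcongr
        linarith
    _ = (a - 1) ^ 2 * exp (a + 2 * ((L - a) / 2)) := by
        rw [exp_add, two_mul, exp_add]
        ring
    _ = (a - 1) ^ 2 * exp L := by ring_nf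

lemma exp_mul_sub_one_le {n a L : ℝ} (ha : 3 ≤ a) (haL : a ≤ L) (hn : exp L = n * (L - 1)) :
    exp a * (L - 1) ≤ (a - 1) ^ 2 * n := by
  have h := exp_mul_sq_le ha haL
  rw [hn] at h
  refine le_of_mul_le_mul_right ?_ (show 0 < L - 1 by linarith)
  linarith

lemma exists_exp_eq_mul_sub_one {n a : ℝ} (hn : 0 ≤ n) (ha : exp a ≤ n * (a - 1)) :
    ∃ L, a ≤ L ∧ exp L = n * (L - 1) := by
  obtain ⟨b, hb, hab, hb_pos⟩ := ((tendsto_exp_div_pow_atTop 1).eventually_ge_atTop n |>.and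
    ((Filter.eventually_ge_atTop a).and (Filter.eventually_gt_atTop 0))).exists
  rw [pow_one, le_div_iff₀ hb_pos] at hb
  obtain ⟨L, hL, hzero⟩ := intermediate_value_Icc hab
    (f := fun x ↦ exp x - n * (x - 1)) (by fun_prop)
    (show (0 : ℝ) ∈ Set.Icc _ _ from ⟨by linarith, by linarith⟩)
  exact ⟨L, hL.1, sub_eq_zero.1 hzero⟩

lemma exp_eleven_mem_Icc : exp 11 ∈ Set.Icc 59870 59880 := by
  rw [show (11 : ℝ) = (11 : ℕ) * 1 by norm_num, exp_nat_mul]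
  constructor
  · calc (59870 : ℝ) ≤ 2.71828182 ^ 11 := by norm_num
      _ ≤ exp 1 ^ 11 := by gcongr; linarith [exp_one_gt_d9]
  · calc exp 1 ^ 11 ≤ 2.71828183 ^ 11 := by gcongr; linarith [exp_one_lt_d9]
      _ ≤ 59880 := by norm_num

theorem lt_sum_nthPrime_of_ge {n : ℕ} (hn : 5988 ≤ n) :
    (n : ℝ) ^ 2 / 2 * (log n - 1 / 2) + 1 / 4 < ∑ i ∈ Icc 1 n, (nthPrime i : ℝ) := by
  have hn_ge : (5988 : ℝ) ≤ n := mod_cast hn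
  obtain ⟨L, hL, hexp⟩ := exists_exp_eq_mul_sub_one (n := n) (a := 11) (by linarith)
    (by linarith [exp_eleven_mem_Icc.2])
  have hlarge : 59870 * (L - 1) ≤ 100 * n := by
    nlinarith [exp_mul_sub_one_le (by norm_num) hL hexp, exp_eleven_mem_Icc.1]
  rcases le_total L 60 with hL60 | hL60
  · refine lt_sum_nthPrime_of_marginLoss_lt (by linarith) hexp
      (marginLoss_lt_of_le_sixty hL hL60) ?_
    nlinarith
  · have hexp60 : (10 : ℝ) ^ 10 ≤ exp 60 := by
      have := pow_div_factorial_le_exp (x := 60) (by norm_num) 9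
      exact le_trans (by norm_num [Nat.factorial]) this
    have hlarge60 : 1000000 * (L - 1) ≤ n := by
      nlinarith [exp_mul_sub_one_le (by norm_num) hL60 hexp]
    refine lt_sum_nthPrime_of_marginLoss_lt (by linarith) hexp (marginLoss_lt_of_sixty_le hL60) ?_
    nlinarith

end LargeIndices

/-! ### Small indices -/

section SmallIndices

open scoped Nat

lemma log_le_log_add_div_sub_one {m x : ℝ} (hm : 0 < m) (hx : 0 < x) :
    log x ≤ log m + x / m - 1 := by
  linarith [log_add_one_sub_div_le_log hx hm]

/-- With `log n` replaced by its tangent at `2 ^ j`, the inequality for the sum of the first `n`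
primes becomes the positivity of a concave cubic, which is checked at the endpoints. -/
lemma lt_sum_nthPrime_of_endpoints {a b y j n : ℕ} {P : ℝ} (hP : primeCountIntegral y ≤ P)
    (hj : 3 ≤ j)
    (ha : 0 < y * (a : ℝ) - (P + 1 / 4) - (0.6931472 * j - 1.5) / 2 * a ^ 2 -
      1 / (2 * 2 ^ j) * a ^ 3)
    (hb : 0 < y * (b : ℝ) - (P + 1 / 4) - (0.6931472 * j - 1.5) / 2 * b ^ 2 -
      1 / (2 * 2 ^ j) * b ^ 3)
    (hn : 0 < n) (han : a ≤ n) (hnb : n ≤ b) :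
    (n : ℝ) ^ 2 / 2 * (log n - 1 / 2) + 1 / 4 < ∑ i ∈ Icc 1 n, (nthPrime i : ℝ) := by
  have hj_ge : (3 : ℝ) ≤ j := mod_cast hj
  have hn_pos : (0 : ℝ) < n := mod_cast hn
  have hlog : log n ≤ 0.6931472 * j + n / 2 ^ j - 1 := by
    have htangent := log_le_log_add_div_sub_one (m := 2 ^ j) (by positivity) hn_pos
    rw [log_pow] at htangent
    nlinarith [log_two_lt_d9]
  have hcubic := cubic_pos_of_endpoints_pos (by linarith) (by positivity) (Nat.cast_nonneg a)
    (Nat.cast_le.2 han) (Nat.cast_le.2 hnb) ha hb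
  calc (n : ℝ) ^ 2 / 2 * (log n - 1 / 2) + 1 / 4
      ≤ (n : ℝ) ^ 2 / 2 * (0.6931472 * j + n / 2 ^ j - 1 - 1 / 2) + 1 / 4 := by gcongr
    _ = (0.6931472 * j - 1.5) / 2 * (n : ℝ) ^ 2 + 1 / (2 * 2 ^ j) * (n : ℝ) ^ 3 + 1 / 4 := by
        field_simp
        ring
    _ < (n : ℝ) * y - primeCountIntegral y := by linarith
    _ ≤ ∑ i ∈ Icc 1 n, (nthPrime i : ℝ) :=
        mul_sub_primeCountIntegral_le_sum_nthPrime n (Nat.cast_nonneg y)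

/-- The product of the primes below `230`, written out because the kernel evaluates it often. -/
def sieveModulus : ℕ :=
  19078266889580195013601891820992757757219839668357012055907516904309700014933909014729740190

/-- The weight `y - k` of `k` in `primeCountIntegral y` if `k` is prime, and `0` if `k` is composite
and less than `233 ^ 2`. Boolean tests keep its evaluation in the kernel fast. -/
def sieveWeight (y k : ℕ) : ℕ :=
  bif (k.gcd (bif k.ble 230 then (min (k - 1) 16)! else sieveModulus)).beq 1 then y - k else 0

/-- The sum of `f` over `[a, a + 2 ^ d)`, by bisection so that the recursion depth is only `d`. -/
def dyadicSum (f : ℕ → ℕ) : ℕ → ℕ → ℕ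
  | 0, a => f a
  | d + 1, a => dyadicSum f d a + dyadicSum f d (a + 2 ^ d)

lemma dyadicSum_eq_sum_range (f : ℕ → ℕ) (d a : ℕ) :
    dyadicSum f d a = ∑ i ∈ range (2 ^ d), f (a + i) := by
  induction d generalizing a with
  | zero => simp [dyadicSum]
  | succ d ih => simp only [dyadicSum, ih, pow_succ, mul_two, sum_range_add, add_assoc]

lemma sieveModulus_dvd_factorial : sieveModulus ∣ 230 ! := by norm_num [sieveModulus]

lemma sieveWeight_eq_of_prime (y : ℕ) {p : ℕ} (hp : p.Prime) : sieveWeight y p = y - p := by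
  have hcoprime : p.gcd (bif p.ble 230 then (min (p - 1) 16)! else sieveModulus) = 1 := by
    refine hp.coprime_iff_not_dvd.2 fun hdvd ↦ ?_
    cases hle : p.ble 230
    · rw [hle, cond_false] at hdvd
      have hp_le := hp.dvd_factorial.1 (hdvd.trans sieveModulus_dvd_factorial)
      rw [Nat.ble_eq_true_of_le hp_le] at hle
      contradiction
    · rw [hle, cond_true] at hdvd
      have hp_le := hp.dvd_factorial.1 hdvd
      have := hp.pos
      omega
  rw [sieveWeight, hcoprime]
  rfl

lemma primeCountIntegral_natCast (y : ℕ) :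
    primeCountIntegral y = (∑ p ∈ Nat.primesLE y, (y - p) : ℕ) := by
  rw [primeCountIntegral, Nat.floor_natCast, Nat.cast_sum]
  exact sum_congr rfl fun p hp ↦ (Nat.cast_sub (Nat.le_of_mem_primesLE hp)).symm

lemma primeCountIntegral_natCast_le {y d P : ℕ} (hd : y < 2 ^ d)
    (h : dyadicSum (sieveWeight y) d 2 ≤ P) : primeCountIntegral y ≤ P := by
  rw [primeCountIntegral_natCast, Nat.cast_le]
  refine le_trans ?_ h
  calc ∑ p ∈ Nat.primesLE y, (y - p) = ∑ p ∈ Nat.primesLE y, sieveWeight y p :=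
        sum_congr rfl fun p hp ↦ (sieveWeight_eq_of_prime y (Nat.prime_of_mem_primesLE hp)).symm
    _ ≤ ∑ k ∈ Ico 2 (2 + 2 ^ d), sieveWeight y k := by
        refine sum_le_sum_of_subset fun p hp ↦ ?_
        have := (Nat.prime_of_mem_primesLE hp).two_le
        have := Nat.le_of_mem_primesLE hp
        rw [mem_Ico]
        omega
    _ = dyadicSum (sieveWeight y) d 2 := by
        rw [dyadicSum_eq_sum_range, sum_Ico_eq_sum_range, Nat.add_sub_cancel_left]

lemma lt_sum_nthPrime_of_sieve (y P d j : ℕ) {a b n : ℕ} (hd : y < 2 ^ d)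
    (h : dyadicSum (sieveWeight y) d 2 ≤ P) (hj : 3 ≤ j)
    (hends : ∀ x ∈ ({a, b} : Finset ℕ), 0 < y * (x : ℝ) - (P + 1 / 4) -
      (0.6931472 * j - 1.5) / 2 * x ^ 2 - 1 / (2 * 2 ^ j) * x ^ 3)
    (hn : 0 < n) (han : a ≤ n) (hnb : n ≤ b) :
    (n : ℝ) ^ 2 / 2 * (log n - 1 / 2) + 1 / 4 < ∑ i ∈ Icc 1 n, (nthPrime i : ℝ) :=
  lt_sum_nthPrime_of_endpoints (primeCountIntegral_natCast_le hd h) hj (hends a (by simp))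
    (hends b (by simp)) hn han hnb

theorem lt_sum_nthPrime_of_lt {n : ℕ} (hn : 0 < n) (hn_lt : n < 5988) :
    (n : ℝ) ^ 2 / 2 * (log n - 1 / 2) + 1 / 4 < ∑ i ∈ Icc 1 n, (nthPrime i : ℝ) := by
  have hpieces : n ∈ Set.Icc 1 4 ∨ n ∈ Set.Icc 5 12 ∨ n ∈ Set.Icc 13 27 ∨ n ∈ Set.Icc 28 54 ∨
      n ∈ Set.Icc 55 105 ∨ n ∈ Set.Icc 106 201 ∨ n ∈ Set.Icc 202 385 ∨ n ∈ Set.Icc 386 742 ∨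
      n ∈ Set.Icc 743 1433 ∨ n ∈ Set.Icc 1434 2772 ∨ n ∈ Set.Icc 2773 5370 ∨
      n ∈ Set.Icc 5371 5987 := by
    simp only [Set.mem_Icc]
    omega
  rcases hpieces with h | h | h | h | h | h | h | h | h | h | h | h
  · exact lt_sum_nthPrime_of_sieve 3 1 2 3 (by norm_num) (by decide +kernel)
      (by norm_num) (by norm_num) hn h.1 h.2
  · exact lt_sum_nthPrime_of_sieve 19 75 5 3 (by norm_num) (by decide +kernel)
      (by norm_num) (by norm_num) hn h.1 h.2
  · exact lt_sum_nthPrime_of_sieve 59 563 6 5 (by norm_num) (by decide +kernel)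
      (by norm_num) (by norm_num) hn h.1 h.2
  · exact lt_sum_nthPrime_of_sieve 163 3447 8 5 (by norm_num) (by decide +kernel)
      (by norm_num) (by norm_num) hn h.1 h.2
  · exact lt_sum_nthPrime_of_sieve 367 14825 9 6 (by norm_num) (by decide +kernel)
      (by norm_num) (by norm_num) hn h.1 h.2
  · exact lt_sum_nthPrime_of_sieve 797 60705 10 7 (by norm_num) (by decide +kernel)
      (by norm_num) (by norm_num) hn h.1 h.2
  · exact lt_sum_nthPrime_of_sieve 1709 246209 11 8 (by norm_num) (by decide +kernel)
      (by norm_num) (by norm_num) hn h.1 h.2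
  · exact lt_sum_nthPrime_of_sieve 3637 994055 12 9 (by norm_num) (by decide +kernel)
      (by norm_num) (by norm_num) hn h.1 h.2
  · exact lt_sum_nthPrime_of_sieve 7699 4018741 13 10 (by norm_num) (by decide +kernel)
      (by norm_num) (by norm_num) hn h.1 h.2
  · exact lt_sum_nthPrime_of_sieve 16229 16251641 14 11 (by norm_num) (by decide +kernel)
      (by norm_num) (by norm_num) hn h.1 h.2
  · exact lt_sum_nthPrime_of_sieve 34033 65550033 16 12 (by norm_num) (by decide +kernel)
      (by norm_num) (by norm_num) hn h.1 h.2
  · exact lt_sum_nthPrime_of_sieve 52583 149200541 16 11 (by norm_num) (by decide +kernel)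
      (by norm_num) (by norm_num) hn h.1 h.2

end SmallIndices

theorem stmt2 (n : ℕ) (hn : 1 ≤ n) :
    avgPrime n > ((n : ℝ) / 2) * (Real.log n - 1 / 2) + 1 / (4 * (n : ℝ)) := by
  have hsum : (n : ℝ) ^ 2 / 2 * (log n - 1 / 2) + 1 / 4 < ∑ i ∈ Icc 1 n, (nthPrime i : ℝ) :=
    (lt_or_ge n 5988).elim (lt_sum_nthPrime_of_lt hn) lt_sum_nthPrime_of_ge
  have : (0 : ℝ) < n := mod_cast hn
  calc (n : ℝ) / 2 * (log n - 1 / 2) + 1 / (4 * n)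
      = 1 / n * ((n : ℝ) ^ 2 / 2 * (log n - 1 / 2) + 1 / 4) := by field_simp
    _ < avgPrime n := mul_lt_mul_of_pos_left hsum (by positivity)
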